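/- arXiv:2209.01934 — 3 statements merged into one kernel-verified Lean document; each statement's English description precedes it below -/
import Mathlib

section
/- Generalised Christoffel–Darboux formula (Lemma 3.2). Let N ≥ 1 and n > N be integers and let L > 0 be a real number with 2L a positive integer. Then for all ζ, η ∈ ℂ, (1+ζ²)·∂_ζ κ̂_N(ζ,η) = 2ζ(n+L−1/2)·κ̂_N(ζ,η) + (Γ(2n+2L+2)/2) ∑_{k=0}^{2N−1} ζ^{k+2L} η^{k+2L}/(Γ(k+2L+1)Γ(2n−k)) − (π·Γ(2n+2L+2)/(2^{2n+2L} Γ(N+L+1/2) Γ(n−N))) · ζ^{2N+2L} ∑_{k=0}^{N−1} η^{2k+2L}/(Γ(n−k+1/2)Γ(k+L+1)) − (π·Γ(2n+2L+2)/(2^{2n+2L} Γ(n+1/2) Γ(L))) · ζ^{2L−1} ∑_{k=0}^{N−1} η^{2k+2L+1}/(Γ(n−k)Γ(k+L+3/2)), where ∂_ζ denotes the complex derivative in ζ. -/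
open MeasureTheory Filter Finset

noncomputable section

namespace SI

/-- The kernel `G_N(ζ,η)` built from the skew-orthogonal polynomials of the
symplectic induced spherical ensemble (all powers are principal-branch `cpow`s,
which agree with the integer powers whenever `2L` is a nonnegative integer). -/
def GK (N : ℕ) (n L : ℝ) (ζ η : ℂ) : ℂ :=
  ((Real.pi : ℂ) * Complex.Gamma ((2*n+2*L+2 : ℝ) : ℂ) / (2:ℂ) ^ ((2*n+2*L+1 : ℝ) : ℂ)) *
  ∑ k ∈ range N, ∑ l ∈ range (k+1),
    ζ ^ ((2*k+2*L+1 : ℝ) : ℂ) * η ^ ((2*l+2*L : ℝ) : ℂ) /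
      (Complex.Gamma ((k+L+3/2 : ℝ) : ℂ) * Complex.Gamma ((n-k : ℝ) : ℂ) *
       Complex.Gamma ((n-l+1/2 : ℝ) : ℂ) * Complex.Gamma ((l+L+1 : ℝ) : ℂ))

/-- The skew-symmetric kernel `κ̂_N(ζ,η) = G_N(ζ,η) - G_N(η,ζ)`. -/
def KK (N : ℕ) (n L : ℝ) (ζ η : ℂ) : ℂ := GK N n L ζ η - GK N n L η ζ

lemma core_alg (N m : ℕ) (A B a b : ℕ → ℂ) (c z w : ℂ)
    (hA1 : ∀ k < N, A k * (2*k+m+2) = 2 * a k)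
    (hA2 : ∀ k < N, A k * (2*k+m+2 - c) = - (2 * a (k+1)))
    (hB1 : ∀ k < N, B k * (2*k+m+1) = 2 * b k)
    (hB2 : ∀ k < N, B k * (2*k+m+1 - c) = - (2 * b (k+1))) :
    (1+z^2) * (∑ k ∈ range N, ∑ l ∈ range (k+1), A k * B l *
      ((2*k+m+2) * z^(2*k+m+1) * w^(2*l+m+1) - w^(2*k+m+2) * ((2*l+m+1) * z^(2*l+m)))) =
    c * z * (∑ k ∈ range N, ∑ l ∈ range (k+1), A k * B l *
      (z^(2*k+m+2) * w^(2*l+m+1) - w^(2*k+m+2) * z^(2*l+m+1)))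
    + 2 * (∑ k ∈ range N, (a k * B k * (z^(2*k+m+1) * w^(2*k+m+1))
        + A k * b (k+1) * (z^(2*k+m+2) * w^(2*k+m+2))))
    - 2 * a N * z^(2*N+m+1) * (∑ k ∈ range N, B k * w^(2*k+m+1))
    - 2 * b 0 * z^m * (∑ k ∈ range N, A k * w^(2*k+m+2)) := by
  induction N with
  | zero => simp
  | succ N ih =>
    have ih' := ih (fun k hk => hA1 k (by omega)) (fun k hk => hA2 k (by omega))
      (fun k hk => hB1 k (by omega)) (fun k hk => hB2 k (by omega))
    have inner : ∀ j ≤ N+1, (∑ l ∈ range j, B l *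
        ((1+z^2) * ((2*l+m+1) * z^(2*l+m)) - c * z * z^(2*l+m+1)))
        = 2 * (b 0 * z^m - b j * z^(2*j+m)) := by
      intro j hj
      induction j with
      | zero => simp
      | succ j ihj =>
        rw [sum_range_succ, ihj (by omega)]
        have h1 := hB1 j (by omega)
        have h2 := hB2 j (by omega)
        push_cast at *
        linear_combination (z^(2*j+m)) * h1 + z^(2*j+m+2) * h2
    have h1 := hA1 N (by omega)
    have h2 := hA2 N (by omega)
    have hin := inner (N+1) le_rfl
    have split1 : ∑ l ∈ range (N+1), A N * B l *
      ((2*N+m+2) * z^(2*N+m+1) * w^(2*l+m+1) - w^(2*N+m+2) * ((2*l+m+1) * z^(2*l+m)))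
      = A N * (2*N+m+2) * z^(2*N+m+1) * (∑ l ∈ range (N+1), B l * w^(2*l+m+1))
       - A N * w^(2*N+m+2) * ∑ l ∈ range (N+1), B l * ((2*l+m+1) * z^(2*l+m)) := by
      rw [mul_sum, mul_sum, ← sum_sub_distrib]
      exact sum_congr rfl fun l _ => by ring
    have split2 : ∑ l ∈ range (N+1), A N * B l *
      (z^(2*N+m+2) * w^(2*l+m+1) - w^(2*N+m+2) * z^(2*l+m+1))
      = A N * z^(2*N+m+2) * (∑ l ∈ range (N+1), B l * w^(2*l+m+1))
       - A N * w^(2*N+m+2) * ∑ l ∈ range (N+1), B l * z^(2*l+m+1) := by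
      rw [mul_sum, mul_sum, ← sum_sub_distrib]
      exact sum_congr rfl fun l _ => by ring
    have split3 : (∑ l ∈ range (N+1), B l *
        ((1+z^2) * ((2*l+m+1) * z^(2*l+m)) - c * z * z^(2*l+m+1)))
        = (1+z^2) * (∑ l ∈ range (N+1), B l * ((2*l+m+1) * z^(2*l+m)))
          - c * z * ∑ l ∈ range (N+1), B l * z^(2*l+m+1) := by
      rw [mul_sum, mul_sum, ← sum_sub_distrib]
      exact sum_congr rfl fun l _ => by ring
    rw [split3] at hin
    rw [sum_range_succ, sum_range_succ (n := N) (f := fun k => ∑ l ∈ range (k+1), A k * B l *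
      (z^(2*k+m+2) * w^(2*l+m+1) - w^(2*k+m+2) * z^(2*l+m+1))), split1, split2]
    have hS : (∑ l ∈ range (N+1), B l * w^(2*l+m+1)) =
      (∑ l ∈ range N, B l * w^(2*l+m+1)) + B N * w^(2*N+m+1) := sum_range_succ _ _
    have hT : (∑ l ∈ range (N+1), A l * w^(2*l+m+2)) =
      (∑ l ∈ range N, A l * w^(2*l+m+2)) + A N * w^(2*N+m+2) := sum_range_succ _ _
    rw [sum_range_succ (n := N) (f := fun k => (a k * B k * (z^(2*k+m+1) * w^(2*k+m+1))
        + A k * b (k+1) * (z^(2*k+m+2) * w^(2*k+m+2)))), hT]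
    generalize (∑ l ∈ range (N+1), B l * w^(2*l+m+1)) = S1 at *
    generalize (∑ l ∈ range (N), B l * w^(2*l+m+1)) = S0 at *
    generalize (∑ l ∈ range (N+1), B l * ((2*l+m+1) * z^(2*l+m))) = U at *
    generalize (∑ l ∈ range (N+1), B l * z^(2*l+m+1)) = V at *
    linear_combination ih' - A N * w^(2*N+m+2) * hin + z^(2*N+m+1) * S1 * h1
      + z^(2*N+m+3) * S1 * h2 + 2 * a N * z^(2*N+m+1) * hS

lemma G_succ (x y : ℝ) (h : y = x + 1) (hx : 0 < x) :
    Complex.Gamma (y : ℂ) = x * Complex.Gamma (x : ℂ) := by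
  subst h; push_cast
  exact Complex.Gamma_add_one _ (by exact_mod_cast hx.ne')

lemma G_ne (x : ℝ) (hx : 0 < x) : Complex.Gamma (x : ℂ) ≠ 0 := by
  rw [Complex.Gamma_ofReal]; exact_mod_cast (Real.Gamma_pos_of_pos hx).ne'

lemma G_dup (x x' y y' x2 y2 : ℝ) (K : ℕ) (hx : x' = x + 1/2) (hy : y' = y + 1/2)
    (hx2 : x2 = 2*x) (hy2 : y2 = 2*y) (hK : x2 + y2 = K + 1) :
    Complex.Gamma (x:ℂ) * Complex.Gamma (x':ℂ) * (Complex.Gamma (y:ℂ) * Complex.Gamma (y':ℂ))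
      * 2^K = 2 * (Real.pi:ℂ) * (Complex.Gamma (x2:ℂ) * Complex.Gamma (y2:ℂ)) := by
  subst hx hy hx2 hy2
  simp only [Complex.Gamma_ofReal]
  have h : Real.Gamma x * Real.Gamma (x+1/2) * (Real.Gamma y * Real.Gamma (y+1/2)) * 2^K
      = 2 * Real.pi * (Real.Gamma (2*x) * Real.Gamma (2*y)) := by
    rw [Real.Gamma_mul_Gamma_add_half, Real.Gamma_mul_Gamma_add_half]
    have h2 : (2:ℝ)^(1-2*x) * (2:ℝ)^(1-2*y) * 2^K = 2 := by
      rw [← Real.rpow_natCast, ← Real.rpow_add two_pos, ← Real.rpow_add two_pos]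
      rw [show 1-2*x+(1-2*y)+(K:ℝ) = 1 by linarith, Real.rpow_one]
    have h3 : √Real.pi * √Real.pi = Real.pi := Real.mul_self_sqrt Real.pi_pos.le
    linear_combination (Real.Gamma (2*x) * Real.Gamma (2*y)) * (√Real.pi * √Real.pi) * h2
      + 2 * (Real.Gamma (2*x) * Real.Gamma (2*y)) * h3
  exact_mod_cast h

lemma cpow_nat' (z : ℂ) (x : ℝ) (k : ℕ) (h : x = k) : z ^ (x : ℂ) = z ^ k := by
  subst h; simp

lemma core_deriv (N m : ℕ) (A B : ℕ → ℂ) (z w : ℂ) :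
    HasDerivAt (fun z : ℂ => ∑ k ∈ range N, ∑ l ∈ range (k+1), A k * B l *
      (z^(2*k+m+2) * w^(2*l+m+1) - w^(2*k+m+2) * z^(2*l+m+1)))
      (∑ k ∈ range N, ∑ l ∈ range (k+1), A k * B l *
      ((2*k+m+2) * z^(2*k+m+1) * w^(2*l+m+1) - w^(2*k+m+2) * ((2*l+m+1) * z^(2*l+m)))) z := by
  apply HasDerivAt.fun_sum
  intro k _
  apply HasDerivAt.fun_sum
  intro l _
  apply HasDerivAt.const_mul
  have h1 := (hasDerivAt_pow (2*k+m+2) z).mul_const (w^(2*l+m+1))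
  have h2 := (hasDerivAt_pow (2*l+m+1) z).const_mul (w^(2*k+m+2))
  refine (h1.fun_sub h2).congr_deriv ?_
  simp only [Nat.add_sub_cancel, show 2*k+m+2-1 = 2*k+m+1 from rfl]
  push_cast
  ring

/-- Lemma 3.2: the generalised Christoffel–Darboux formula for `κ̂_N`. -/
theorem generalised_christoffel_darboux (N n M : ℕ) (L : ℝ) (hN : 1 ≤ N) (hn : N < n)
    (hL : 0 < L) (hM : 2*L = (M : ℝ)) (hM1 : 1 ≤ M) (ζ η : ℂ) :
    (1+ζ^2) * deriv (fun ζ' => KK N n L ζ' η) ζ =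
      2*ζ*(((n+L-1/2 : ℝ)) : ℂ) * KK N n L ζ η
      + Complex.Gamma ((2*(n:ℝ)+2*L+2 : ℝ) : ℂ) / 2 *
          ∑ k ∈ range (2*N), ζ ^ ((k+2*L : ℝ) : ℂ) * η ^ ((k+2*L : ℝ) : ℂ) /
            (Complex.Gamma ((k+2*L+1 : ℝ) : ℂ) * Complex.Gamma ((2*(n:ℝ)-k : ℝ) : ℂ))
      - (Real.pi : ℂ) * Complex.Gamma ((2*(n:ℝ)+2*L+2 : ℝ) : ℂ) /
          ((2:ℂ) ^ ((2*(n:ℝ)+2*L : ℝ) : ℂ) * Complex.Gamma ((N+L+1/2 : ℝ) : ℂ) *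
            Complex.Gamma (((n:ℝ)-N : ℝ) : ℂ)) *
          (ζ ^ ((2*(N:ℝ)+2*L : ℝ) : ℂ) *
            ∑ k ∈ range N, η ^ ((2*k+2*L : ℝ) : ℂ) /
              (Complex.Gamma (((n:ℝ)-k+1/2 : ℝ) : ℂ) * Complex.Gamma ((k+L+1 : ℝ) : ℂ)))
      - (Real.pi : ℂ) * Complex.Gamma ((2*(n:ℝ)+2*L+2 : ℝ) : ℂ) /
          ((2:ℂ) ^ ((2*(n:ℝ)+2*L : ℝ) : ℂ) * Complex.Gamma (((n:ℝ)+1/2 : ℝ) : ℂ) *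
            Complex.Gamma ((L : ℝ) : ℂ)) *
          (ζ ^ ((2*L-1 : ℝ) : ℂ) *
            ∑ k ∈ range N, η ^ ((2*k+2*L+1 : ℝ) : ℂ) /
              (Complex.Gamma (((n:ℝ)-k : ℝ) : ℂ) * Complex.Gamma ((k+L+3/2 : ℝ) : ℂ))) := by
  obtain ⟨m, rfl⟩ : ∃ m, M = m+1 := ⟨M-1, by omega⟩
  push_cast at hM
  have hn' : ∀ k, k < N → (k:ℝ) + 1 + 1 ≤ n := fun k hk => by
    exact_mod_cast (by omega : k+1+1 ≤ n)
  set A : ℕ → ℂ := fun k => (Complex.Gamma ((k+L+3/2 : ℝ) : ℂ) * Complex.Gamma ((n-k : ℝ) : ℂ))⁻¹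
    with hAdef
  set B : ℕ → ℂ := fun l => (Complex.Gamma ((n-l+1/2 : ℝ) : ℂ) * Complex.Gamma ((l+L+1 : ℝ) : ℂ))⁻¹
    with hBdef
  set a : ℕ → ℂ := fun k => (Complex.Gamma ((k+L+1/2 : ℝ) : ℂ) * Complex.Gamma ((n-k : ℝ) : ℂ))⁻¹
    with hadef
  set b : ℕ → ℂ := fun l => (Complex.Gamma ((n-l+1/2 : ℝ) : ℂ) * Complex.Gamma ((l+L : ℝ) : ℂ))⁻¹
    with hbdef
  set g : ℂ := Complex.Gamma ((2*(n:ℝ)+2*L+2 : ℝ) : ℂ) with hg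
  set C : ℂ := (Real.pi : ℂ) * g / 2^(2*n+m+2) with hC
  have hLm : (L:ℂ) = (m+1)/2 := by
    have : L = (m+1)/2 := by linarith
    rw [this]; push_cast; ring
  have hK : ∀ z, KK N n L z η = C * ∑ k ∈ range N, ∑ l ∈ range (k+1), A k * B l *
      (z^(2*k+m+2) * η^(2*l+m+1) - η^(2*k+m+2) * z^(2*l+m+1)) := by
    intro z
    unfold KK GK
    rw [cpow_nat' 2 _ (2*n+m+2) (by push_cast; linarith), ← mul_sub, ← sum_sub_distrib]
    congr 1
    refine sum_congr rfl fun k _ => ?_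
    rw [← sum_sub_distrib]
    refine sum_congr rfl fun l _ => ?_
    rw [cpow_nat' z _ (2*k+m+2) (by push_cast; linarith),
      cpow_nat' η _ (2*l+m+1) (by push_cast; linarith),
      cpow_nat' η _ (2*k+m+2) (by push_cast; linarith),
      cpow_nat' z _ (2*l+m+1) (by push_cast; linarith)]
    simp only [hAdef, hBdef, div_eq_mul_inv, mul_inv]
    ring
  have hd : deriv (fun z => KK N n L z η) ζ = _ :=
    ((core_deriv N m A B ζ η).const_mul C |>.congr_of_eventuallyEq
      (Filter.Eventually.of_forall hK)).deriv
  rw [hd, hK]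
  have hA1 : ∀ k < N, A k * (2*k+m+2) = 2 * a k := by
    intro k hk
    have h0 := hn' k hk
    have hk0 : (0:ℝ) ≤ k := Nat.cast_nonneg k
    have e := G_succ (k+L+1/2) (k+L+3/2) (by ring) (by positivity)
    have n1 := G_ne (k+L+3/2) (by positivity)
    have n2 := G_ne (k+L+1/2) (by positivity)
    have n3 := G_ne (n-k) (by linarith)
    simp only [hAdef, hadef]
    generalize Complex.Gamma ((k+L+3/2:ℝ):ℂ) = x1 at *
    generalize Complex.Gamma ((k+L+1/2:ℝ):ℂ) = x2 at *
    field_simp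
    rw [e]; push_cast; rw [hLm]; ring
  have hA2 : ∀ k < N, A k * (2*k+m+2 - (2*n+m)) = - (2 * a (k+1)) := by
    intro k hk
    have h0 := hn' k hk
    have hk0 : (0:ℝ) ≤ k := Nat.cast_nonneg k
    have e := G_succ (n-(k+1:ℕ)) (n-k) (by push_cast; ring) (by push_cast; linarith)
    have n1 := G_ne (k+L+3/2) (by positivity)
    have n2 := G_ne (n-(k+1:ℕ)) (by push_cast; linarith)
    have n3 := G_ne (n-k) (by linarith)
    simp only [hAdef, hadef]
    rw [show (((k+1:ℕ):ℝ)+L+1/2) = k+L+3/2 by push_cast; ring]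
    field_simp
    rw [e]; push_cast; ring
  have hB1 : ∀ k < N, B k * (2*k+m+1) = 2 * b k := by
    intro k hk
    have h0 := hn' k hk
    have hk0 : (0:ℝ) ≤ k := Nat.cast_nonneg k
    have e := G_succ (k+L) (k+L+1) (by ring) (by positivity)
    have n1 := G_ne (k+L+1) (by positivity)
    have n2 := G_ne (k+L) (by positivity)
    have n3 := G_ne (n-k+1/2) (by linarith)
    simp only [hBdef, hbdef]
    field_simp
    rw [e]; push_cast; rw [hLm]; ring
  have hB2 : ∀ k < N, B k * (2*k+m+1 - (2*n+m)) = - (2 * b (k+1)) := by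
    intro k hk
    have h0 := hn' k hk
    have hk0 : (0:ℝ) ≤ k := Nat.cast_nonneg k
    have e := G_succ (n-(k+1:ℕ)+1/2) (n-k+1/2) (by push_cast; ring) (by push_cast; linarith)
    have n1 := G_ne (k+L+1) (by positivity)
    have n2 := G_ne (n-(k+1:ℕ)+1/2) (by push_cast; linarith)
    have n3 := G_ne (n-k+1/2) (by linarith)
    simp only [hBdef, hbdef]
    rw [show (((k+1:ℕ):ℝ)+L) = k+L+1 by push_cast; ring]
    generalize Complex.Gamma ((n-k+1/2:ℝ):ℂ) = x1 at *
    generalize Complex.Gamma ((n-(k+1:ℕ)+1/2:ℝ):ℂ) = x2 at *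
    field_simp
    rw [e]; push_cast; ring
  have core := core_alg N m A B a b (2*n+m) ζ η hA1 hA2 hB1 hB2
  have pne : (Real.pi : ℂ) ≠ 0 := by exact_mod_cast Real.pi_ne_zero
  have hpair : ∀ f : ℕ → ℂ, ∑ k ∈ range (2*N), f k = ∑ k ∈ range N, (f (2*k) + f (2*k+1)) := by
    intro f
    clear * -
    induction N with
    | zero => simp
    | succ N ih => rw [show 2*(N+1) = 2*N+1+1 by ring, sum_range_succ, sum_range_succ, ih,
        sum_range_succ]; ring
  have hdiag : g / 2 * ∑ k ∈ range (2*N), ζ ^ ((k+2*L : ℝ) : ℂ) * η ^ ((k+2*L : ℝ) : ℂ) /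
            (Complex.Gamma ((k+2*L+1 : ℝ) : ℂ) * Complex.Gamma ((2*(n:ℝ)-k : ℝ) : ℂ))
      = C * (2 * (∑ k ∈ range N, (a k * B k * (ζ^(2*k+m+1) * η^(2*k+m+1))
        + A k * b (k+1) * (ζ^(2*k+m+2) * η^(2*k+m+2))))) := by
    rw [hpair, mul_sum, mul_sum, mul_sum]
    refine sum_congr rfl fun k hk => ?_
    have h0 := hn' k (mem_range.mp hk)
    have hk0 : (0:ℝ) ≤ k := Nat.cast_nonneg k
    rw [cpow_nat' ζ _ (2*k+m+1) (by push_cast; linarith),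
      cpow_nat' η _ (2*k+m+1) (by push_cast; linarith),
      cpow_nat' ζ _ (2*k+m+2) (by push_cast; linarith),
      cpow_nat' η _ (2*k+m+2) (by push_cast; linarith)]
    have d1 := G_dup (k+L+1/2) (k+L+1) (n-k) (n-k+1/2) (((2*k:ℕ):ℝ)+2*L+1) (2*n-(2*k:ℕ)) (2*n+m+1)
      (by ring) (by ring) (by push_cast; ring) (by push_cast; ring) (by push_cast; linarith)
    have d2 := G_dup (k+L+1) (k+L+3/2) (n-(k+1:ℕ)+1/2) (n-k) (((2*k+1:ℕ):ℝ)+2*L+1) (2*n-(2*k+1:ℕ))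
      (2*n+m+1)
      (by ring) (by push_cast; ring) (by push_cast; ring) (by push_cast; ring)
      (by push_cast; linarith)
    have n1 := G_ne (k+L+1/2) (by positivity)
    have n2 := G_ne (k+L+1) (by positivity)
    have n3 := G_ne (n-k) (by linarith)
    have n4 := G_ne (n-k+1/2) (by linarith)
    have n5 := G_ne (k+L+3/2) (by positivity)
    have n6 := G_ne (n-(k+1:ℕ)+1/2) (by push_cast; linarith)
    have n7 := G_ne (((2*k:ℕ):ℝ)+2*L+1) (by positivity)
    have n8 := G_ne (2*n-(2*k:ℕ)) (by push_cast; linarith)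
    have n9 := G_ne (((2*k+1:ℕ):ℝ)+2*L+1) (by positivity)
    have n10 := G_ne (2*n-(2*k+1:ℕ)) (by push_cast; linarith)
    simp only [hAdef, hBdef, hadef, hbdef, hC]
    rw [show (((k+1:ℕ):ℝ)+L) = k+L+1 by push_cast; ring]
    generalize Complex.Gamma ((k+L+1/2:ℝ):ℂ) = g1 at *
    generalize Complex.Gamma ((k+L+1:ℝ):ℂ) = g2 at *
    generalize Complex.Gamma ((n-k:ℝ):ℂ) = g3 at *
    generalize Complex.Gamma ((n-k+1/2:ℝ):ℂ) = g4 at *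
    generalize Complex.Gamma ((k+L+3/2:ℝ):ℂ) = g5 at *
    generalize Complex.Gamma ((n-(k+1:ℕ)+1/2:ℝ):ℂ) = g6 at *
    generalize Complex.Gamma ((((2*k:ℕ):ℝ)+2*L+1:ℝ):ℂ) = g7 at *
    generalize Complex.Gamma ((2*n-(2*k:ℕ):ℝ):ℂ) = g8 at *
    generalize Complex.Gamma ((((2*k+1:ℕ):ℝ)+2*L+1:ℝ):ℂ) = g9 at *
    generalize Complex.Gamma ((2*n-(2*k+1:ℕ):ℝ):ℂ) = g10 at *
    have two : (2:ℂ)^(2*n+m+1) ≠ 0 := by exact pow_ne_zero _ two_ne_zero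
    rw [show (2:ℂ)^(2*n+m+2) = 2 * 2^(2*n+m+1) by ring]
    generalize (2:ℂ)^(2*n+m+1) = T at *
    have e1 : g / 2 * (g7*g8)⁻¹ = (Real.pi:ℂ) * g / (2*T) * (2 * ((g1*g3)⁻¹ * (g4*g2)⁻¹)) := by
      field_simp
      linear_combination g * d1
    have e2 : g / 2 * (g9*g10)⁻¹ = (Real.pi:ℂ) * g / (2*T) * (2 * ((g5*g3)⁻¹ * (g6*g2)⁻¹)) := by
      field_simp
      linear_combination g * d2
    rw [div_eq_mul_inv _ (g7*g8), div_eq_mul_inv _ (g9*g10)]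
    linear_combination (ζ^(2*k+m+1) * η^(2*k+m+1)) * e1 + (ζ^(2*k+m+2) * η^(2*k+m+2)) * e2
  rw [hdiag]
  have hs1 : ∑ k ∈ range N, η ^ ((2*k+2*L : ℝ) : ℂ) /
              (Complex.Gamma (((n:ℝ)-k+1/2 : ℝ) : ℂ) * Complex.Gamma ((k+L+1 : ℝ) : ℂ))
      = ∑ k ∈ range N, B k * η^(2*k+m+1) := by
    refine sum_congr rfl fun k _ => ?_
    rw [cpow_nat' η _ (2*k+m+1) (by push_cast; linarith), div_eq_mul_inv, mul_comm]
  have hs2 : ∑ k ∈ range N, η ^ ((2*k+2*L+1 : ℝ) : ℂ) /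
              (Complex.Gamma (((n:ℝ)-k : ℝ) : ℂ) * Complex.Gamma ((k+L+3/2 : ℝ) : ℂ))
      = ∑ k ∈ range N, A k * η^(2*k+m+2) := by
    refine sum_congr rfl fun k _ => ?_
    rw [cpow_nat' η _ (2*k+m+2) (by push_cast; linarith), div_eq_mul_inv, mul_comm,
      mul_comm (Complex.Gamma _)]
  rw [hs1, hs2, cpow_nat' ζ _ (2*N+m+1) (by push_cast; linarith),
    cpow_nat' ζ _ m (by linarith), cpow_nat' 2 _ (2*n+m+1) (by push_cast; linarith)]
  have c1 : (Real.pi : ℂ) * g / ((2:ℂ)^(2*n+m+1) * Complex.Gamma ((N+L+1/2 : ℝ) : ℂ) *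
            Complex.Gamma (((n:ℝ)-N : ℝ) : ℂ)) = C * (2 * a N) := by
    simp only [hC, hadef]
    rw [show (2:ℂ)^(2*n+m+2) = 2 * 2^(2*n+m+1) by ring]
    simp only [div_eq_mul_inv, mul_inv]
    ring
  have c2 : (Real.pi : ℂ) * g / ((2:ℂ)^(2*n+m+1) * Complex.Gamma (((n:ℝ)+1/2 : ℝ) : ℂ) *
            Complex.Gamma ((L : ℝ) : ℂ)) = C * (2 * b 0) := by
    simp only [hC, hbdef]
    rw [show (2:ℂ)^(2*n+m+2) = 2 * 2^(2*n+m+1) by ring]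
    simp only [div_eq_mul_inv, mul_inv, Nat.cast_zero, sub_zero, zero_add]
    ring
  rw [c1, c2]
  have hc : (((n+L-1/2 : ℝ)) : ℂ) = (2*n+m)/2 := by
    push_cast; rw [hLm]; ring
  rw [hc]
  linear_combination C * core

end SI
end
end

section
/- Large-N expansion of the Christoffel–Darboux identity at regular points in the limit of weak non-unitarity (Proposition 2.2(b)). Under the weak non-unitarity setup with zooming point p = 1, as N → ∞ the complex derivative ∂_z κ̃_N(z,w) converges to F_w(z,w) uniformly for (z,w) in compact subsets of ℂ × ℂ, where F_w(z,w) := e^{−(z−w)²}( erfc(z+w−ρ/√2) − erfc(z+w+ρ/√2) ) − (1/√2)( e^{−(√2 z−ρ/2)²} + e^{−(√2 z+ρ/2)²} )·( erfc(√2 w−ρ/2) − erfc(√2 w+ρ/2) ). -/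
open MeasureTheory Filter Finset

noncomputable section

namespace SI

/-- The density value `δ = ((n+L)/N)(1+p²)⁻²`. -/
def dlt (N : ℕ) (n L p : ℝ) : ℝ := ((n+L)/N) * (1+p^2)^(-2 : ℝ)

/-- `√(Nδ)`. -/
def sc (N : ℕ) (n L p : ℝ) : ℝ := Real.sqrt (N * dlt N n L p)

/-- The rescaled kernel `κ̃_N(z,w)`. -/
def resc (N : ℕ) (n L p : ℝ) (z w : ℂ) : ℂ :=
  (((1+p^2) ^ (-3 : ℝ) : ℝ) : ℂ) * (((N * dlt N n L p) ^ (-(3/2) : ℝ) : ℝ) : ℂ) *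
  ((1 + ((p:ℂ) + z / (sc N n L p : ℂ))^2) * (1 + ((p:ℂ) + w / (sc N n L p : ℂ))^2))
      ^ ((-(n+L-1/2) : ℝ) : ℂ) *
  KK N n L ((p:ℂ) + z / (sc N n L p : ℂ)) ((p:ℂ) + w / (sc N n L p : ℂ))

/-- The entire extension of the error function: `erf(z) = (2/√π)∫₀¹ z e^{-s²z²} ds`. -/
def cerf (z : ℂ) : ℂ :=
  (2 / (Real.sqrt Real.pi : ℂ)) * ∫ s in (0:ℝ)..1, z * Complex.exp (-((s:ℂ)^2 * z^2))

/-- `erfc(z) = 1 - erf(z)`. -/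
def cerfc (z : ℂ) : ℂ := 1 - cerf z

/-- The inhomogeneous term `F_w` of the weak non-unitarity regime. -/
def Fweak (ρ : ℝ) (z w : ℂ) : ℂ :=
  Complex.exp (-(z-w)^2) *
      (cerfc (z+w-((ρ/Real.sqrt 2 : ℝ) : ℂ)) - cerfc (z+w+((ρ/Real.sqrt 2 : ℝ) : ℂ)))
    - (1/(Real.sqrt 2 : ℂ)) *
      (Complex.exp (-((Real.sqrt 2 : ℂ)*z - ((ρ/2 : ℝ):ℂ))^2)
        + Complex.exp (-((Real.sqrt 2 : ℂ)*z + ((ρ/2 : ℝ):ℂ))^2)) *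
      (cerfc ((Real.sqrt 2 : ℂ)*w - ((ρ/2 : ℝ):ℂ)) - cerfc ((Real.sqrt 2 : ℂ)*w + ((ρ/2 : ℝ):ℂ)))

/-- The admissible system sizes in the weak non-unitarity regime:
`N ≥ ρ²` for which `n = N²/ρ²` is an integer. -/
def Sweak (ρ : ℝ) : Set ℕ :=
  {N | ρ^2 ≤ (N : ℝ) ∧ ∃ nm : ℕ, (nm : ℝ) = (N:ℝ)^2/ρ^2}

open Topology

lemma tz_of_mul {ι : Type*} {l : Filter ι} {S : ι → ℝ} {x : ι → ℂ} {c : ℂ}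
    (hS : Tendsto S l atTop) (hx : Tendsto (fun i => (S i : ℂ) * x i) l (𝓝 c)) :
    Tendsto x l (𝓝 0) := by
  have h1 : Tendsto (fun i => (((S i)⁻¹ : ℝ) : ℂ)) l (𝓝 0) := by
    have := (Complex.continuous_ofReal.tendsto 0).comp (tendsto_inv_atTop_zero.comp hS)
    rw [Complex.ofReal_zero] at this
    exact this
  have h2 := h1.mul hx
  rw [zero_mul] at h2
  refine h2.congr' ?_
  filter_upwards [hS.eventually_gt_atTop 0] with i hi
  have : (S i : ℂ) ≠ 0 := by exact_mod_cast hi.ne'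
  push_cast
  field_simp

lemma log_lim1 {ι : Type*} {l : Filter ι} {S : ι → ℝ} {x : ι → ℂ} {c : ℂ}
    (hS : Tendsto S l atTop) (hx : Tendsto (fun i => (S i : ℂ) * x i) l (𝓝 c)) :
    Tendsto (fun i => (S i : ℂ)^2 * (Complex.log (1 + x i) - x i)) l (𝓝 (-c^2/2)) := by
  have hx0 := tz_of_mul hS hx
  have hO := (Complex.log_sub_logTaylor_isBigO 2).comp_tendsto hx0
  have h3 : Tendsto (fun i => (S i : ℂ)^2 * (x i)^3) l (𝓝 0) := by
    have := (hx.pow 2).mul hx0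
    rw [mul_zero] at this
    refine this.congr fun i => by ring
  have h4 : Tendsto (fun i => (S i : ℂ)^2 * (Complex.log (1 + x i) - Complex.logTaylor 3 (x i))) l (𝓝 0) := by
    refine Asymptotics.IsBigO.trans_tendsto ?_ h3
    exact (Asymptotics.isBigO_refl _ _).mul hO
  have h5 := h4.sub ((hx.pow 2).div_const 2)
  rw [show (0:ℂ) - c^2/2 = -c^2/2 by ring] at h5
  refine h5.congr fun i => ?_
  simp only [Complex.logTaylor, Finset.sum_range_succ, Finset.sum_range_zero]
  norm_num
  ring

lemma log_lim0 {ι : Type*} {l : Filter ι} {S : ι → ℝ} {x : ι → ℂ} {c : ℂ}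
    (hS : Tendsto S l atTop) (hx : Tendsto (fun i => (S i : ℂ) * x i) l (𝓝 c)) :
    Tendsto (fun i => (S i : ℂ) * Complex.log (1 + x i)) l (𝓝 c) := by
  have h1 := tz_of_mul (x := fun i => (S i : ℂ) * (Complex.log (1 + x i) - x i)) hS
    ((log_lim1 hS hx).congr fun i => by ring)
  have := h1.add hx
  rw [zero_add] at this
  exact this.congr fun i => by ring

/-- weight asymptotics -/
lemma weight_lim {ι : Type*} {l : Filter ι} {S : ι → ℝ} {j : ι → ℕ} {z : ι → ℂ} {z0 : ℂ} {u : ℝ}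
    (hS : Tendsto S l atTop) (hz : Tendsto z l (𝓝 z0))
    (hj : Tendsto (fun i => ((j i : ℝ) - (S i)^2) / S i) l (𝓝 u)) :
    Tendsto (fun i => (1 + 2 * z i / S i)^(j i) *
      Complex.exp (-((S i : ℂ)^2 - 1/2) * Complex.log ((1 + (1 + 2 * z i / S i)^2)/2))) l
      (𝓝 (Complex.exp (2*u*z0 - 2*z0^2))) := by
  set x : ι → ℂ := fun i => 2 * z i / S i with hxd
  have hpos : ∀ᶠ i in l, (S i : ℂ) ≠ 0 := by
    filter_upwards [hS.eventually_gt_atTop 0] with i hi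
    exact_mod_cast hi.ne'
  have hx : Tendsto (fun i => (S i : ℂ) * x i) l (𝓝 (2*z0)) := by
    refine (hz.const_mul 2).congr' ?_
    filter_upwards [hpos] with i hi
    simp only [hxd]; field_simp
  have hx0 := tz_of_mul hS hx
  have hy : Tendsto (fun i => (S i : ℂ) * (x i + x i ^2/2)) l (𝓝 (2*z0)) := by
    have := hx.mul (hx0.div_const 2 |>.const_add 1)
    simp only [zero_div, add_zero, mul_one] at this
    exact this.congr fun i => by ring
  have hy0 := tz_of_mul hS hy
  have hju : Tendsto (fun i => ((((j i : ℝ) - (S i)^2) / S i : ℝ) : ℂ)) l (𝓝 (u:ℂ)) :=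
    (Complex.continuous_ofReal.tendsto u).comp hj
  have hly : Tendsto (fun i => Complex.log (1 + (x i + x i ^2/2))) l (𝓝 0) :=
    tz_of_mul hS (log_lim0 hS hy)
  have E := (((log_lim1 hS hx).sub (log_lim1 hS hy)).sub ((hx.pow 2).div_const 2)).add
    ((hju.mul (log_lim0 hS hx)).add (hly.div_const 2))
  have E2 := (Complex.continuous_exp.tendsto _).comp E
  rw [show -(2*z0)^2/2 - -(2*z0)^2/2 - (2*z0)^2/2 + ((u:ℂ)*(2*z0) + 0/2) = 2*u*z0 - 2*z0^2 by ring] at E2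
  refine E2.congr' ?_
  have hne : ∀ᶠ i in l, 1 + x i ≠ 0 := by
    have : Tendsto (fun i => 1 + x i) l (𝓝 1) := by simpa using hx0.const_add 1
    exact this.eventually_ne one_ne_zero
  filter_upwards [hpos, hne] with i hi hn
  have e1 : (1 + x i)^(j i) = Complex.exp (j i * Complex.log (1 + x i)) := by
    rw [Complex.exp_nat_mul, Complex.exp_log hn]
  have e2 : (1 + (1 + x i)^2)/2 = 1 + (x i + x i^2/2) := by ring
  rw [Function.comp_apply]
  change _ = (1 + x i)^(j i) * Complex.exp (-((S i : ℂ)^2 - 1/2) * Complex.log ((1 + (1 + x i)^2)/2))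
  rw [e1, e2, ← Complex.exp_add]
  congr 1
  push_cast
  field_simp
  ring

lemma real_log1 {ι : Type*} {l : Filter ι} {S : ι → ℝ} {x : ι → ℝ} {c : ℝ}
    (hS : Tendsto S l atTop) (hx : Tendsto (fun i => S i * x i) l (𝓝 c)) :
    Tendsto (fun i => (S i)^2 * (Real.log (1 + x i) - x i)) l (𝓝 (-c^2/2)) ∧
    Tendsto (fun i => S i * Real.log (1 + x i)) l (𝓝 c) ∧ Tendsto x l (𝓝 0) := by
  have hx' : Tendsto (fun i => (S i : ℂ) * (x i : ℂ)) l (𝓝 (c:ℂ)) := by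
    have := (Complex.continuous_ofReal.tendsto c).comp hx
    refine this.congr fun i => by simp
  have h0 : Tendsto x l (𝓝 0) := by
    have := (Complex.continuous_re.tendsto _).comp (tz_of_mul hS hx')
    rw [Complex.zero_re] at this
    exact this
  have hp : ∀ᶠ i in l, 0 ≤ 1 + x i := by
    filter_upwards [h0.eventually (eventually_gt_nhds (show (-1:ℝ) < 0 by norm_num))] with i hi
    linarith
  refine ⟨?_, ?_, h0⟩
  · have := (Complex.continuous_re.tendsto _).comp (log_lim1 hS hx')
    have e : (-(c:ℂ)^2/2).re = -c^2/2 := by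
      have : (-(c:ℂ)^2/2) = ((-c^2/2 : ℝ) : ℂ) := by push_cast; ring
      rw [this, Complex.ofReal_re]
    rw [e] at this
    refine this.congr' ?_
    filter_upwards [hp] with i hi
    have : (S i:ℂ)^2 * (Complex.log (1 + x i) - x i) = ((S i^2 * (Real.log (1 + x i) - x i) : ℝ) : ℂ) := by
      push_cast
      rw [Complex.ofReal_log hi]; push_cast; rfl
    rw [Function.comp_apply, this, Complex.ofReal_re]
  · have := (Complex.continuous_re.tendsto _).comp (log_lim0 hS hx')
    rw [Complex.ofReal_re] at this
    refine this.congr' ?_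
    filter_upwards [hp] with i hi
    have : (S i:ℂ) * (Complex.log (1 + x i)) = ((S i * (Real.log (1 + x i)) : ℝ) : ℂ) := by
      push_cast
      rw [Complex.ofReal_log hi]; push_cast; rfl
    rw [Function.comp_apply, this, Complex.ofReal_re]
lemma dml {ι : Type*} {l : Filter ι} {m m' : ι → ℕ} {v : ℝ}
    (hS : Tendsto (fun i => √((m i : ℝ) + m' i)) l atTop)
    (hv : Tendsto (fun i => ((m i : ℝ) - m' i) / √((m i : ℝ) + m' i)) l (𝓝 v)) :
    Tendsto (fun i => √((m i : ℝ) + m' i) * ((m i + m' i).factorial : ℝ) /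
      ((m i).factorial * (m' i).factorial * 2^(m i + m' i))) l (𝓝 (√2/√Real.pi * Real.exp (-v^2/2))) ∧
    Tendsto (fun i => (m i : ℝ) / ((m i : ℝ) + m' i)) l (𝓝 (1/2)) ∧
    Tendsto m l atTop ∧ Tendsto m' l atTop := by
  set S : ι → ℝ := fun i => √((m i : ℝ) + m' i) with hSd
  set x : ι → ℝ := fun i => ((m i : ℝ) - m' i) / ((m i : ℝ) + m' i) with hxd
  have hSpos : ∀ᶠ i in l, 0 < S i := hS.eventually_gt_atTop 0
  have hSsq : ∀ i, S i^2 = (m i : ℝ) + m' i := fun i => Real.sq_sqrt (by positivity)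
  have hx : Tendsto (fun i => S i * x i) l (𝓝 v) := by
    refine hv.congr' ?_
    filter_upwards [hSpos] with i hi
    have : x i = ((m i : ℝ) - m' i) / S i^2 := by rw [hSsq]
    rw [this]
    change _ / S i = _
    field_simp
  have hxn : Tendsto (fun i => S i * (-x i)) l (𝓝 (-v)) := hx.neg.congr fun i => by ring
  obtain ⟨A1, A2, hx0⟩ := real_log1 hS hx
  obtain ⟨B1, B2, hxn0⟩ := real_log1 hS hxn
  have hmx : ∀ᶠ i in l, (m i : ℝ) = S i^2 * ((1 + x i)/2) := by
    filter_upwards [hSpos] with i hi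
    have : (m i : ℝ) + m' i ≠ 0 := by rw [← hSsq i]; positivity
    rw [hSsq]; simp only [hxd]; field_simp; ring
  have hmx' : ∀ᶠ i in l, (m' i : ℝ) = S i^2 * ((1 + -x i)/2) := by
    filter_upwards [hSpos] with i hi
    have : (m i : ℝ) + m' i ≠ 0 := by rw [← hSsq i]; positivity
    rw [hSsq]; simp only [hxd]; field_simp; ring
  have hS2 : Tendsto (fun i => S i^2) l atTop := (tendsto_pow_atTop two_ne_zero).comp hS
  have hhalf : Tendsto (fun i => (1 + x i)/2) l (𝓝 (1/2)) := by simpa using (hx0.const_add 1).div_const 2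
  have hhalf' : Tendsto (fun i => (1 + -x i)/2) l (𝓝 (1/2)) := by
    have := (hxn0.const_add 1).div_const 2
    rwa [add_zero] at this
  have hm : Tendsto m l atTop := by
    rw [← tendsto_natCast_atTop_iff (R := ℝ)]
    refine (hS2.atTop_mul_pos (by norm_num : (0:ℝ) < 1/2) hhalf).congr' ?_
    filter_upwards [hmx] with i hi using hi.symm
  have hm' : Tendsto m' l atTop := by
    rw [← tendsto_natCast_atTop_iff (R := ℝ)]
    refine (hS2.atTop_mul_pos (by norm_num : (0:ℝ) < 1/2) hhalf').congr' ?_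
    filter_upwards [hmx'] with i hi using hi.symm
  refine ⟨?_, ?_, hm, hm'⟩
  · have hMt : Tendsto (fun i => m i + m' i) l atTop := tendsto_atTop_mono (fun i => Nat.le_add_right _ _) hm
    have st := Stirling.tendsto_stirlingSeq_sqrt_pi
    have T1 := (st.comp hMt).div ((st.comp hm).mul (st.comp hm')) (by positivity)
    have T2 : Tendsto (fun i => √2 / √((1 + x i) * (1 + -x i))) l (𝓝 (√2/√((1+0)*(1+0)))) := by
      refine Tendsto.div tendsto_const_nhds ?_ (by simp)
      exact (Real.continuous_sqrt.tendsto _).comp ((hx0.const_add 1).mul (hxn0.const_add 1))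
    have T3 : Tendsto (fun i => (1/2)*(S i^2 * (Real.log (1 + x i) - x i) + S i^2 * (Real.log (1 + -x i) - -x i)
        + (S i * x i) * (S i * Real.log (1 + x i)) - (S i * x i) * (S i * Real.log (1 + -x i)))) l
        (𝓝 ((1/2) * (-v^2/2 + -(-v)^2/2 + v * v - v * (-v)))) :=
      ((((A1.add B1).add (hx.mul A2)).sub (hx.mul B2)).const_mul _)
    have T4 := (Real.continuous_exp.tendsto _).comp T3.neg
    have T := (T1.mul T2).mul T4
    have e : √Real.pi / (√Real.pi * √Real.pi) * (√2 / √((1 + 0) * (1 + 0))) *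
        Real.exp (-(1 / 2 * (-v ^ 2 / 2 + -(-v) ^ 2 / 2 + v * v - v * -v))) = √2/√Real.pi * Real.exp (-v^2/2) := by
      have : √Real.pi ≠ 0 := by positivity
      have e1 : -(1 / 2 * (-v ^ 2 / 2 + -(-v) ^ 2 / 2 + v * v - v * -v)) = -v^2/2 := by ring
      rw [e1]
      simp
      field_simp
    rw [e] at T
    refine T.congr' ?_
    filter_upwards [hSpos, hmx, hmx', hm.eventually_gt_atTop 0, hm'.eventually_gt_atTop 0] with i hi h1 h2 h3 h4
    have hp : (0:ℝ) < m i := by exact_mod_cast h3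
    have hp' : (0:ℝ) < m' i := by exact_mod_cast h4
    have q1 : 0 < 1 + x i := by
      by_contra hc; push Not at hc
      have : S i^2 * ((1 + x i)/2) ≤ 0 := mul_nonpos_of_nonneg_of_nonpos (by positivity) (by linarith)
      linarith
    have q2 : 0 < 1 + -x i := by
      by_contra hc; push Not at hc
      have : S i^2 * ((1 + -x i)/2) ≤ 0 := mul_nonpos_of_nonneg_of_nonpos (by positivity) (by linarith)
      linarith
    have ee : Real.exp (-((1/2)*(S i^2 * (Real.log (1 + x i) - x i) + S i^2 * (Real.log (1 + -x i) - -x i)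
        + (S i * x i) * (S i * Real.log (1 + x i)) - (S i * x i) * (S i * Real.log (1 + -x i)))))
        = ((1 + x i)^(m i) * (1 + -x i)^(m' i))⁻¹ := by
      rw [Real.exp_neg]
      congr 1
      rw [← Real.exp_log (pow_pos q1 (m i)), ← Real.exp_log (pow_pos q2 (m' i)), ← Real.exp_add, Real.log_pow, Real.log_pow, h1, h2]
      congr 1; ring
    simp only [Function.comp_apply, Pi.div_apply, ee, Stirling.stirlingSeq]
    have hx1 : 1 + x i = 2 * m i / S i^2 := by rw [h1]; field_simp
    have hx2 : 1 + -x i = 2 * m' i / S i^2 := by rw [h2]; field_simp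
    have s1 : √((1 + x i) * (1 + -x i)) = √(2 * m i) * √(2 * m' i) / S i^2 := by
      rw [hx1, hx2, div_mul_div_comm, Real.sqrt_div (by positivity), Real.sqrt_mul (by positivity), Real.sqrt_mul_self (by positivity)]
    have s2 : √(2 * ((m i + m' i : ℕ):ℝ)) = √2 * S i := by
      rw [Real.sqrt_mul (by positivity)]; push_cast; rfl
    rw [s1, s2, hx1, hx2]
    push_cast
    rw [← hSsq i]
    have f1 : ((m i).factorial : ℝ) ≠ 0 := by positivity
    have f2 : ((m' i).factorial : ℝ) ≠ 0 := by positivity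
    have f3 : ((m i + m' i).factorial : ℝ) ≠ 0 := by positivity
    have g1 : √(2 * (m i:ℝ)) ≠ 0 := by positivity
    have g2 : √(2 * (m' i:ℝ)) ≠ 0 := by positivity
    have g3 : (√2:ℝ) ≠ 0 := by positivity
    have g4 : Real.exp 1 ≠ 0 := by positivity
    simp only [div_pow, mul_pow, pow_add]
    field_simp
    rw [Real.sqrt_sq hi.le]
  · refine hhalf.congr' ?_
    filter_upwards [hSpos, hmx] with i hi h1
    rw [← hSsq i, h1]; field_simp

lemma gamma_half (m : ℕ) : Real.Gamma (m + 1/2) * (m.factorial * 4^m) = (2*m).factorial * √Real.pi := by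
  induction m with
  | zero => simp [Real.Gamma_one_half_eq, -one_div]
  | succ k ih =>
    have h : Real.Gamma (((k+1 : ℕ):ℝ) + 1/2) = (k + 1/2) * Real.Gamma (k + 1/2) := by
      rw [← Real.Gamma_add_one (by positivity)]; push_cast; congr 1; ring
    rw [h, show 2*(k+1) = (2*k+1)+1 by ring, Nat.factorial_succ, Nat.factorial_succ, Nat.factorial_succ]
    push_cast
    rw [pow_succ]
    linear_combination (2*(2*k+1)*(k+1) : ℝ) * ih

lemma cb_lim {ι : Type*} {l : Filter ι} {m : ι → ℕ} (hm : Tendsto m l atTop) :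
    Tendsto (fun i => √(m i : ℝ) * ((2 * m i).factorial : ℝ) / ((m i).factorial ^2 * 4^(m i))) l (𝓝 (1/√Real.pi)) := by
  have hS : Tendsto (fun i => √((m i : ℝ) + m i)) l atTop := by
    refine Real.tendsto_sqrt_atTop.comp ?_
    exact tendsto_atTop_mono (fun i => le_add_of_nonneg_right (Nat.cast_nonneg _)) (tendsto_natCast_atTop_atTop.comp hm)
  have h := (dml (m := m) (m' := m) (v := 0) hS (by simpa using tendsto_const_nhds)).1
  have h2 := h.div_const (√2)
  have : √2 / √Real.pi * Real.exp (-0^2/2) / √2 = 1/√Real.pi := by simp; field_simp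
  rw [this] at h2
  refine h2.congr fun i => ?_
  rw [← two_mul, ← two_mul, Real.sqrt_mul (by positivity), pow_mul]
  have : (√2:ℝ) ≠ 0 := by positivity
  norm_num
  field_simp

def rg (m m' : ℕ) : ℝ := 1 / (Real.Gamma (m + 1/2) * m'.factorial)

lemma rg_lim {ι : Type*} {l : Filter ι} {m m' : ι → ℕ} {v : ℝ}
    (hS : Tendsto (fun i => √((m i : ℝ) + m' i)) l atTop)
    (hv : Tendsto (fun i => ((m i : ℝ) - m' i) / √((m i : ℝ) + m' i)) l (𝓝 v)) :
    Tendsto (fun i => √Real.pi * (m i + m' i).factorial / 2^(m i + m' i) * rg (m i) (m' i)) l (𝓝 (Real.exp (-v^2/2))) := by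
  obtain ⟨h1, h2, h3, h4⟩ := dml hS hv
  have h5 := (cb_lim h3).inv₀ (by positivity)
  have T := (h1.mul h5).mul ((Real.continuous_sqrt.tendsto _).comp h2)
  have e : √2 / √Real.pi * Real.exp (-v ^ 2 / 2) * (1 / √Real.pi)⁻¹ * √(1/2) = Real.exp (-v^2/2) := by
    have : √Real.pi ≠ 0 := by positivity
    have : √2 ≠ 0 := by positivity
    rw [Real.sqrt_div (by positivity), Real.sqrt_one]
    field_simp
  rw [e] at T
  refine T.congr' ?_
  filter_upwards [h3.eventually_gt_atTop 0, h4.eventually_gt_atTop 0] with i hi hi'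
  have hp : (0:ℝ) < m i := by exact_mod_cast hi
  have hp' : (0:ℝ) < m' i := by exact_mod_cast hi'
  have hG : Real.Gamma (m i + 1/2) = (2 * m i).factorial * √Real.pi / ((m i).factorial * 4^(m i)) := by
    rw [eq_div_iff (by positivity), gamma_half]
  simp only [Function.comp_apply, rg, hG]
  rw [Real.sqrt_div (by positivity)]
  have : √(m i : ℝ) ≠ 0 := by positivity
  have : √((m i : ℝ) + m' i) ≠ 0 := by positivity
  have : √Real.pi ≠ 0 := by positivity
  have : ((m i).factorial : ℝ) ≠ 0 := by positivity
  have : ((m' i).factorial : ℝ) ≠ 0 := by positivity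
  have : ((2 * m i).factorial : ℝ) ≠ 0 := by positivity
  field_simp

def Cn (M : ℕ) : ℝ := Real.pi * (2*M+1).factorial / 2^(2*M+1)

lemma Cn_lim {ι : Type*} {l : Filter ι} {M : ι → ℕ} (hM : Tendsto M l atTop) :
    Tendsto (fun i => Cn (M i) / ((M i).factorial^2 * √(M i : ℝ))) l (𝓝 (√Real.pi)) := by
  have h1 := cb_lim hM
  have h2 : Tendsto (fun i => 1 + (1/2) * (1/(M i : ℝ))) l (𝓝 (1 + (1/2) * 0)) :=
    ((tendsto_one_div_atTop_nhds_zero_nat.comp hM).const_mul _).const_add _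
  have T := (h1.mul h2).const_mul Real.pi
  have e : Real.pi * (1 / √Real.pi * (1 + 1/2 * 0)) = √Real.pi := by
    have : √Real.pi ≠ 0 := by positivity
    field_simp
    rw [Real.sq_sqrt (by positivity)]; ring
  rw [e] at T
  refine T.congr' ?_
  filter_upwards [hM.eventually_gt_atTop 0] with i hi
  have hp : (0:ℝ) < M i := by exact_mod_cast hi
  rw [Cn, Nat.factorial_succ, pow_succ (2:ℝ), pow_mul]
  have : √(M i : ℝ) ≠ 0 := by positivity
  have h3 : √(M i : ℝ)^2 = M i := Real.sq_sqrt hp.le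
  have : ((M i).factorial : ℝ) ≠ 0 := by positivity
  push_cast
  norm_num
  field_simp
  rw [h3]
lemma riemann {ι : Type*} {l : Filter ι} {K : ι → ℕ} (hK : Tendsto K l atTop)
    {a : ι → ℕ → ℂ} {g : ℝ → ℂ} (hg : Continuous g)
    (h : ∀ (U : Ultrafilter ι), (U : Filter ι) ≤ l → ∀ (j : ι → ℕ) (θ : ℝ), 
      (∀ᶠ i in (U : Filter ι), j i < K i) →
      Tendsto (fun i => (j i : ℝ) / K i) U (𝓝 θ) →
      Tendsto (fun i => (K i : ℂ) * a i (j i)) U (𝓝 (g θ))) :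
    Tendsto (fun i => ∑ j ∈ range (K i), a i j) l (𝓝 (∫ θ in (0:ℝ)..1, g θ)) := by
  rw [tendsto_iff_ultrafilter]
  intro U hU
  have hKU : Tendsto K U atTop := hK.mono_left hU
  have hK0 : ∀ᶠ i in (U : Filter ι), 0 < K i := hKU.eventually_gt_atTop 0
  set d : ι → ℕ → ℂ := fun i j => (K i : ℂ) * a i j - (K i : ℂ) * ∫ θ in ((j:ℝ)/K i)..(((j+1 : ℕ):ℝ)/K i), g θ with hd
  have hmax : ∀ i, ∃ j, 0 < K i → (j < K i ∧ ∀ j' < K i, ‖d i j'‖ ≤ ‖d i j‖) := by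
    intro i
    by_cases hi : 0 < K i
    · obtain ⟨j, hj, hj2⟩ := Finset.exists_max_image (range (K i)) (fun j => ‖d i j‖) ⟨0, by simpa using hi⟩
      exact ⟨j, fun _ => ⟨by simpa using hj, fun j' hj' => hj2 j' (by simpa using hj')⟩⟩
    · exact ⟨0, fun h => absurd h hi⟩
  choose j hj using hmax
  have hjK : ∀ᶠ i in (U : Filter ι), j i < K i := by
    filter_upwards [hK0] with i hi using (hj i hi).1
  -- limit of j/K
  obtain ⟨θ, -, hθ⟩ : ∃ θ ∈ Set.Icc (0:ℝ) 1, Tendsto (fun i => (j i : ℝ) / K i) U (𝓝 θ) := by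
    have hc : IsCompact (Set.Icc (0:ℝ) 1) := isCompact_Icc
    have := hc.ultrafilter_le_nhds (U.map (fun i => (j i : ℝ) / K i)) (by
      rw [le_principal_iff]
      change ∀ᶠ i in (U : Filter ι), (j i : ℝ) / K i ∈ Set.Icc (0:ℝ) 1
      filter_upwards [hjK] with i hi
      refine ⟨by positivity, ?_⟩
      rw [div_le_one (by exact_mod_cast (by omega : 0 < K i))]
      exact_mod_cast hi.le)
    exact this
  have hKinv : Tendsto (fun i => 1 / (K i : ℝ)) U (𝓝 0) := tendsto_one_div_atTop_nhds_zero_nat.comp hKU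
  have h1 := h U hU j θ hjK hθ
  have h2 : Tendsto (fun i => (K i : ℂ) * ∫ θ in ((j i:ℝ)/K i)..(((j i+1 : ℕ):ℝ)/K i), g θ) U (𝓝 (g θ)) := by
    rw [Metric.tendsto_nhds]
    intro ε hε
    obtain ⟨δ, hδ, hδ2⟩ := Metric.continuous_iff.mp hg θ (ε/2) (by positivity)
    filter_upwards [hK0, Metric.tendsto_nhds.mp hθ (δ/2) (by positivity), Metric.tendsto_nhds.mp hKinv (δ/2) (by positivity)] with i hi h3 h4
    have hKp : (0:ℝ) < K i := by exact_mod_cast hi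
    have hlen : ((j i+1 : ℕ):ℝ)/K i - (j i:ℝ)/K i = 1 / K i := by push_cast; ring
    have e : (K i : ℂ) * (∫ θ in ((j i:ℝ)/K i)..(((j i+1 : ℕ):ℝ)/K i), g θ) - g θ
        = (K i : ℂ) * (∫ x in ((j i:ℝ)/K i)..(((j i+1 : ℕ):ℝ)/K i), (g x - g θ)) := by
      rw [intervalIntegral.integral_sub (hg.intervalIntegrable _ _) (by simp), intervalIntegral.integral_const, hlen]
      have : (K i : ℂ) ≠ 0 := by exact_mod_cast hi.ne'
      rw [Complex.real_smul]
      push_cast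
      field_simp
    have hb : ‖∫ x in ((j i:ℝ)/K i)..(((j i+1 : ℕ):ℝ)/K i), (g x - g θ)‖ ≤ (ε/2) * |((j i+1 : ℕ):ℝ)/K i - (j i:ℝ)/K i| := by
      apply intervalIntegral.norm_integral_le_of_norm_le_const
      intro x hx
      rw [← dist_eq_norm]
      apply le_of_lt
      apply hδ2
      rw [Set.uIoc_of_le (by gcongr; simp)] at hx
      rw [Real.dist_eq] at h3 h4 ⊢
      rw [abs_lt] at *
      have := hx.1; have := hx.2
      constructor <;> linarith
    rw [dist_eq_norm, e, norm_mul, Complex.norm_natCast]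
    rw [hlen, abs_of_pos (by positivity)] at hb
    calc _ ≤ (K i : ℝ) * (ε / 2 * (1 / K i)) := by gcongr
      _ = ε/2 := by field_simp
      _ < ε := by linarith
  have h3 := (h1.sub h2).norm
  rw [sub_self, norm_zero] at h3
  rw [tendsto_iff_norm_sub_tendsto_zero]
  refine squeeze_zero' (Eventually.of_forall fun i => norm_nonneg _) ?_ h3
  filter_upwards [hK0] with i hi
  have hKp : (0:ℝ) < K i := by exact_mod_cast hi
  have hKc : (K i : ℂ) ≠ 0 := by exact_mod_cast hi.ne'
  have hint : ∫ θ in (0:ℝ)..1, g θ = ∑ j ∈ range (K i), ∫ θ in ((j:ℝ)/K i)..(((j+1 : ℕ):ℝ)/K i), g θ := by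
    rw [intervalIntegral.sum_integral_adjacent_intervals (a := fun j : ℕ => (j:ℝ)/K i) (fun k _ => hg.intervalIntegrable _ _)]
    simp [hKp.ne']
  rw [hint, ← Finset.sum_sub_distrib]
  calc _ ≤ ∑ k ∈ range (K i), ‖a i k - ∫ θ in ((k:ℝ)/K i)..(((k+1 : ℕ):ℝ)/K i), g θ‖ := norm_sum_le _ _
    _ ≤ ∑ k ∈ range (K i), (1 / (K i : ℝ)) * ‖d i (j i)‖ := by
        refine Finset.sum_le_sum fun k hk => ?_
        have := (hj i hi).2 k (by simpa using hk)
        have e : a i k - ∫ θ in ((k:ℝ)/K i)..(((k+1 : ℕ):ℝ)/K i), g θ = (1 / (K i:ℂ)) * d i k := by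
          simp only [hd]; field_simp
        rw [e, norm_mul]
        simp only [norm_div, norm_one, Complex.norm_natCast]
        gcongr
    _ = ‖d i (j i)‖ := by simp; field_simp

lemma cerf_aux (a b : ℂ) (R : ℝ) (ha : ‖a‖ < R) (hb : ‖b‖ < R) (h : ℂ → ℂ)
    (hh : ∀ z ∈ Metric.ball (0:ℂ) R, HasDerivAt h (Complex.exp (-z^2)) z) :
    h b - h a = (b - a) * ∫ s in (0:ℝ)..1, Complex.exp (-(a + s * (b - a))^2) := by
  have hmem : ∀ s ∈ Set.uIcc (0:ℝ) 1, a + s * (b - a) ∈ Metric.ball (0:ℂ) R := by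
    intro s hs
    rw [Set.uIcc_of_le zero_le_one] at hs
    have := (convex_ball (0:ℂ) R).add_smul_sub_mem (x := a) (y := b) (by simpa using ha) (by simpa using hb) hs
    simpa using this
  have := intervalIntegral.integral_eq_sub_of_hasDerivAt (a := (0:ℝ)) (b := 1)
    (f := fun s : ℝ => h (a + s * (b - a))) (f' := fun s : ℝ => Complex.exp (-(a + s * (b - a))^2) * (b - a))
    (fun s hs => by
      have h1 : HasDerivAt (fun s : ℝ => a + (s:ℂ) * (b - a)) (b - a) s := by
        have := ((hasDerivAt_id s).ofReal_comp.mul_const (b - a)).const_add a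
        simpa using this
      exact (hh _ (hmem s hs)).comp s h1)
    (Continuous.intervalIntegrable (by fun_prop) _ _)
  rw [intervalIntegral.integral_mul_const] at this
  rw [mul_comm, this]
  simp

lemma cerf_sub (a b : ℂ) : cerf b - cerf a =
    (2 / (Real.sqrt Real.pi : ℂ)) * ((b - a) * ∫ s in (0:ℝ)..1, Complex.exp (-(a + s * (b - a))^2)) := by
  obtain ⟨R, hR⟩ : ∃ R : ℝ, R = ‖a‖ + ‖b‖ + 1 := ⟨_, rfl⟩
  have hd : DifferentiableOn ℂ (fun z : ℂ => Complex.exp (-z^2)) (Metric.ball 0 R) := by fun_prop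
  obtain ⟨h, hh⟩ := hd.isExactOn_ball
  have na := norm_nonneg a
  have nb := norm_nonneg b
  have key : ∀ z : ℂ, ‖z‖ < R → cerf z = (2 / (Real.sqrt Real.pi : ℂ)) * (h z - h 0) := by
    intro z hz
    rw [cerf_aux 0 z R (by simp; linarith) hz h hh, cerf, intervalIntegral.integral_const_mul]
    simp only [sub_zero, zero_add, mul_pow]
  rw [key a (by linarith), key b (by linarith), ← cerf_aux a b R (by linarith) (by linarith) h hh]
  ring

lemma cerf_cont : Continuous cerf := by
  unfold cerf
  refine continuous_const.mul ?_
  apply intervalIntegral.continuous_parametric_intervalIntegral_of_continuous'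
  fun_prop

lemma cerfc_diff (A : ℂ) (R : ℝ) : cerfc (A - R) - cerfc (A + R) =
    (4 * R / (Real.sqrt Real.pi : ℂ)) * ∫ s in (0:ℝ)..1, Complex.exp (-(A - (R * (2*s-1) : ℝ))^2) := by
  have := cerf_sub (A + R) (A - R)
  unfold cerfc
  rw [show 1 - cerf (A - R) - (1 - cerf (A + R)) = -(cerf (A - R) - cerf (A + R)) by ring, this]
  have e : (fun s : ℝ => Complex.exp (-(A + R + s * (A - R - (A + R)))^2)) = fun s : ℝ => Complex.exp (-(A - (R * (2*s-1) : ℝ))^2) := by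
    ext s; congr 1; push_cast; ring
  rw [e]; ring


def ca (N L k : ℕ) : ℂ := (rg (k+L+1) (L+N-(k+1)) : ℂ)
def cb (N L l : ℕ) : ℂ := (rg (L+N-l) (l+L) : ℂ)

def Gp (N L : ℕ) (ζ η : ℂ) : ℂ := (Cn (2*L+N) : ℂ) *
  ∑ k ∈ range N, ∑ l ∈ range (k+1), ζ^(2*k+2*L+1) * η^(2*l+2*L) * (ca N L k * cb N L l)

lemma GK_eq (N L : ℕ) (ζ η : ℂ) : GK N ((L:ℝ)+N) L ζ η = Gp N L ζ η := by
  unfold GK Gp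
  congr 1
  · have e1 : ((2*((L:ℝ)+N)+2*L+2 : ℝ) : ℂ) = ((2*(2*L+N)+1 : ℕ) : ℂ) + 1 := by push_cast; ring
    have e2 : ((2*((L:ℝ)+N)+2*L+1 : ℝ) : ℂ) = ((2*(2*L+N)+1 : ℕ) : ℂ) := by push_cast; ring
    rw [e1, e2, Complex.Gamma_nat_eq_factorial, Complex.cpow_natCast, Cn]
    push_cast
    rfl
  · refine Finset.sum_congr rfl fun k hk => Finset.sum_congr rfl fun l hl => ?_
    have hk : k < N := by simpa using hk
    have hl : l ≤ k := by simp at hl; omega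
    have e1 : ((2*(k:ℝ)+2*L+1 : ℝ) : ℂ) = ((2*k+2*L+1 : ℕ) : ℂ) := by push_cast; ring
    have e2 : ((2*(l:ℝ)+2*L : ℝ) : ℂ) = ((2*l+2*L : ℕ) : ℂ) := by push_cast; ring
    have e3 : (((k:ℝ)+L+3/2 : ℝ) : ℂ) = (((k+L+1 : ℕ) + 1/2 : ℝ) : ℂ) := by push_cast; ring
    have e4 : (((L:ℝ)+N-k : ℝ) : ℂ) = ((L+N-(k+1) : ℕ) : ℂ) + 1 := by
      rw [Nat.cast_sub (by omega)]; push_cast; ring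
    have e5 : (((L:ℝ)+N-l+1/2 : ℝ) : ℂ) = (((L+N-l : ℕ) + 1/2 : ℝ) : ℂ) := by
      rw [Nat.cast_sub (by omega)]; push_cast; ring
    have e6 : (((l:ℝ)+L+1 : ℝ) : ℂ) = ((l+L : ℕ) : ℂ) + 1 := by push_cast; ring
    rw [e1, e2, e3, e4, e5, e6, Complex.Gamma_nat_eq_factorial, Complex.Gamma_nat_eq_factorial,
      Complex.cpow_natCast, Complex.cpow_natCast, Complex.Gamma_ofReal, Complex.Gamma_ofReal, ca, cb, rg, rg,
      Complex.ofReal_div, Complex.ofReal_div, Complex.ofReal_mul, Complex.ofReal_mul, div_mul_div_comm, mul_div_assoc']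
    simp only [Complex.ofReal_one, Complex.ofReal_natCast]
    congr 1 <;> ring

lemma rg_succ_left (m m' : ℕ) : ((m:ℝ) + 1/2) * rg (m+1) m' = rg m m' := by
  have h : Real.Gamma (((m+1 : ℕ):ℝ) + 1/2) = (m + 1/2) * Real.Gamma (m + 1/2) := by
    rw [← Real.Gamma_add_one (by positivity)]; push_cast; congr 1; ring
  have : Real.Gamma ((m:ℝ) + 1/2) ≠ 0 := (Real.Gamma_pos_of_pos (by positivity)).ne'
  have : (m'.factorial : ℝ) ≠ 0 := by positivity
  have : (m:ℝ) + 1/2 ≠ 0 := by positivity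
  rw [rg, rg, h]
  field_simp

lemma rg_succ_right (m m' : ℕ) : ((m':ℝ) + 1) * rg m (m'+1) = rg m m' := by
  have : Real.Gamma ((m:ℝ) + 1/2) ≠ 0 := (Real.Gamma_pos_of_pos (by positivity)).ne'
  have : (m'.factorial : ℝ) ≠ 0 := by positivity
  have : (m':ℝ) + 1 ≠ 0 := by positivity
  rw [rg, rg, Nat.factorial_succ]
  push_cast
  field_simp

def cA (N L k : ℕ) : ℂ := ((L+N-k : ℕ) : ℂ) * (rg (k+L) (L+N-k) : ℂ)
def cB (N L l : ℕ) : ℂ := ((l+L : ℕ) : ℂ) * cb N L l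

lemma ca_1 {N L k : ℕ} (hk : k < N) : ((2*k+2*L+1 : ℕ) : ℂ) * ca N L k = 2 * cA N L k := by
  obtain ⟨d, hd⟩ : ∃ d, L + N = d + (k+1) := ⟨L+N-(k+1), by omega⟩
  rw [ca, cA, hd, Nat.add_sub_cancel, show d + (k+1) - k = d + 1 by omega]
  have h1 := rg_succ_left (k+L) (d+1)
  have h2 := rg_succ_right (k+L+1) d
  rw [← h1, ← h2]
  push_cast; ring

lemma ca_2 {N L k : ℕ} (hk : k < N) : (((2*k+2*L+1 : ℕ) : ℂ) - (2*(2*L+N) - 1)) * ca N L k = - 2 * cA N L (k+1) := by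
  rw [ca, cA, show k + 1 + L = k + L + 1 by ring, Nat.cast_sub (by omega)]
  push_cast; ring

lemma cb_1 (N L l : ℕ) : ((2*l+2*L : ℕ) : ℂ) * cb N L l = 2 * cB N L l := by
  rw [cB]; push_cast; ring

lemma cb_2 {N L l : ℕ} (hl : l < N) : (((2*l+2*L : ℕ) : ℂ) - (2*(2*L+N) - 1)) * cb N L l = - 2 * cB N L (l+1) := by
  obtain ⟨d, hd⟩ : ∃ d, L + N = d + (l+1) := ⟨L+N-(l+1), by omega⟩
  have hc : (L:ℂ) + N = d + (l + 1) := by exact_mod_cast hd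
  rw [cB, cb, cb, hd, Nat.add_sub_cancel, show d + (l+1) - l = d + 1 by omega]
  have h1 := rg_succ_left d (l+1+L)
  have h2 := rg_succ_right (d+1) (l+L)
  rw [← h1, ← h2, show l + L + 1 = l + 1 + L by ring]
  have : (N:ℂ) = d + (l+1) - L := by linear_combination hc
  rw [this]
  push_cast; ring

lemma abel1 (A y : ℕ → ℂ) (K : ℕ) : ∑ k ∈ range K, ∑ l ∈ range (k+1), (A k - A (k+1)) * y l
    = ∑ k ∈ range K, A k * y k - A K * ∑ l ∈ range K, y l := by
  induction K with
  | zero => simp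
  | succ K ih =>
    rw [sum_range_succ, ih, ← Finset.mul_sum, sum_range_succ (fun k => A k * y k), sum_range_succ y]
    ring

lemma abel2 (B x : ℕ → ℂ) (K : ℕ) : ∑ k ∈ range K, ∑ l ∈ range (k+1), (B l - B (l+1)) * x k
    = B 0 * ∑ k ∈ range K, x k - ∑ k ∈ range K, B (k+1) * x k := by
  rw [Finset.mul_sum, ← Finset.sum_sub_distrib]
  refine Finset.sum_congr rfl fun k _ => ?_
  rw [← Finset.sum_mul, Finset.sum_range_sub']
  ring

def Br (N L : ℕ) (ζ η : ℂ) : ℂ :=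
  ∑ k ∈ range N, cA N L k * cb N L k * (ζ * η)^(2*k+2*L) +
  ∑ k ∈ range N, cB N L (k+1) * ca N L k * (ζ * η)^(2*k+2*L+1) -
  (L * rg (L+N) L) * ζ^(2*L+2*N) * ∑ l ∈ range N, cb N L l * η^(2*l+2*L) -
  (L * rg (L+N) L) * ζ^(2*L-1) * ∑ k ∈ range N, ca N L k * η^(2*k+2*L+1)

lemma pow_deriv_id (m : ℕ) (c ζ : ℂ) : (1 + ζ^2) * (m * ζ^(m-1)) - c * ζ * ζ^m = m * ζ^(m-1) + (m - c) * ζ^(m+1) := by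
  cases m with
  | zero => simp
  | succ m => simp; ring

lemma Gp_deriv (N L : ℕ) (ζ η : ℂ) (hL : 1 ≤ L) : ∃ D, HasDerivAt (fun ζ => Gp N L ζ η - Gp N L η ζ) D ζ ∧
    (1 + ζ^2) * D - (2*(2*L+N) - 1) * ζ * (Gp N L ζ η - Gp N L η ζ) = 2 * Cn (2*L+N) * Br N L ζ η := by
  have hd1 : HasDerivAt (fun ζ => Gp N L ζ η) ((Cn (2*L+N) : ℂ) *
      ∑ k ∈ range N, ∑ l ∈ range (k+1), (((2*k+2*L+1 : ℕ) : ℂ) * ζ^(2*k+2*L+1-1)) * η^(2*l+2*L) * (ca N L k * cb N L l)) ζ := by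
    unfold Gp
    refine HasDerivAt.const_mul _ ?_
    refine HasDerivAt.fun_sum fun k _ => HasDerivAt.fun_sum fun l _ => ?_
    exact ((hasDerivAt_pow _ ζ).mul_const _).mul_const _
  have hd2 : HasDerivAt (fun ζ => Gp N L η ζ) ((Cn (2*L+N) : ℂ) *
      ∑ k ∈ range N, ∑ l ∈ range (k+1), η^(2*k+2*L+1) * (((2*l+2*L : ℕ) : ℂ) * ζ^(2*l+2*L-1)) * (ca N L k * cb N L l)) ζ := by
    unfold Gp
    refine HasDerivAt.const_mul _ ?_
    refine HasDerivAt.fun_sum fun k _ => HasDerivAt.fun_sum fun l _ => ?_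
    exact ((hasDerivAt_pow _ ζ).const_mul _).mul_const _
  refine ⟨_, hd1.sub hd2, ?_⟩
  set A : ℕ → ℂ := fun k => cA N L k * ζ^(2*k+2*L) with hA
  set B : ℕ → ℂ := fun l => cB N L l * ζ^(2*l+2*L-1) with hB
  have key1 : (1 + ζ^2) * (∑ k ∈ range N, ∑ l ∈ range (k+1), (((2*k+2*L+1 : ℕ) : ℂ) * ζ^(2*k+2*L+1-1)) * η^(2*l+2*L) * (ca N L k * cb N L l))
      - (2*(2*L+N) - 1) * ζ * (∑ k ∈ range N, ∑ l ∈ range (k+1), ζ^(2*k+2*L+1) * η^(2*l+2*L) * (ca N L k * cb N L l))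
      = 2 * ∑ k ∈ range N, ∑ l ∈ range (k+1), (A k - A (k+1)) * (cb N L l * η^(2*l+2*L)) := by
    simp only [Finset.mul_sum, ← Finset.sum_sub_distrib]
    refine Finset.sum_congr rfl fun k hk => Finset.sum_congr rfl fun l hl => ?_
    have hk : k < N := by simpa using hk
    have h0 := pow_deriv_id (2*k+2*L+1) (2*(2*L+N) - 1) ζ
    have h1 := ca_1 (L := L) hk
    have h2 := ca_2 (L := L) hk
    simp only [hA]
    rw [Nat.add_sub_cancel] at *
    rw [show 2*(k+1)+2*L = 2*k+2*L+1+1 by ring]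
    linear_combination (ca N L k * cb N L l * η^(2*l+2*L)) * h0 + (cb N L l * η^(2*l+2*L) * ζ^(2*k+2*L)) * h1
      + (cb N L l * η^(2*l+2*L) * ζ^(2*k+2*L+1+1)) * h2
  have key2 : (1 + ζ^2) * (∑ k ∈ range N, ∑ l ∈ range (k+1), η^(2*k+2*L+1) * (((2*l+2*L : ℕ) : ℂ) * ζ^(2*l+2*L-1)) * (ca N L k * cb N L l))
      - (2*(2*L+N) - 1) * ζ * (∑ k ∈ range N, ∑ l ∈ range (k+1), η^(2*k+2*L+1) * ζ^(2*l+2*L) * (ca N L k * cb N L l))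
      = 2 * ∑ k ∈ range N, ∑ l ∈ range (k+1), (B l - B (l+1)) * (ca N L k * η^(2*k+2*L+1)) := by
    simp only [Finset.mul_sum, ← Finset.sum_sub_distrib]
    refine Finset.sum_congr rfl fun k hk => Finset.sum_congr rfl fun l hl => ?_
    have hk : k < N := by simpa using hk
    have hl : l < k + 1 := by simpa using hl
    have h0 := pow_deriv_id (2*l+2*L) (2*(2*L+N) - 1) ζ
    have h1 := cb_1 N L l
    have h2 := cb_2 (N := N) (L := L) (l := l) (by omega)
    simp only [hB]
    rw [show 2*(l+1)+2*L-1 = 2*l+2*L+1 by omega]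
    linear_combination (ca N L k * cb N L l * η^(2*k+2*L+1)) * h0 + (ca N L k * η^(2*k+2*L+1) * ζ^(2*l+2*L-1)) * h1
      + (ca N L k * η^(2*k+2*L+1) * ζ^(2*l+2*L+1)) * h2
  rw [abel1] at key1
  rw [abel2] at key2
  have hAN : A N = (L * rg (L+N) L) * ζ^(2*L+2*N) := by
    simp only [hA, cA, Nat.add_sub_cancel]; rw [show N + L = L + N by ring, show 2*N+2*L=2*L+2*N by ring]
  have hB0 : B 0 = (L * rg (L+N) L) * ζ^(2*L-1) := by
    simp only [hB, cB, cb]; simp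
  have s1 : ∑ k ∈ range N, A k * (cb N L k * η^(2*k+2*L)) = ∑ k ∈ range N, cA N L k * cb N L k * (ζ * η)^(2*k+2*L) :=
    Finset.sum_congr rfl fun k _ => by simp only [hA, mul_pow]; ring
  have s2 : ∑ k ∈ range N, B (k+1) * (ca N L k * η^(2*k+2*L+1)) = ∑ k ∈ range N, cB N L (k+1) * ca N L k * (ζ * η)^(2*k+2*L+1) :=
    Finset.sum_congr rfl fun k _ => by
      simp only [hB, mul_pow]; rw [show 2*(k+1)+2*L-1 = 2*k+2*L+1 by omega]; ring
  rw [hAN, s1] at key1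
  rw [hB0, s2] at key2
  unfold Gp Br
  linear_combination (Cn (2*L+N) : ℂ) * key1 - (Cn (2*L+N) : ℂ) * key2

/-- explicit formula -/
def Rf (N L : ℕ) (z w : ℂ) : ℂ :=
  4 * Cn (2*L+N) / (2*L+N)^2 / (1 + (1 + 2 * z / (√(2*L+N : ℝ) : ℝ))^2) *
  ((1 + (1 + 2 * z / (√(2*L+N : ℝ) : ℝ))^2) * (1 + (1 + 2 * w / (√(2*L+N : ℝ) : ℝ))^2)) ^ (-((2*L+N : ℂ) - 1/2)) *
  Br N L (1 + 2 * z / (√(2*L+N : ℝ) : ℝ)) (1 + 2 * w / (√(2*L+N : ℝ) : ℝ))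

lemma deriv_resc (N L : ℕ) (hL : 1 ≤ L) (hN : 1 ≤ N) (z w : ℂ)
    (hX : ((1 + (1 + 2 * z / (√(2*L+N : ℝ) : ℝ))^2) * (1 + (1 + 2 * w / (√(2*L+N : ℝ) : ℝ))^2)) ∈ Complex.slitPlane) :
    deriv (fun z => resc N ((L:ℝ)+N) L 1 z w) z = Rf N L z w := by
  have hNr : (0:ℝ) < N := by exact_mod_cast hN
  obtain ⟨M, hM⟩ : ∃ M : ℝ, M = 2*L+N := ⟨_, rfl⟩
  have hMp : 0 < M := by rw [hM]; positivity
  have hMc : (2*L+N : ℂ) = M := by rw [hM]; push_cast; ring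
  have hNd : (N:ℝ) * dlt N ((L:ℝ)+N) L 1 = M / 4 := by
    unfold dlt
    rw [hM, show (1 + (1:ℝ)^2) = 2 by norm_num, show (-2:ℝ) = ((-2:ℤ):ℝ) by norm_num, Real.rpow_intCast]
    norm_num
    field_simp
    ring
  obtain ⟨S, hS⟩ : ∃ S : ℝ, S = √M := ⟨_, rfl⟩
  have hSp : 0 < S := by rw [hS]; positivity
  have hSS : S^2 = M := by rw [hS]; exact Real.sq_sqrt hMp.le
  have hsc : sc N ((L:ℝ)+N) L 1 = S/2 := by
    unfold sc
    rw [hNd, Real.sqrt_div hMp.le, ← hS]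
    rw [show (4:ℝ) = 2^2 by norm_num, Real.sqrt_sq (by norm_num)]
  have h32 : (M/4)^(-(3/2):ℝ) = 8 / S^3 := by
    rw [show M/4 = (S/2)^2 by rw [← hSS]; ring, ← Real.rpow_natCast, ← Real.rpow_mul (by positivity)]
    norm_num
    field_simp
    norm_num
  have h8 : ((1+(1:ℝ)^2)^(-3:ℝ)) = 1/8 := by
    rw [show (1 + (1:ℝ)^2) = 2 by norm_num, show (-3:ℝ) = ((-3:ℤ):ℝ) by norm_num, Real.rpow_intCast]
    norm_num
  unfold Rf
  rw [← hM, ← hS] at hX ⊢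
  rw [hMc]
  have hSc : (S:ℂ) ≠ 0 := by exact_mod_cast hSp.ne'
  have hfun : (fun z => resc N ((L:ℝ)+N) L 1 z w) = fun z => (1 / (S:ℂ)^3) *
      (((1 + (1 + 2 * z / S)^2) * (1 + (1 + 2 * w / S)^2)) ^ (-((M:ℂ) - 1/2)) *
      (Gp N L (1 + 2 * z / S) (1 + 2 * w / S) - Gp N L (1 + 2 * w / S) (1 + 2 * z / S))) := by
    ext z
    unfold resc KK
    rw [hsc, hNd, h32, h8, GK_eq, GK_eq]
    have e1 : ∀ z : ℂ, ((1:ℝ):ℂ) + z / ((S/2 : ℝ) : ℂ) = 1 + 2 * z / S := by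
      intro z; push_cast; field_simp
    have e2 : ((-((L:ℝ) + N + L - 1/2) : ℝ) : ℂ) = -((M:ℂ) - 1/2) := by
      rw [← hMc]; push_cast; ring
    rw [e1, e1, e2]
    push_cast
    ring
  rw [hfun]
  obtain ⟨D, hD, hDe⟩ := Gp_deriv N L (1 + 2 * z / S) (1 + 2 * w / S) hL
  have hζ : HasDerivAt (fun z : ℂ => 1 + 2 * z / S) (2 / S) z := by
    have := (((hasDerivAt_id z).const_mul 2).div_const (S:ℂ)).const_add 1
    simpa using this
  have hXd : HasDerivAt (fun z : ℂ => ((1 + (1 + 2 * z / S)^2) * (1 + (1 + 2 * w / S)^2))) 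
      ((2 * (1 + 2 * z / S) * (2/S)) * (1 + (1 + 2 * w / S)^2)) z := by
    have := ((hζ.pow 2).const_add 1).mul_const (1 + (1 + 2 * w / S)^2)
    simpa using this
  have hcp := hXd.cpow_const (c := -((M:ℂ) - 1/2)) hX
  have hK := hD.comp z hζ
  have htot := (hcp.mul hK).const_mul (1 / (S:ℂ)^3)
  refine htot.deriv.trans ?_
  have hne := Complex.slitPlane_ne_zero hX
  have hne1 := left_ne_zero_of_mul hne
  have hne2 := right_ne_zero_of_mul hne
  rw [Complex.cpow_sub _ _ hne, Complex.cpow_one, ← hSS]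
  simp only [Function.comp_apply]
  rw [hMc] at hDe
  set ζ := 1 + 2 * z / (S:ℂ)
  set η := 1 + 2 * w / (S:ℂ)
  push_cast
  rw [← hSS] at hDe
  push_cast at hDe
  set W := ((1 + ζ^2) * (1 + η^2)) ^ (-((S:ℂ)^2 - 1/2))
  field_simp
  linear_combination (2 * W) * hDe

def pref (N L : ℕ) (z w : ℂ) : ℂ :=
  4 * Cn (2*L+N) / (2*L+N)^2 / (1 + (1 + 2 * z / (√(2*L+N : ℝ) : ℝ))^2) *
  ((1 + (1 + 2 * z / (√(2*L+N : ℝ) : ℝ))^2) * (1 + (1 + 2 * w / (√(2*L+N : ℝ) : ℝ))^2)) ^ (-((2*L+N : ℂ) - 1/2))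

lemma cpow_split (a b c : ℂ) (ha : 0 < a.re) (hb : 0 < b.re) (M : ℕ) (hc : c = M) :
    ((2*a) * (2*b)) ^ (-(c - 1/2)) = 2 / 4^M * (Complex.exp (-(c - 1/2) * Complex.log a) *
      Complex.exp (-(c - 1/2) * Complex.log b)) := by
  have ha0 : a ≠ 0 := by rintro rfl; simp at ha
  have hb0 : b ≠ 0 := by rintro rfl; simp at hb
  have h1 : Complex.log (a * b) = Complex.log a + Complex.log b := by
    apply Complex.log_mul ha0 hb0
    have h2 := abs_lt.mp (Complex.abs_arg_lt_pi_div_two_iff.mpr (Or.inl ha))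
    have h3 := abs_lt.mp (Complex.abs_arg_lt_pi_div_two_iff.mpr (Or.inl hb))
    constructor <;> linarith [h2.1, h2.2, h3.1, h3.2]
  have h4 : (2*a)*(2*b) = ((4:ℝ):ℂ) * (a * b) := by push_cast; ring
  have h5 : ((Real.log 4 : ℝ) : ℂ) = 2 * Complex.log 2 := by
    rw [show (4:ℝ) = 2^2 by norm_num, Real.log_pow]; push_cast
    rw [Complex.ofReal_log (by norm_num)]; simp
  rw [Complex.cpow_def_of_ne_zero (by simp [ha0, hb0]), h4, Complex.log_ofReal_mul (by norm_num) (mul_ne_zero ha0 hb0), h1, h5]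
  have h6 : (2 / 4^M : ℂ) = Complex.exp (-(c - 1/2) * (2 * Complex.log 2)) := by
    have : -(c - 1/2) * (2 * Complex.log 2) = Complex.log 2 - M * (2 * Complex.log 2) := by rw [hc]; ring
    rw [this, Complex.exp_sub, Complex.exp_nat_mul, Complex.exp_log (by norm_num), two_mul, Complex.exp_add, Complex.exp_log (by norm_num)]
    norm_num
  rw [h6, ← Complex.exp_add, ← Complex.exp_add]
  congr 1; ring

lemma zeta_lim {ι : Type*} {l : Filter ι} {S : ι → ℝ} {z : ι → ℂ} {z0 : ℂ}
    (hS : Tendsto S l atTop) (hz : Tendsto z l (𝓝 z0)) :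
    Tendsto (fun i => 1 + (1 + 2 * z i / S i)^2) l (𝓝 2) := by
  have hx : Tendsto (fun i => (S i : ℂ) * (2 * z i / S i)) l (𝓝 (2*z0)) := by
    refine (hz.const_mul 2).congr' ?_
    filter_upwards [hS.eventually_gt_atTop 0] with i hi
    have : (S i : ℂ) ≠ 0 := by exact_mod_cast hi.ne'
    field_simp
  have := (((tz_of_mul hS hx).const_add 1).pow 2).const_add 1
  norm_num at this
  exact this

lemma re_pos_ev {ι : Type*} {l : Filter ι} {f : ι → ℂ} (h : Tendsto f l (𝓝 2)) :
    ∀ᶠ i in l, 0 < (f i / 2).re := by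
  have := (Complex.continuous_re.tendsto _).comp (h.div_const 2)
  have e : ((2:ℂ)/2).re = 1 := by norm_num
  rw [e] at this
  exact this.eventually (eventually_gt_nhds one_pos)

lemma term_lim {ι : Type*} {l : Filter ι} {N L : ι → ℕ} {z w : ι → ℂ} {z0 w0 : ℂ}
    (hS : Tendsto (fun i => √(2 * L i + N i : ℝ)) l atTop)
    (hz : Tendsto z l (𝓝 z0)) (hw : Tendsto w l (𝓝 w0))
    {fac m1 m1' m2 m2' j1 j2 : ι → ℕ} {v1 v2 u1 u2 : ℝ}
    (h1 : ∀ᶠ i in l, m1 i + m1' i = 2 * L i + N i) (h2 : ∀ᶠ i in l, m2 i + m2' i = 2 * L i + N i)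
    (hf : Tendsto (fun i => (fac i : ℝ) / (2 * L i + N i)) l (𝓝 (1/2)))
    (hv1 : Tendsto (fun i => ((m1 i : ℝ) - m1' i) / √(2 * L i + N i : ℝ)) l (𝓝 v1))
    (hv2 : Tendsto (fun i => ((m2 i : ℝ) - m2' i) / √(2 * L i + N i : ℝ)) l (𝓝 v2))
    (hu1 : Tendsto (fun i => ((j1 i : ℝ) - (2 * L i + N i)) / √(2 * L i + N i : ℝ)) l (𝓝 u1))
    (hu2 : Tendsto (fun i => ((j2 i : ℝ) - (2 * L i + N i)) / √(2 * L i + N i : ℝ)) l (𝓝 u2)) :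
    Tendsto (fun i => ((√(2 * L i + N i : ℝ) : ℝ) : ℂ) * (pref (N i) (L i) (z i) (w i) *
      ((fac i : ℂ) * (rg (m1 i) (m1' i) : ℂ) * (rg (m2 i) (m2' i) : ℂ) *
       (1 + 2 * z i / (√(2 * L i + N i : ℝ) : ℝ))^(j1 i) * (1 + 2 * w i / (√(2 * L i + N i : ℝ) : ℝ))^(j2 i)))) l
      (𝓝 (2 / (√Real.pi : ℝ) * (Complex.exp (-v1^2/2) * Complex.exp (-v2^2/2) *
        (Complex.exp (2*u1*z0 - 2*z0^2) * Complex.exp (2*u2*w0 - 2*w0^2))))) := by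
  have hSsq : ∀ i, √(2 * L i + N i : ℝ)^2 = 2 * L i + N i := fun i => Real.sq_sqrt (by positivity)
  have hMt : Tendsto (fun i => 2 * L i + N i) l atTop := by
    rw [← tendsto_natCast_atTop_iff (R := ℝ)]
    refine ((tendsto_pow_atTop two_ne_zero).comp hS).congr fun i => ?_
    simp only [Function.comp_apply, hSsq]; push_cast; rfl
  have cast1 : ∀ᶠ i in l, (m1 i : ℝ) + m1' i = 2 * L i + N i := by
    filter_upwards [h1] with i hi; exact_mod_cast hi
  have cast2 : ∀ᶠ i in l, (m2 i : ℝ) + m2' i = 2 * L i + N i := by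
    filter_upwards [h2] with i hi; exact_mod_cast hi
  have g1 : Tendsto (fun i => √Real.pi * (2 * L i + N i).factorial / 2^(2 * L i + N i) * rg (m1 i) (m1' i)) l (𝓝 (Real.exp (-v1^2/2))) := by
    refine (rg_lim (m := m1) (m' := m1') (v := v1) ?_ ?_).congr' ?_
    · refine hS.congr' ?_
      filter_upwards [cast1] with i hi; rw [hi]
    · refine hv1.congr' ?_
      filter_upwards [cast1] with i hi; rw [hi]
    · filter_upwards [h1] with i hi; rw [hi]
  have g2 : Tendsto (fun i => √Real.pi * (2 * L i + N i).factorial / 2^(2 * L i + N i) * rg (m2 i) (m2' i)) l (𝓝 (Real.exp (-v2^2/2))) := by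
    refine (rg_lim (m := m2) (m' := m2') (v := v2) ?_ ?_).congr' ?_
    · refine hS.congr' ?_
      filter_upwards [cast2] with i hi; rw [hi]
    · refine hv2.congr' ?_
      filter_upwards [cast2] with i hi; rw [hi]
    · filter_upwards [h2] with i hi; rw [hi]
  have gC := Cn_lim hMt
  have greal := ((((gC.mul hf).mul g1).mul g2).const_mul (8/Real.pi))
  have gcx := (Complex.continuous_ofReal.tendsto _).comp greal
  have wz := weight_lim (j := j1) (u := u1) hS hz (by simpa only [hSsq] using hu1)
  have ww := weight_lim (j := j2) (u := u2) hS hw (by simpa only [hSsq] using hu2)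
  have z2 := zeta_lim hS hz
  have w2 := zeta_lim hS hw
  have T := (gcx.mul (z2.inv₀ two_ne_zero)).mul (wz.mul ww)
  have e : ((8 / Real.pi * (√Real.pi * (1/2) * Real.exp (-v1^2/2) * Real.exp (-v2^2/2)) : ℝ) : ℂ) * 2⁻¹ *
      (Complex.exp (2*u1*z0 - 2*z0^2) * Complex.exp (2*u2*w0 - 2*w0^2)) = 
      (2 / (√Real.pi : ℝ) * (Complex.exp (-v1^2/2) * Complex.exp (-v2^2/2) *
        (Complex.exp (2*u1*z0 - 2*z0^2) * Complex.exp (2*u2*w0 - 2*w0^2)))) := by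
    have hp : (√Real.pi : ℂ) ≠ 0 := by
      have : √Real.pi ≠ 0 := by positivity
      exact_mod_cast this
    have hpi : (Real.pi : ℂ) = (√Real.pi : ℂ)^2 := by
      rw [← Complex.ofReal_pow, Real.sq_sqrt (by positivity)]
    push_cast
    rw [hpi]
    field_simp
    norm_num
  rw [e] at T
  refine T.congr' ?_
  filter_upwards [hS.eventually_gt_atTop 0, hMt.eventually_gt_atTop 0, re_pos_ev z2, re_pos_ev w2] with i hi hMi rz rw'
  obtain ⟨M, hM⟩ : ∃ M, M = 2 * L i + N i := ⟨_, rfl⟩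
  have hMr : (2 * L i + N i : ℝ) = (M : ℝ) := by rw [hM]; push_cast; rfl
  have hMc : (2 * L i + N i : ℂ) = (M : ℂ) := by rw [hM]; push_cast; rfl
  have hSi := hSsq i
  simp only [Function.comp_apply, pref]
  rw [hMr] at hi hSi rz rw' ⊢
  rw [← hM, hMc]
  obtain ⟨S, hSS⟩ : ∃ S, S = √(M:ℝ) := ⟨_, rfl⟩
  rw [← hSS] at hi hSi rz rw' ⊢
  set ζ := 1 + 2 * z i / (S:ℂ)
  set η := 1 + 2 * w i / (S:ℂ)
  have hMS : (M:ℂ) = (S:ℂ)^2 := by rw [← Complex.ofReal_pow, hSi]; simp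
  have sp := cpow_split ((1 + ζ^2)/2) ((1+η^2)/2) (S^2) rz rw' M hMS.symm
  rw [mul_div_cancel₀ _ two_ne_zero, mul_div_cancel₀ _ two_ne_zero] at sp
  rw [hMS, sp]
  have hne : 1 + ζ^2 ≠ 0 := by
    intro h0; rw [h0] at rz; simp at rz
  have hSc : (S:ℂ) ≠ 0 := by exact_mod_cast hi.ne'
  have hfc : ((M.factorial : ℕ) : ℂ) ≠ 0 := by exact_mod_cast M.factorial_ne_zero
  have hp : (√Real.pi : ℂ) ≠ 0 := by
    have : √Real.pi ≠ 0 := by positivity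
    exact_mod_cast this
  have hpi : (Real.pi : ℂ) = (√Real.pi : ℂ)^2 := by
    rw [← Complex.ofReal_pow, Real.sq_sqrt (by positivity)]
  push_cast
  rw [hpi, hMS, show (4:ℂ) ^ M = 2^M * 2^M by rw [← mul_pow]; norm_num]
  field_simp
  ring

lemma sum_lim {ι : Type*} {l : Filter ι} {N L : ι → ℕ} {z w : ι → ℂ} {z0 w0 : ℂ} {r : ℝ}
    (hN : Tendsto N l atTop)
    (hS : Tendsto (fun i => √(2 * L i + N i : ℝ)) l atTop)
    (hr : Tendsto (fun i => (N i : ℝ) / √(2 * L i + N i : ℝ)) l (𝓝 r))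
    (hz : Tendsto z l (𝓝 z0)) (hw : Tendsto w l (𝓝 w0))
    {fac m1 m1' m2 m2' j1 j2 : ι → ℕ → ℕ} {v1 v2 u1 u2 : ℝ → ℝ}
    (cv1 : Continuous v1) (cv2 : Continuous v2) (cu1 : Continuous u1) (cu2 : Continuous u2)
    (h1 : ∀ᶠ i in l, ∀ k < N i, m1 i k + m1' i k = 2 * L i + N i ∧ m2 i k + m2' i k = 2 * L i + N i)
    (h : ∀ U : Ultrafilter ι, ↑U ≤ l → ∀ (k : ι → ℕ) (θ : ℝ), (∀ᶠ i in U, k i < N i) →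
      Tendsto (fun i => (2 * (k i : ℝ) - N i) / √(2 * L i + N i : ℝ)) U (𝓝 (r * (2*θ-1))) →
      Tendsto (fun i => 1 / √(2 * L i + N i : ℝ)) U (𝓝 0) →
      Tendsto (fun i => (k i : ℝ) / (2 * L i + N i : ℝ)) U (𝓝 0) →
      Tendsto (fun i => (N i : ℝ) / (2 * L i + N i : ℝ)) U (𝓝 0) →
      Tendsto (fun i => (L i : ℝ) / (2 * L i + N i : ℝ)) U (𝓝 (1/2)) →
      Tendsto (fun i => (1 : ℝ) / (2 * L i + N i : ℝ)) U (𝓝 0) →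
      Tendsto (fun i => (fac i (k i) : ℝ) / (2 * L i + N i)) U (𝓝 (1/2)) ∧
      Tendsto (fun i => ((m1 i (k i) : ℝ) - m1' i (k i)) / √(2 * L i + N i : ℝ)) U (𝓝 (v1 θ)) ∧
      Tendsto (fun i => ((m2 i (k i) : ℝ) - m2' i (k i)) / √(2 * L i + N i : ℝ)) U (𝓝 (v2 θ)) ∧
      Tendsto (fun i => ((j1 i (k i) : ℝ) - (2 * L i + N i)) / √(2 * L i + N i : ℝ)) U (𝓝 (u1 θ)) ∧
      Tendsto (fun i => ((j2 i (k i) : ℝ) - (2 * L i + N i)) / √(2 * L i + N i : ℝ)) U (𝓝 (u2 θ))) :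
    Tendsto (fun i => ∑ k ∈ range (N i), pref (N i) (L i) (z i) (w i) *
      ((fac i k : ℂ) * (rg (m1 i k) (m1' i k) : ℂ) * (rg (m2 i k) (m2' i k) : ℂ) *
       (1 + 2 * z i / (√(2 * L i + N i : ℝ) : ℝ))^(j1 i k) * (1 + 2 * w i / (√(2 * L i + N i : ℝ) : ℝ))^(j2 i k))) l
      (𝓝 (∫ θ in (0:ℝ)..1, (r:ℂ) * (2 / (√Real.pi : ℝ) * (Complex.exp (-v1 θ^2/2) * Complex.exp (-v2 θ^2/2) *
        (Complex.exp (2*u1 θ*z0 - 2*z0^2) * Complex.exp (2*u2 θ*w0 - 2*w0^2)))))) := by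
  have hSsq : ∀ i, √(2 * L i + N i : ℝ)^2 = 2 * L i + N i := fun i => Real.sq_sqrt (by positivity)
  refine riemann (a := fun i k => pref (N i) (L i) (z i) (w i) *
      ((fac i k : ℂ) * (rg (m1 i k) (m1' i k) : ℂ) * (rg (m2 i k) (m2' i k) : ℂ) *
       (1 + 2 * z i / (√(2 * L i + N i : ℝ) : ℝ))^(j1 i k) * (1 + 2 * w i / (√(2 * L i + N i : ℝ) : ℝ))^(j2 i k)))
     (g := fun θ : ℝ => (r:ℂ) * (2 / (√Real.pi : ℝ) * (Complex.exp (-v1 θ^2/2) * Complex.exp (-v2 θ^2/2) *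
        (Complex.exp (2*u1 θ*z0 - 2*z0^2) * Complex.exp (2*u2 θ*w0 - 2*w0^2))))) hN (by fun_prop) ?_
  intro U hU k θ hk hθ
  have hS' := hS.mono_left hU
  have hr' := hr.mono_left hU
  have hN' := hN.mono_left hU
  have i0 : Tendsto (fun i => 1 / √(2 * L i + N i : ℝ)) U (𝓝 0) := by
    simpa only [one_div, Function.comp_def] using tendsto_inv_atTop_zero.comp hS'
  have n0 : Tendsto (fun i => (N i : ℝ) / (2 * L i + N i : ℝ)) U (𝓝 0) := by
    have := hr'.mul i0
    rw [mul_zero] at this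
    refine this.congr fun i => ?_
    rw [div_mul_div_comm, ← sq, hSsq, mul_one]
  have one0 : Tendsto (fun i => (1 : ℝ) / (2 * L i + N i : ℝ)) U (𝓝 0) := by
    have := i0.mul i0
    rw [mul_zero] at this
    refine this.congr fun i => ?_
    rw [div_mul_div_comm, mul_one, ← sq, hSsq]
  have kN : Tendsto (fun i => (k i : ℝ) / (2 * L i + N i : ℝ)) U (𝓝 0) := by
    have := hθ.mul n0
    rw [mul_zero] at this
    refine this.congr' ?_
    filter_upwards [hN'.eventually_gt_atTop 0] with i hi
    have : (N i : ℝ) ≠ 0 := by positivity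
    field_simp
  have l0 : Tendsto (fun i => (L i : ℝ) / (2 * L i + N i : ℝ)) U (𝓝 (1/2)) := by
    have := (n0.const_sub 1).mul_const (1/2)
    rw [sub_zero, one_mul] at this
    refine this.congr' ?_
    filter_upwards [hN'.eventually_gt_atTop 0] with i hi
    have : (0:ℝ) < N i := by positivity
    field_simp
    ring
  have ku : Tendsto (fun i => (2 * (k i : ℝ) - N i) / √(2 * L i + N i : ℝ)) U (𝓝 (r * (2*θ-1))) := by
    refine (hr'.mul ((hθ.const_mul 2).sub_const 1)).congr' ?_
    filter_upwards [hN'.eventually_gt_atTop 0] with i hi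
    have : (N i : ℝ) ≠ 0 := by positivity
    field_simp
  obtain ⟨a1, a2, a3, a4, a5⟩ := h U hU k θ hk ku i0 kN n0 l0 one0
  have h1' := (h1.filter_mono hU).and hk
  have T := term_lim hS' (hz.mono_left hU) (hw.mono_left hU)
    (h1'.mono fun i hi => (hi.1 _ hi.2).1) (h1'.mono fun i hi => (hi.1 _ hi.2).2) a1 a2 a3 a4 a5
  refine (((Complex.continuous_ofReal.tendsto _).comp hr').mul T).congr' ?_
  filter_upwards [hS'.eventually_gt_atTop 0] with i hi
  simp only [Function.comp_apply]
  have : ((√(2 * L i + N i : ℝ) : ℝ) : ℂ) ≠ 0 := by exact_mod_cast hi.ne'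
  rw [← mul_assoc, Complex.ofReal_div, div_mul_cancel₀ _ this, Complex.ofReal_natCast]

lemma lim_eq (ρ : ℝ) (r : ℝ) (hr : r = ρ / √2) (z0 w0 : ℂ) :
      (∫ θ in (0:ℝ)..1, (r:ℂ) * (2 / (√Real.pi : ℝ) * (Complex.exp (-((r * (2*θ-1) : ℝ):ℂ)^2/2) * Complex.exp (-((-(r * (2*θ-1)) : ℝ):ℂ)^2/2) *
        (Complex.exp (2*((r * (2*θ-1) : ℝ):ℂ)*z0 - 2*z0^2) * Complex.exp (2*((r * (2*θ-1) : ℝ):ℂ)*w0 - 2*w0^2)))))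
      + (∫ θ in (0:ℝ)..1, (r:ℂ) * (2 / (√Real.pi : ℝ) * (Complex.exp (-((-(r * (2*θ-1)) : ℝ):ℂ)^2/2) * Complex.exp (-((r * (2*θ-1) : ℝ):ℂ)^2/2) *
        (Complex.exp (2*((r * (2*θ-1) : ℝ):ℂ)*z0 - 2*z0^2) * Complex.exp (2*((r * (2*θ-1) : ℝ):ℂ)*w0 - 2*w0^2)))))
      - (∫ θ in (0:ℝ)..1, (r:ℂ) * (2 / (√Real.pi : ℝ) * (Complex.exp (-((r : ℝ):ℂ)^2/2) * Complex.exp (-((-(r * (2*θ-1)) : ℝ):ℂ)^2/2) *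
        (Complex.exp (2*((r : ℝ):ℂ)*z0 - 2*z0^2) * Complex.exp (2*((r * (2*θ-1) : ℝ):ℂ)*w0 - 2*w0^2)))))
      - (∫ θ in (0:ℝ)..1, (r:ℂ) * (2 / (√Real.pi : ℝ) * (Complex.exp (-((r : ℝ):ℂ)^2/2) * Complex.exp (-((r * (2*θ-1) : ℝ):ℂ)^2/2) *
        (Complex.exp (2*((-r : ℝ):ℂ)*z0 - 2*z0^2) * Complex.exp (2*((r * (2*θ-1) : ℝ):ℂ)*w0 - 2*w0^2)))))
      = Fweak ρ z0 w0 := by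
  have hs : ((√2 : ℝ) : ℂ)^2 = 2 := by rw [← Complex.ofReal_pow, Real.sq_sqrt (by norm_num)]; norm_num
  have hs0 : ((√2 : ℝ) : ℂ) ≠ 0 := by
    have : √(2:ℝ) ≠ 0 := by positivity
    exact_mod_cast this
  have hp : (√Real.pi : ℂ) ≠ 0 := by
    have : √Real.pi ≠ 0 := by positivity
    exact_mod_cast this
  have hρ : (ρ : ℂ) = r * ((√2 : ℝ) : ℂ) := by
    rw [hr, Complex.ofReal_div, div_mul_cancel₀ _ hs0]
  rw [Fweak, cerfc_diff, cerfc_diff]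
  simp only [← intervalIntegral.integral_const_mul]
  have ic : ∀ f : ℝ → ℂ, Continuous f → IntervalIntegrable f volume 0 1 := fun f hf => hf.intervalIntegrable _ _
  rw [← intervalIntegral.integral_add (ic _ (by fun_prop)) (ic _ (by fun_prop)),
    ← intervalIntegral.integral_sub (ic _ (by fun_prop)) (ic _ (by fun_prop)),
    ← intervalIntegral.integral_sub (ic _ (by fun_prop)) (ic _ (by fun_prop)),
    ← intervalIntegral.integral_sub (ic _ (by fun_prop)) (ic _ (by fun_prop))]
  congr 1
  funext θ
  push_cast
  rw [hρ]
  have E1 : Complex.exp (-(r * (2*θ-1))^2/2) * Complex.exp (-(-(r * (2*θ-1)))^2/2) *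
        (Complex.exp (2*(r * (2*θ-1))*z0 - 2*z0^2) * Complex.exp (2*(r * (2*θ-1))*w0 - 2*w0^2))
        = Complex.exp (-(z0-w0)^2) * Complex.exp (-(z0 + w0 - r * (2*θ-1))^2) := by
    simp only [← Complex.exp_add]; congr 1; ring
  have E2 : Complex.exp (-(-(r * (2*θ-1)))^2/2) * Complex.exp (-(r * (2*θ-1))^2/2) *
        (Complex.exp (2*(r * (2*θ-1))*z0 - 2*z0^2) * Complex.exp (2*(r * (2*θ-1))*w0 - 2*w0^2))
        = Complex.exp (-(z0-w0)^2) * Complex.exp (-(z0 + w0 - r * (2*θ-1))^2) := by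
    simp only [← Complex.exp_add]; congr 1; ring
  have E3 : Complex.exp (-(r:ℂ)^2/2) * Complex.exp (-(-(r * (2*θ-1)))^2/2) *
        (Complex.exp (2*r*z0 - 2*z0^2) * Complex.exp (2*(r * (2*θ-1))*w0 - 2*w0^2))
        = Complex.exp (-((√2:ℝ)*z0 - r * (√2:ℝ)/2)^2) * Complex.exp (-((√2:ℝ)*w0 - r * (√2:ℝ)/2 * (2*θ-1))^2) := by
    simp only [← Complex.exp_add]; congr 1
    linear_combination (z0^2 + w0^2 - r*z0 + r^2/4 - r*(2*θ-1)*w0 + r^2*(2*θ-1)^2/4) * hs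
  have E4 : Complex.exp (-(r:ℂ)^2/2) * Complex.exp (-(r * (2*θ-1))^2/2) *
        (Complex.exp (2*(-r)*z0 - 2*z0^2) * Complex.exp (2*(r * (2*θ-1))*w0 - 2*w0^2))
        = Complex.exp (-((√2:ℝ)*z0 + r * (√2:ℝ)/2)^2) * Complex.exp (-((√2:ℝ)*w0 - r * (√2:ℝ)/2 * (2*θ-1))^2) := by
    simp only [← Complex.exp_add]; congr 1
    linear_combination (z0^2 + w0^2 + r*z0 + r^2/4 - r*(2*θ-1)*w0 + r^2*(2*θ-1)^2/4) * hs
  rw [E1, E2, E3, E4, mul_div_cancel_right₀ _ hs0]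
  field_simp
  ring

lemma core {ι : Type*} {l : Filter ι} {N L : ι → ℕ} {z w : ι → ℂ} {z0 w0 : ℂ} {r ρ : ℝ} (hρ : r = ρ / √2)
    (hN : Tendsto N l atTop) (hL : ∀ᶠ i in l, 1 ≤ L i)
    (hS : Tendsto (fun i => √(2 * L i + N i : ℝ)) l atTop)
    (hr : Tendsto (fun i => (N i : ℝ) / √(2 * L i + N i : ℝ)) l (𝓝 r))
    (hz : Tendsto z l (𝓝 z0)) (hw : Tendsto w l (𝓝 w0)) :
    Tendsto (fun i => Rf (N i) (L i) (z i) (w i)) l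
      (𝓝 (Fweak ρ z0 w0)) := by
  have T1 := sum_lim hN hS hr hz hw (fac := fun i k => L i + N i - k)
    (m1 := fun i k => k + L i) (m1' := fun i k => L i + N i - k)
    (m2 := fun i k => L i + N i - k) (m2' := fun i k => k + L i)
    (j1 := fun i k => 2*k+2*L i) (j2 := fun i k => 2*k+2*L i)
    (v1 := fun θ => r * (2*θ-1)) (v2 := fun θ => -(r * (2*θ-1))) (u1 := fun θ => r * (2*θ-1)) (u2 := fun θ => r * (2*θ-1))
    (by fun_prop) (by fun_prop) (by fun_prop) (by fun_prop)
    (Eventually.of_forall fun i k hk => by omega) (by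
      intro U hU k θ hk ku i0 kM nM lM oM
      refine ⟨?_, ?_, ?_, ?_, ?_⟩
      · have := (lM.add nM).sub kM
        simp only [add_zero, sub_zero] at this
        refine this.congr' ?_
        filter_upwards [hk] with i hi
        rw [Nat.cast_sub (by omega)]; push_cast; ring
      · refine ku.congr' ?_
        filter_upwards [hk] with i hi
        rw [Nat.cast_sub (by omega)]; push_cast; ring
      · refine ku.neg.congr' ?_
        filter_upwards [hk] with i hi
        rw [Nat.cast_sub (by omega)]; push_cast; ring
      · refine ku.congr fun i => ?_
        push_cast; ring
      · refine ku.congr fun i => ?_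
        push_cast; ring)
  have T2 := sum_lim hN hS hr hz hw (fac := fun i k => k + 1 + L i)
    (m1 := fun i k => L i + N i - (k+1)) (m1' := fun i k => k + 1 + L i)
    (m2 := fun i k => k + L i + 1) (m2' := fun i k => L i + N i - (k+1))
    (j1 := fun i k => 2*k+2*L i+1) (j2 := fun i k => 2*k+2*L i+1)
    (v1 := fun θ => -(r * (2*θ-1))) (v2 := fun θ => (r * (2*θ-1))) (u1 := fun θ => r * (2*θ-1)) (u2 := fun θ => r * (2*θ-1))
    (by fun_prop) (by fun_prop) (by fun_prop) (by fun_prop)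
    (Eventually.of_forall fun i k hk => by omega) (by
      intro U hU k θ hk ku i0 kM nM lM oM
      have ku1 := ku.add i0
      have ku2 := ku1.add i0
      simp only [add_zero] at ku1 ku2
      refine ⟨?_, ?_, ?_, ?_, ?_⟩
      · have := (kM.add oM).add lM
        simp only [zero_add] at this
        refine this.congr fun i => ?_
        push_cast; ring
      · refine ku2.neg.congr' ?_
        filter_upwards [hk] with i hi
        rw [Nat.cast_sub (by omega)]; push_cast; ring
      · refine ku2.congr' ?_
        filter_upwards [hk] with i hi
        rw [Nat.cast_sub (by omega)]; push_cast; ring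
      · refine ku1.congr fun i => ?_
        push_cast; ring
      · refine ku1.congr fun i => ?_
        push_cast; ring)
  have T3 := sum_lim hN hS hr hz hw (fac := fun i k => L i)
    (m1 := fun i k => L i + N i) (m1' := fun i k => L i)
    (m2 := fun i k => L i + N i - k) (m2' := fun i k => k + L i)
    (j1 := fun i k => 2*L i + 2*N i) (j2 := fun i k => 2*k+2*L i)
    (v1 := fun θ => r) (v2 := fun θ => -(r * (2*θ-1))) (u1 := fun θ => r) (u2 := fun θ => r * (2*θ-1))
    (by fun_prop) (by fun_prop) (by fun_prop) (by fun_prop)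
    (Eventually.of_forall fun i k hk => by omega) (by
      intro U hU k θ hk ku i0 kM nM lM oM
      refine ⟨lM, ?_, ?_, ?_, ?_⟩
      · refine (hr.mono_left hU).congr fun i => ?_
        push_cast; ring
      · refine ku.neg.congr' ?_
        filter_upwards [hk] with i hi
        rw [Nat.cast_sub (by omega)]; push_cast; ring
      · refine (hr.mono_left hU).congr fun i => ?_
        push_cast; ring
      · refine ku.congr fun i => ?_
        push_cast; ring)
  have T4 := sum_lim hN hS hr hz hw (fac := fun i k => L i)
    (m1 := fun i k => L i + N i) (m1' := fun i k => L i)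
    (m2 := fun i k => k + L i + 1) (m2' := fun i k => L i + N i - (k+1))
    (j1 := fun i k => 2*L i - 1) (j2 := fun i k => 2*k+2*L i+1)
    (v1 := fun θ => r) (v2 := fun θ => (r * (2*θ-1))) (u1 := fun θ => -r) (u2 := fun θ => r * (2*θ-1))
    (by fun_prop) (by fun_prop) (by fun_prop) (by fun_prop)
    (Eventually.of_forall fun i k hk => by omega) (by
      intro U hU k θ hk ku i0 kM nM lM oM
      have ku1 := ku.add i0
      have ku2 := ku1.add i0
      simp only [add_zero] at ku1 ku2
      refine ⟨lM, ?_, ?_, ?_, ?_⟩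
      · refine (hr.mono_left hU).congr fun i => ?_
        push_cast; ring
      · refine ku2.congr' ?_
        filter_upwards [hk] with i hi
        rw [Nat.cast_sub (by omega)]; push_cast; ring
      · have := (hr.mono_left hU).neg.sub i0
        simp only [sub_zero] at this
        refine this.congr' ?_
        filter_upwards [hL.filter_mono hU] with i hi
        rw [Nat.cast_sub (by omega)]; push_cast; ring
      · refine ku1.congr fun i => ?_
        push_cast; ring)
  have T := ((T1.add T2).sub T3).sub T4
  rw [lim_eq ρ r hρ] at T
  refine T.congr fun i => ?_
  have e : Rf (N i) (L i) (z i) (w i) = pref (N i) (L i) (z i) (w i) * Br (N i) (L i) (1 + 2 * z i / (√(2*L i+N i : ℝ) : ℝ)) (1 + 2 * w i / (√(2*L i+N i : ℝ) : ℝ)) := rfl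
  rw [e, Br]
  generalize pref (N i) (L i) (z i) (w i) = P
  generalize (1 + 2 * z i / ((√(2*L i+N i : ℝ) : ℝ) : ℂ)) = ζ
  generalize (1 + 2 * w i / ((√(2*L i+N i : ℝ) : ℝ) : ℂ)) = η
  simp only [mul_sub, mul_add, Finset.mul_sum]
  congr 1
  · congr 1
    · congr 1
      · refine Finset.sum_congr rfl fun k _ => ?_
        simp only [cA, cb, mul_pow]; ring
      · refine Finset.sum_congr rfl fun k _ => ?_
        simp only [cB, ca, cb, mul_pow]; ring
    · refine Finset.sum_congr rfl fun k _ => ?_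
      simp only [cb]; ring
  · refine Finset.sum_congr rfl fun k _ => ?_
    simp only [ca]; ring

lemma Fweak_cont (ρ : ℝ) : Continuous (fun q : ℂ × ℂ => Fweak ρ q.1 q.2) := by
  have : Continuous cerfc := continuous_const.sub cerf_cont
  unfold Fweak
  fun_prop

lemma joint (ρ : ℝ) (hρ : 0 < ρ) (q0 : ℂ × ℂ) :
    Tendsto (fun x : ℕ × (ℂ × ℂ) =>
      deriv (fun z => resc x.1 ((x.1:ℝ)^2/ρ^2) ((x.1:ℝ)^2/ρ^2 - x.1) 1 z x.2.2) x.2.1)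
      ((atTop ⊓ 𝓟 (Sweak ρ)) ×ˢ 𝓝 q0) (𝓝 (Fweak ρ q0.1 q0.2)) := by
  set l : Filter (ℕ × (ℂ × ℂ)) := (atTop ⊓ 𝓟 (Sweak ρ)) ×ˢ 𝓝 q0
  have h1 : Tendsto (fun x : ℕ × (ℂ × ℂ) => x.1) l (atTop ⊓ 𝓟 (Sweak ρ)) := tendsto_fst
  have hN : Tendsto (fun x : ℕ × (ℂ × ℂ) => x.1) l atTop := h1.mono_right inf_le_left
  have hNr : Tendsto (fun x : ℕ × (ℂ × ℂ) => (x.1 : ℝ)) l atTop := tendsto_natCast_atTop_atTop.comp hN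
  have hmem : ∀ᶠ x in l, x.1 ∈ Sweak ρ := h1.eventually (mem_inf_of_right (mem_principal_self _))
  have hq : Tendsto (fun x : ℕ × (ℂ × ℂ) => x.2) l (𝓝 q0) := tendsto_snd
  have hz : Tendsto (fun x : ℕ × (ℂ × ℂ) => x.2.1) l (𝓝 q0.1) := (continuous_fst.tendsto _).comp hq
  have hw : Tendsto (fun x : ℕ × (ℂ × ℂ) => x.2.2) l (𝓝 q0.2) := (continuous_snd.tendsto _).comp hq
  let L : ℕ × (ℂ × ℂ) → ℕ := fun x => ⌊(x.1:ℝ)^2/ρ^2⌋₊ - x.1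
  have hρ2 : 0 < ρ^2 := by positivity
  have hLN : ∀ᶠ x in l, (x.1:ℝ)^2/ρ^2 = (L x : ℝ) + x.1 := by
    filter_upwards [hmem] with x hx
    obtain ⟨h1, nm, hnm⟩ := hx
    have h2 : x.1 ≤ nm := by
      have : (x.1 : ℝ) ≤ nm := by
        rw [hnm, le_div_iff₀ hρ2, sq (x.1 : ℝ)]
        exact mul_le_mul_of_nonneg_left h1 (Nat.cast_nonneg _)
      exact_mod_cast this
    simp only [L]
    rw [← hnm, Nat.floor_natCast, Nat.cast_sub h2]; ring
  have hLge : ∀ᶠ x in l, (x.1 : ℝ) ≤ L x := by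
    filter_upwards [hLN, hNr.eventually_ge_atTop (2 * ρ^2)] with x hx hx2
    have : 2 * (x.1:ℝ) ≤ (x.1:ℝ)^2/ρ^2 := by
      rw [le_div_iff₀ hρ2]
      nlinarith [(Nat.cast_nonneg x.1 : (0:ℝ) ≤ x.1)]
    linarith
  have hL1 : ∀ᶠ x in l, 1 ≤ L x := by
    filter_upwards [hLge, hN.eventually_ge_atTop 1] with x hx hx1
    have : x.1 ≤ L x := by exact_mod_cast hx
    omega
  have hS : Tendsto (fun x => √(2 * L x + x.1 : ℝ)) l atTop := by
    refine Real.tendsto_sqrt_atTop.comp (tendsto_atTop_mono (fun x => ?_) hNr)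
    have : (0:ℝ) ≤ L x := by positivity
    linarith
  have hr : Tendsto (fun x => (x.1 : ℝ) / √(2 * L x + x.1 : ℝ)) l (𝓝 (ρ / √2)) := by
    have a1 : Tendsto (fun x : ℕ × (ℂ × ℂ) => √(2/ρ^2 - (x.1:ℝ)⁻¹)) l (𝓝 (√(2/ρ^2 - 0))) :=
      (Real.continuous_sqrt.tendsto _).comp ((tendsto_inv_atTop_zero.comp hNr).const_sub _)
    have hne : √(2/ρ^2 - 0) ≠ 0 := by rw [sub_zero]; positivity
    have a2 := a1.inv₀ hne
    have e : (√(2/ρ^2 - 0))⁻¹ = ρ / √2 := by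
      rw [sub_zero, Real.sqrt_div (by norm_num), Real.sqrt_sq hρ.le, inv_div]
    rw [e] at a2
    refine a2.congr' ?_
    filter_upwards [hLN, hNr.eventually_gt_atTop 0] with x hx hx0
    have e2 : (2 * L x + x.1 : ℝ) = (x.1:ℝ)^2 * (2/ρ^2 - (x.1:ℝ)⁻¹) := by
      have : (L x : ℝ) = (x.1:ℝ)^2/ρ^2 - x.1 := by linarith
      rw [this]
      field_simp
      ring
    rw [e2, Real.sqrt_mul (by positivity), Real.sqrt_sq hx0.le, ← div_div, div_self hx0.ne', one_div]
  have z2 := zeta_lim hS hz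
  have w2 := zeta_lim hS hw
  have hsl := (z2.mul w2).eventually (Complex.isOpen_slitPlane.mem_nhds (by
    left; norm_num : (2:ℂ) * 2 ∈ Complex.slitPlane))
  have T := core (ρ := ρ) rfl hN hL1 hS hr hz hw
  refine T.congr' ?_
  filter_upwards [hLN, hL1, hN.eventually_ge_atTop 1, hsl] with x hx hx1 hx2 hx3
  rw [show (x.1:ℝ)^2/ρ^2 - x.1 = (L x : ℝ) by linarith, hx]
  exact (deriv_resc x.1 (L x) hx1 hx2 x.2.1 x.2.2 hx3).symm

/-- Proposition 2.2(b): large-`N` expansion of the Christoffel–Darboux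
identity at regular points in the limit of weak non-unitarity (zooming point `p = 1`). -/
theorem CD_asymptotics_weak (ρ : ℝ) (hρ : 0 < ρ) (K : Set (ℂ × ℂ)) (hK : IsCompact K) :
    TendstoUniformlyOn
      (fun (N : ℕ) (q : ℂ × ℂ) =>
        deriv (fun z => resc N ((N:ℝ)^2/ρ^2) ((N:ℝ)^2/ρ^2 - N) 1 z q.2) q.1)
      (fun q => Fweak ρ q.1 q.2) (atTop ⊓ 𝓟 (Sweak ρ)) K := by
  rw [← tendstoLocallyUniformlyOn_iff_tendstoUniformlyOn_of_compact hK, tendstoLocallyUniformlyOn_iff_filter]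
  intro q0 _
  rw [tendstoUniformlyOnFilter_iff_tendsto]
  have h1 := (joint ρ hρ q0).mono_left (prod_mono le_rfl (nhdsWithin_le_nhds (s := K)))
  have h2 : Tendsto (fun x : ℕ × (ℂ × ℂ) => Fweak ρ x.2.1 x.2.2) ((atTop ⊓ 𝓟 (Sweak ρ)) ×ˢ 𝓝[K] q0)
      (𝓝 (Fweak ρ q0.1 q0.2)) :=
    ((Fweak_cont ρ).tendsto q0).comp (tendsto_snd.mono_right nhdsWithin_le_nhds)
  exact (h2.prodMk_nhds h1).mono_right (nhds_le_uniformity _)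

end SI
end
end

section
/- Large-N expansion of the Christoffel–Darboux identity at the singular origin (Proposition 2.2(c)). Under the singular-origin setup with 2L a positive integer and zooming point p = 0, as N → ∞ the complex derivative ∂_z κ̃_N(z,w) converges to F_o(z,w) := 2 e^{−(z−w)²} P(2L,2zw) − (2√π/Γ(L)) z^{2L−1} e^{−z²} P(L+1/2,w²), uniformly for (z,w) in compact subsets of ℂ × ℂ. -/
open MeasureTheory Filter Finset

noncomputable section

namespace SI

/-- The regularised incomplete gamma function
`P(2L, x) = (x^{2L}/Γ(2L)) ∫₀¹ s^{2L-1} e^{-xs} ds` with `M = 2L ∈ ℕ`. -/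
def P2L (M : ℕ) (x : ℂ) : ℂ :=
  (x ^ M / Complex.Gamma ((M : ℝ) : ℂ)) *
    ∫ s in (0:ℝ)..1, (s:ℂ) ^ (M-1) * Complex.exp (-x*(s:ℂ))

/-- `P(L+1/2, w²) = (w^{2L+1}/Γ(L+1/2)) ∫₀¹ s^{L-1/2} e^{-w²s} ds` with `M = 2L`. -/
def PLhalf (M : ℕ) (L : ℝ) (w : ℂ) : ℂ :=
  (w ^ (M+1) / Complex.Gamma ((L+1/2 : ℝ) : ℂ)) *
    ∫ s in (0:ℝ)..1, ((s ^ (L-1/2) : ℝ) : ℂ) * Complex.exp (-w^2*(s:ℂ))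

/-- The limiting inhomogeneous term `F_o` at the singular origin, with `M = 2L`. -/
def Fo (M : ℕ) (L : ℝ) (z w : ℂ) : ℂ :=
  2 * Complex.exp (-(z-w)^2) * P2L M (2*z*w)
    - (2 * (Real.sqrt Real.pi : ℂ) / Complex.Gamma ((L : ℝ) : ℂ)) * z ^ (M-1) *
        Complex.exp (-z^2) * PLhalf M L w

/-- The admissible system sizes in the singular-origin regime:
positive `N` for which `n = (b+1)N` is an integer. -/
def Ssing (b : ℝ) : Set ℕ :=
  {N | 0 < N ∧ ∃ nm : ℕ, (nm : ℝ) = (b+1)*N}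


/-! ### Incomplete gamma -/

def QQ (c : ℝ) (x : ℂ) : ℂ :=
  (∫ s in (0:ℝ)..1, ((s ^ (c-1) : ℝ) : ℂ) * Complex.exp (-x*(s:ℂ))) / ((Real.Gamma c : ℝ) : ℂ)

lemma QQ_cont (c : ℝ) (hc : 1 ≤ c) (x : ℂ) :
    Continuous fun s : ℝ => ((s ^ (c-1) : ℝ) : ℂ) * Complex.exp (-x*(s:ℂ)) := by
  have h : Continuous fun s : ℝ => s ^ (c-1) := Real.continuous_rpow_const (by linarith)
  fun_prop

lemma QQ_step (c : ℝ) (hc : 1 ≤ c) (x : ℂ) :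
    QQ c x = Complex.exp (-x) / ((Real.Gamma (c+1) : ℝ) : ℂ) + x * QQ (c+1) x := by
  have h1 := intervalIntegral.integral_eq_sub_of_hasDerivAt (a := 0) (b := 1)
    (f := fun s : ℝ => ((s ^ c : ℝ) : ℂ) * Complex.exp (-x*(s:ℂ)))
    (f' := fun s : ℝ => (c:ℂ) * (((s ^ (c-1) : ℝ) : ℂ) * Complex.exp (-x*(s:ℂ)))
      - x * (((s ^ (c+1-1) : ℝ) : ℂ) * Complex.exp (-x*(s:ℂ)))) ?_ ?_
  · rw [intervalIntegral.integral_sub, intervalIntegral.integral_const_mul,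
      intervalIntegral.integral_const_mul] at h1
    · have hG : Real.Gamma (c+1) = c * Real.Gamma c := Real.Gamma_add_one (by linarith)
      have hG0 : (Real.Gamma c : ℂ) ≠ 0 := by
        exact_mod_cast (Real.Gamma_pos_of_pos (by linarith)).ne'
      have hc0 : (c : ℂ) ≠ 0 := by exact_mod_cast (by linarith : c ≠ 0)
      have h0 : (0:ℝ) ^ c = 0 := Real.zero_rpow (by linarith)
      simp only [h0, Real.one_rpow, Complex.ofReal_one, Complex.ofReal_zero, zero_mul, one_mul,
        mul_one, sub_zero] at h1
      unfold QQ
      rw [hG]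
      generalize (∫ s in (0:ℝ)..1, ((s ^ (c-1) : ℝ) : ℂ) * Complex.exp (-x*(s:ℂ))) = I1 at h1 ⊢
      generalize (∫ s in (0:ℝ)..1, ((s ^ (c+1-1) : ℝ) : ℂ) * Complex.exp (-x*(s:ℂ))) = I2 at h1 ⊢
      push_cast
      field_simp
      linear_combination h1
    · exact ((continuous_const.mul (QQ_cont c hc x)) |>.intervalIntegrable _ _)
    · exact ((continuous_const.mul (QQ_cont (c+1) (by linarith) x)) |>.intervalIntegrable _ _)
  · intro s _
    have e1 : HasDerivAt (fun s : ℝ => ((s ^ c : ℝ) : ℂ)) ((c * s ^ (c-1) : ℝ) : ℂ) s :=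
      (Real.hasDerivAt_rpow_const (Or.inr hc)).ofReal_comp
    have e2 : HasDerivAt (fun s : ℝ => Complex.exp (-x*(s:ℂ)))
        (Complex.exp (-x*(s:ℂ)) * (-x * 1)) s := by
      have : HasDerivAt (fun s : ℝ => -x*(s:ℂ)) (-x*1) s :=
        (Complex.ofRealCLM.hasDerivAt (x := s)).const_mul (-x)
      exact this.cexp
    refine (e1.mul e2).congr_deriv ?_
    rw [show c + 1 - 1 = c by ring]
    push_cast
    ring
  · apply Continuous.intervalIntegrable
    have a := QQ_cont c hc x
    have b := QQ_cont (c+1) (by linarith) x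
    exact (continuous_const.mul a).sub (continuous_const.mul b)

lemma QQ_iter (c : ℝ) (hc : 1 ≤ c) (x : ℂ) (K : ℕ) :
    QQ c x = Complex.exp (-x) * ∑ k ∈ range K, x ^ k / ((Real.Gamma (c+k+1) : ℝ) : ℂ)
      + x ^ K * QQ (c+K) x := by
  induction K with
  | zero => simp
  | succ K ih =>
    rw [ih, sum_range_succ, QQ_step (c+K) (by have : (0:ℝ) ≤ K := K.cast_nonneg
                                              linarith)]
    push_cast
    rw [show c + ((K:ℝ)+1) = c + K + 1 by ring]
    ring

lemma QQ_bound (c : ℝ) (hc : 1 ≤ c) (x : ℂ) :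
    ‖QQ c x‖ ≤ Real.exp ‖x‖ / Real.Gamma c := by
  unfold QQ
  have hG := Real.Gamma_pos_of_pos (show 0 < c by linarith)
  rw [norm_div, Complex.norm_real, Real.norm_of_nonneg hG.le]
  gcongr
  have := intervalIntegral.norm_integral_le_of_norm_le_const (a := 0) (b := 1)
    (C := Real.exp ‖x‖)
    (f := fun s : ℝ => ((s ^ (c-1) : ℝ) : ℂ) * Complex.exp (-x*(s:ℂ))) ?_
  · simpa using this
  intro s hs
  rw [Set.uIoc_of_le zero_le_one] at hs
  rw [norm_mul, Complex.norm_real, Real.norm_of_nonneg (Real.rpow_nonneg hs.1.le _)]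
  have h1 : s ^ (c-1) ≤ 1 := Real.rpow_le_one hs.1.le hs.2 (by linarith)
  have h2 : ‖Complex.exp (-x*(s:ℂ))‖ ≤ Real.exp ‖x‖ := by
    refine (Complex.norm_exp_le_exp_norm _).trans ?_
    apply Real.exp_le_exp.2
    rw [norm_mul, norm_neg, Complex.norm_real, Real.norm_of_nonneg hs.1.le]
    exact mul_le_of_le_one_right (norm_nonneg _) hs.2
  calc _ ≤ 1 * Real.exp ‖x‖ := by gcongr
    _ = _ := one_mul _

lemma P2L_eq (M : ℕ) (hM1 : 1 ≤ M) (x : ℂ) : P2L M x = x ^ M * QQ M x := by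
  unfold P2L QQ
  rw [Complex.Gamma_ofReal]
  have : ∀ s : ℝ, ((s ^ ((M:ℝ)-1) : ℝ) : ℂ) = (s:ℂ) ^ (M-1) := by
    intro s
    rw [show ((M:ℝ)-1) = ((M-1 : ℕ) : ℝ) by push_cast [hM1]; ring, Real.rpow_natCast]
    push_cast; rfl
  simp_rw [this]
  ring

lemma PLhalf_eq (M : ℕ) (L : ℝ) (w : ℂ) : PLhalf M L w = w ^ (M+1) * QQ (L+1/2) (w^2) := by
  unfold PLhalf QQ
  rw [Complex.Gamma_ofReal, show L + 1/2 - 1 = L - 1/2 by ring]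
  ring

lemma summ (c : ℝ) (hc : 0 < c) (R : ℝ) (hR : 0 < R) :
    Summable fun k : ℕ => R ^ k / Real.Gamma (c + k) := by
  have hp : ∀ k : ℕ, 0 < Real.Gamma (c+k) := fun k => Real.Gamma_pos_of_pos (by positivity)
  apply summable_of_ratio_test_tendsto_lt_one (l := 0) one_pos
  · filter_upwards with k
    have := hp k
    positivity
  · have : ∀ k : ℕ, ‖R ^ (k+1) / Real.Gamma (c + (k+1:ℕ))‖ / ‖R ^ k / Real.Gamma (c + k)‖
        = R / (c + k) := by
      intro k
      have h1 := hp k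
      have h2 := hp (k+1)
      have h3 : (0:ℝ) < c + k := by positivity
      rw [Real.norm_of_nonneg (by positivity), Real.norm_of_nonneg (by positivity)]
      have : Real.Gamma (c + (k+1:ℕ)) = (c+k) * Real.Gamma (c+k) := by
        rw [← Real.Gamma_add_one h3.ne']; push_cast; ring_nf
      rw [this]
      field_simp
      ring
    simp_rw [this]
    apply Tendsto.div_atTop tendsto_const_nhds
    exact tendsto_atTop_add_const_left _ _ tendsto_natCast_atTop_atTop

/-! ### Uniform smallness calculus -/

def UZ (f : ℕ → ℂ → ℂ → ℂ) : Prop :=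
  ∀ R : ℝ, 1 ≤ R → ∀ ε : ℝ, 0 < ε → ∀ᶠ N : ℕ in atTop, ∀ z w : ℂ, ‖z‖ ≤ R → ‖w‖ ≤ R → ‖f N z w‖ ≤ ε

def UB (f : ℕ → ℂ → ℂ → ℂ) : Prop :=
  ∀ R : ℝ, 1 ≤ R → ∃ C : ℝ, 0 < C ∧
    ∀ᶠ N : ℕ in atTop, ∀ z w : ℂ, ‖z‖ ≤ R → ‖w‖ ≤ R → ‖f N z w‖ ≤ C

lemma UZ.add {f g : ℕ → ℂ → ℂ → ℂ} (hf : UZ f) (hg : UZ g) :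
    UZ fun N z w => f N z w + g N z w := by
  intro R hR ε he
  filter_upwards [hf R hR (ε/2) (by positivity), hg R hR (ε/2) (by positivity)] with N h1 h2 z w hz hw
  calc _ ≤ ‖f N z w‖ + ‖g N z w‖ := norm_add_le _ _
    _ ≤ ε/2 + ε/2 := add_le_add (h1 z w hz hw) (h2 z w hz hw)
    _ = ε := by ring

lemma UB.mul_UZ {f g : ℕ → ℂ → ℂ → ℂ} (hf : UB f) (hg : UZ g) :
    UZ fun N z w => f N z w * g N z w := by
  intro R hR ε he
  obtain ⟨C, hC, hf⟩ := hf R hR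
  filter_upwards [hf, hg R hR (ε/C) (by positivity)] with N h1 h2 z w hz hw
  calc _ = ‖f N z w‖ * ‖g N z w‖ := norm_mul _ _
    _ ≤ C * (ε/C) := by
        apply mul_le_mul (h1 z w hz hw) (h2 z w hz hw) (norm_nonneg _) hC.le
    _ = ε := by field_simp

lemma UB.mul {f g : ℕ → ℂ → ℂ → ℂ} (hf : UB f) (hg : UB g) :
    UB fun N z w => f N z w * g N z w := by
  intro R hR
  obtain ⟨C, hC, hf⟩ := hf R hR
  obtain ⟨D, hD, hg⟩ := hg R hR
  refine ⟨C * D, by positivity, ?_⟩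
  filter_upwards [hf, hg] with N h1 h2 z w hz hw
  rw [norm_mul]
  exact mul_le_mul (h1 z w hz hw) (h2 z w hz hw) (norm_nonneg _) hC.le

lemma UB.add {f g : ℕ → ℂ → ℂ → ℂ} (hf : UB f) (hg : UB g) :
    UB fun N z w => f N z w + g N z w := by
  intro R hR
  obtain ⟨C, hC, hf⟩ := hf R hR
  obtain ⟨D, hD, hg⟩ := hg R hR
  refine ⟨C + D, by positivity, ?_⟩
  filter_upwards [hf, hg] with N h1 h2 z w hz hw
  exact (norm_add_le _ _).trans (add_le_add (h1 z w hz hw) (h2 z w hz hw))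

lemma UZ.UB {f : ℕ → ℂ → ℂ → ℂ} (hf : UZ f) : UB f := fun R hR => ⟨1, one_pos, hf R hR 1 one_pos⟩

lemma UB.of_cont {f : ℂ → ℂ → ℂ} (hf : Continuous fun q : ℂ × ℂ => f q.1 q.2) :
    UB fun _ z w => f z w := by
  intro R hR
  have hc : IsCompact (Metric.closedBall (0:ℂ) R ×ˢ Metric.closedBall (0:ℂ) R) :=
    (isCompact_closedBall _ _).prod (isCompact_closedBall _ _)
  obtain ⟨C, hC⟩ := hc.exists_bound_of_continuousOn hf.continuousOn
  refine ⟨max C 1, by positivity, Eventually.of_forall fun N z w hz hw => ?_⟩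
  exact (hC (z, w) ⟨by simpa using hz, by simpa using hw⟩).trans (le_max_left _ _)

lemma UZ.congr {f g : ℕ → ℂ → ℂ → ℂ} (hf : UZ f)
    (h : ∀ R : ℝ, 1 ≤ R → ∀ᶠ N : ℕ in atTop, ∀ z w : ℂ, ‖z‖ ≤ R → ‖w‖ ≤ R → f N z w = g N z w) :
    UZ g := by
  intro R hR ε he
  filter_upwards [hf R hR ε he, h R hR] with N h1 h2 z w hz hw
  rw [← h2 z w hz hw]; exact h1 z w hz hw

lemma UZ.of_bound {f : ℕ → ℂ → ℂ → ℂ}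
    (h : ∀ R : ℝ, 1 ≤ R → ∃ g : ℕ → ℝ, Tendsto g atTop (nhds 0) ∧
      ∀ᶠ N : ℕ in atTop, ∀ z w : ℂ, ‖z‖ ≤ R → ‖w‖ ≤ R → ‖f N z w‖ ≤ g N) : UZ f := by
  intro R hR ε he
  obtain ⟨g, hg, hb⟩ := h R hR
  filter_upwards [hb, hg.eventually (ge_mem_nhds he)] with N h1 h2 z w hz hw
  exact (h1 z w hz hw).trans h2

lemma UZ.deriv {f : ℕ → ℂ → ℂ → ℂ} (hf : UZ f)
    (hd : ∀ R : ℝ, 1 ≤ R → ∀ᶠ N : ℕ in atTop, ∀ z w : ℂ, ‖z‖ ≤ R → ‖w‖ ≤ R →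
      DifferentiableAt ℂ (fun z => f N z w) z) :
    UZ fun N z w => _root_.deriv (fun z => f N z w) z := by
  intro R hR ε he
  filter_upwards [hf (R+1) (by linarith) ε he, hd (R+1) (by linarith)] with N h1 h2 z w hz hw
  have hb : ∀ y ∈ Metric.closedBall z 1, ‖y‖ ≤ R + 1 := by
    intro y hy
    have : ‖y - z‖ ≤ 1 := by simpa [dist_eq_norm] using hy
    calc ‖y‖ = ‖(y - z) + z‖ := by ring_nf
      _ ≤ ‖y - z‖ + ‖z‖ := norm_add_le _ _
      _ ≤ R + 1 := by linarith
  have := Complex.norm_deriv_le_of_forall_mem_sphere_norm_le (c := z) (R := 1) (C := ε)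
    (f := fun z => f N z w) one_pos ?_ ?_
  · simpa using this
  · apply DifferentiableOn.diffContOnCl
    rw [closure_ball z one_ne_zero]
    intro y hy
    exact (h2 y w (hb y hy) (by linarith)).differentiableWithinAt
  · intro y hy
    exact h1 y w (hb y (Metric.sphere_subset_closedBall hy)) (by linarith)

/-! ### The prefactor -/

lemma tbound (R a : ℝ) (hR : 1 ≤ R) (ha : 1 ≤ a) (z w : ℂ) (hz : ‖z‖ ≤ R) (hw : ‖w‖ ≤ R) :
    ‖(z^2 + w^2) / (a:ℂ) + z^2*w^2 / (a:ℂ)^2‖ ≤ 3*R^4 / a := by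
  have e1 : ‖z^2‖ ≤ R^2 := by rw [norm_pow]; gcongr
  have e2 : ‖w^2‖ ≤ R^2 := by rw [norm_pow]; gcongr
  have hR2 : R^2 ≤ R^4 := pow_le_pow_right₀ hR (by norm_num)
  have hna : ‖(a:ℂ)‖ = a := by rw [Complex.norm_real, Real.norm_of_nonneg (by linarith)]
  calc _ ≤ ‖(z^2 + w^2) / (a:ℂ)‖ + ‖z^2*w^2 / (a:ℂ)^2‖ := norm_add_le _ _
    _ ≤ (R^2+R^2)/a + (R^2*R^2)/a^2 := by
        rw [norm_div, norm_div, norm_pow (a:ℂ), norm_mul, hna]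
        gcongr
        exact (norm_add_le _ _).trans (by gcongr)
    _ ≤ (R^4+R^4)/a + (R^2*R^2)/a := by
        gcongr
        nlinarith
    _ = _ := by ring

lemma pref_bound (R a : ℝ) (hR : 1 ≤ R) (ha : 400 * R^8 ≤ a) (z w : ℂ) (hz : ‖z‖ ≤ R) (hw : ‖w‖ ≤ R) :
    ‖((1 + z^2/(a:ℂ)) * (1 + w^2/(a:ℂ))) ^ ((-(a-1/2) : ℝ) : ℂ) - Complex.exp (-z^2-w^2)‖
      ≤ Real.exp (2*R^2) * (100 * R^8 / a) ∧
    (1 + z^2/(a:ℂ)) * (1 + w^2/(a:ℂ)) ∈ Complex.slitPlane := by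
  have hR8 : 1 ≤ R^8 := one_le_pow₀ hR
  have ha1 : 400 ≤ a := by linarith
  have ha0 : (a:ℂ) ≠ 0 := by exact_mod_cast (by linarith : a ≠ 0)
  set t := (z^2 + w^2) / (a:ℂ) + z^2*w^2 / (a:ℂ)^2 with ht
  have ht1 : (1 + z^2/(a:ℂ)) * (1 + w^2/(a:ℂ)) = 1 + t := by
    rw [ht]; field_simp; ring
  have htb : ‖t‖ ≤ 3*R^4/a := tbound R a hR (by linarith) z w hz hw
  have hR48 : R^4 ≤ R^8 := pow_le_pow_right₀ hR (by norm_num)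
  have hth : ‖t‖ ≤ 1/2 := by
    refine htb.trans ?_
    rw [div_le_iff₀ (by linarith)]
    linarith
  have hsl : 1 + t ∈ Complex.slitPlane := by
    apply Complex.mem_slitPlane_of_norm_lt_one
    linarith
  have hne : 1 + t ≠ 0 := Complex.slitPlane_ne_zero hsl
  rw [ht1]
  refine ⟨?_, hsl⟩
  have hlog : ‖Complex.log (1+t) - t‖ ≤ ‖t‖^2 := by
    refine (Complex.norm_log_one_add_sub_self_le (by linarith)).trans ?_
    have : (1 - ‖t‖)⁻¹ ≤ 2 := by
      rw [inv_le_comm₀ (by linarith) (by norm_num)]; linarith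
    calc _ ≤ ‖t‖^2 * 2 / 2 := by gcongr
      _ = _ := by ring
  set d : ℂ := Complex.log (1+t) * ((-(a-1/2) : ℝ) : ℂ) - (-z^2-w^2) with hd
  have hnR : ‖((a-1/2 : ℝ):ℂ)‖ ≤ a := by
    rw [Complex.norm_real, Real.norm_of_nonneg (by linarith)]; linarith
  have e1 : ‖z^2‖ ≤ R^2 := by rw [norm_pow]; gcongr
  have e2 : ‖w^2‖ ≤ R^2 := by rw [norm_pow]; gcongr
  have hd2 : d = -((a-1/2 : ℝ):ℂ) * (Complex.log (1+t) - t) + t/2 - z^2*w^2/(a:ℂ) := by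
    have : t * a = z^2+w^2 + z^2*w^2/(a:ℂ) := by rw [ht]; field_simp
    rw [hd]; push_cast
    linear_combination -this
  have hdb : ‖d‖ ≤ 50 * R^8 / a := by
    have q1 : ‖z^2*w^2/(a:ℂ)‖ ≤ R^4/a := by
      rw [norm_div, norm_mul, Complex.norm_real, Real.norm_of_nonneg (by linarith)]
      calc _ ≤ R^2*R^2/a := by gcongr
        _ = _ := by ring
    have q2 : ‖-((a-1/2 : ℝ):ℂ) * (Complex.log (1+t) - t)‖ ≤ 9*R^8/a := by
      rw [norm_mul, norm_neg]
      calc _ ≤ a * (3*R^4/a)^2 := by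
            gcongr
            exact hlog.trans (by gcongr)
        _ = _ := by field_simp; ring
    have q3 : ‖t/2‖ ≤ 3*R^4/a := by
      rw [norm_div]; simp only [Complex.norm_ofNat]; linarith [norm_nonneg t]
    rw [hd2]
    calc _ ≤ 9*R^8/a + 3*R^4/a + R^4/a := by
          refine (norm_sub_le _ _).trans (add_le_add ((norm_add_le _ _).trans (add_le_add q2 q3)) q1)
      _ = (9*R^8 + 3*R^4+R^4)/a := by ring
      _ ≤ _ := by gcongr; linarith
  have hd1 : ‖d‖ ≤ 1 := by
    refine hdb.trans ?_
    rw [div_le_iff₀ (by linarith)]; linarith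
  have hx : (1+t) ^ ((-(a-1/2) : ℝ) : ℂ) - Complex.exp (-z^2-w^2)
      = Complex.exp (-z^2-w^2) * (Complex.exp d - 1) := by
    rw [Complex.cpow_def_of_ne_zero hne, mul_sub, ← Complex.exp_add, hd]
    ring_nf
  rw [hx, norm_mul]
  have h3 : ‖Complex.exp (-z^2-w^2)‖ ≤ Real.exp (2*R^2) := by
    refine (Complex.norm_exp_le_exp_norm _).trans (Real.exp_le_exp.2 ?_)
    refine (norm_sub_le _ _).trans ?_
    rw [norm_neg]; linarith
  have h4 := Complex.norm_exp_sub_one_le hd1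
  gcongr
  refine h4.trans ?_
  calc _ ≤ 2 * (50*R^8/a) := by gcongr
    _ = _ := by ring

/-! ### The truncated limiting kernel -/

def aa (M : ℕ) (L : ℝ) (k : ℕ) (z : ℂ) : ℂ := z ^ (2*k+M+1) / ((Real.Gamma (k+L+3/2) : ℝ) : ℂ)
def bb (M : ℕ) (L : ℝ) (l : ℕ) (z : ℂ) : ℂ := z ^ (2*l+M) / ((Real.Gamma (l+L+1) : ℝ) : ℂ)
def da (M : ℕ) (L : ℝ) (k : ℕ) (z : ℂ) : ℂ := 2 * z ^ (2*k+M) / ((Real.Gamma (k+L+1/2) : ℝ) : ℂ)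
def db (M : ℕ) (L : ℝ) (l : ℕ) (z : ℂ) : ℂ := 2 * z ^ (2*l+M-1) / ((Real.Gamma (l+L) : ℝ) : ℂ)

def EE (M : ℕ) (L : ℝ) (N : ℕ) (z w : ℂ) : ℂ :=
  Complex.exp (-z^2-w^2) * ((Real.sqrt Real.pi : ℂ) *
    (∑ k ∈ range N, aa M L k z * ∑ l ∈ range (k+1), bb M L l w
      - ∑ k ∈ range N, aa M L k w * ∑ l ∈ range (k+1), bb M L l z))

lemma gne (x : ℝ) (hx : 0 < x) : ((Real.Gamma x : ℝ) : ℂ) ≠ 0 := by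
  exact_mod_cast (Real.Gamma_pos_of_pos hx).ne'

lemma aa_deriv (M : ℕ) (L : ℝ) (hM : 2*L = (M : ℝ)) (k : ℕ) (z : ℂ) :
    HasDerivAt (aa M L k) (da M L k z) z := by
  have hL : 0 ≤ L := by have : (0:ℝ) ≤ M := M.cast_nonneg
                        linarith
  have h := (hasDerivAt_pow (2*k+M+1) z).div_const ((Real.Gamma (k+L+3/2) : ℝ) : ℂ)
  refine h.congr_deriv ?_
  have h1 : Real.Gamma (k+L+3/2) = (k+L+1/2) * Real.Gamma (k+L+1/2) := by
    rw [← Real.Gamma_add_one (by positivity)]; ring_nf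
  have h2 := gne (k+L+1/2) (by positivity)
  have h3 : ((k+L+1/2 : ℝ) : ℂ) ≠ 0 := by
    exact_mod_cast (show (0:ℝ) < k+L+1/2 by positivity).ne'
  have h4 : (M:ℂ) = 2 * (L:ℂ) := by exact_mod_cast hM.symm
  unfold da
  rw [h1]
  push_cast at h3 ⊢
  rw [h4, show 2*(k:ℂ) + 2*(L:ℂ) + 1 = 2*(k+L+1/2) by ring]
  generalize (k:ℂ)+L+1/2 = t at *
  generalize ((Real.Gamma (k+L+1/2) : ℝ):ℂ) = G at *
  field_simp

lemma bb_deriv (M : ℕ) (L : ℝ) (hM : 2*L = (M : ℝ)) (hM1 : 1 ≤ M) (k : ℕ) (z : ℂ) :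
    HasDerivAt (bb M L k) (db M L k z) z := by
  have hL : 0 < L := by have : (1:ℝ) ≤ M := by exact_mod_cast hM1
                        linarith
  have h := (hasDerivAt_pow (2*k+M) z).div_const ((Real.Gamma (k+L+1) : ℝ) : ℂ)
  refine h.congr_deriv ?_
  have h1 : Real.Gamma (k+L+1) = (k+L) * Real.Gamma (k+L) :=
    Real.Gamma_add_one (by positivity)
  have h2 := gne (k+L) (by positivity)
  have h3 : ((k+L : ℝ) : ℂ) ≠ 0 := by
    exact_mod_cast (show (0:ℝ) < k+L by positivity).ne'
  have h4 : (M:ℂ) = 2 * (L:ℂ) := by exact_mod_cast hM.symm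
  unfold db
  rw [h1]
  push_cast at h3 ⊢
  rw [h4]
  field_simp

lemma da_succ (M : ℕ) (L : ℝ) (k : ℕ) (z : ℂ) : da M L (k+1) z = 2 * z * aa M L k z := by
  unfold da aa
  rw [show ((k+1:ℕ):ℝ)+L+1/2 = k+L+3/2 by push_cast; ring,
    show 2*(k+1)+M = 2*k+M+1+1 by ring]
  ring

lemma db_succ (M : ℕ) (L : ℝ) (k : ℕ) (z : ℂ) : db M L (k+1) z = 2 * z * bb M L k z := by
  unfold db bb
  rw [show ((k+1:ℕ):ℝ)+L = k+L+1 by push_cast; ring,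
    show 2*(k+1)+M-1 = 2*k+M+1 by omega]
  ring

lemma EE_deriv (M : ℕ) (L : ℝ) (hM : 2*L = (M : ℝ)) (hM1 : 1 ≤ M) (N : ℕ) (z w : ℂ) :
    HasDerivAt (fun z => EE M L N z w)
      (Complex.exp (-z^2-w^2) * ((Real.sqrt Real.pi : ℂ) *
        (∑ k ∈ range N, (da M L k z * bb M L k w + aa M L k w * db M L (k+1) z)
          - da M L N z * ∑ l ∈ range N, bb M L l w
          - db M L 0 z * ∑ k ∈ range N, aa M L k w))) z := by
  have h1 : HasDerivAt (fun z : ℂ => Complex.exp (-z^2-w^2))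
      (Complex.exp (-z^2-w^2) * (-(2*z))) z := by
    have : HasDerivAt (fun z : ℂ => -z^2-w^2) (-(2*z)) z := by
      simpa using ((hasDerivAt_pow 2 z).neg).sub_const (w^2)
    exact this.cexp
  have h2 : HasDerivAt (fun z => ∑ k ∈ range N, aa M L k z * ∑ l ∈ range (k+1), bb M L l w)
      (∑ k ∈ range N, da M L k z * ∑ l ∈ range (k+1), bb M L l w) z :=
    HasDerivAt.fun_sum fun k _ => (aa_deriv M L hM k z).mul_const _
  have h3 : HasDerivAt (fun z => ∑ k ∈ range N, aa M L k w * ∑ l ∈ range (k+1), bb M L l z)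
      (∑ k ∈ range N, aa M L k w * ∑ l ∈ range (k+1), db M L l z) z :=
    HasDerivAt.fun_sum fun k _ => HasDerivAt.const_mul _
      (HasDerivAt.fun_sum fun l _ => bb_deriv M L hM hM1 l z)
  have h := h1.mul ((h2.sub h3).const_mul (Real.sqrt Real.pi : ℂ))
  refine h.congr_deriv ?_
  have c1 : ∀ N : ℕ, (∑ k ∈ range N, da M L k z * ∑ l ∈ range (k+1), bb M L l w)
      - 2 * z * (∑ k ∈ range N, aa M L k z * ∑ l ∈ range (k+1), bb M L l w)
      = ∑ k ∈ range N, da M L k z * bb M L k w - da M L N z * ∑ l ∈ range N, bb M L l w := by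
    intro N
    induction N with
    | zero => simp
    | succ N ih =>
      rw [sum_range_succ, sum_range_succ (fun k => aa M L k z * ∑ l ∈ range (k+1), bb M L l w),
        sum_range_succ (fun k => da M L k z * bb M L k w), da_succ, sum_range_succ (fun l => bb M L l w)]
      linear_combination ih
  have c2 : ∀ m : ℕ, (∑ l ∈ range m, db M L l z) - 2 * z * ∑ l ∈ range m, bb M L l z
      = db M L 0 z - db M L m z := by
    intro m
    induction m with
    | zero => simp
    | succ m ih =>
      rw [sum_range_succ, sum_range_succ, db_succ]
      linear_combination ih
  have c3 : (∑ k ∈ range N, aa M L k w * ∑ l ∈ range (k+1), db M L l z)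
      - 2 * z * (∑ k ∈ range N, aa M L k w * ∑ l ∈ range (k+1), bb M L l z)
      = db M L 0 z * (∑ k ∈ range N, aa M L k w) - ∑ k ∈ range N, aa M L k w * db M L (k+1) z := by
    rw [mul_sum, mul_sum, ← sum_sub_distrib, ← sum_sub_distrib]
    refine sum_congr rfl fun k _ => ?_
    linear_combination aa M L k w * c2 (k+1)
  rw [sum_add_distrib]
  simp only [Pi.sub_apply]
  linear_combination Complex.exp (-z^2-w^2) * (Real.sqrt Real.pi : ℂ) * (c1 N - c3)

lemma dupl (j : ℕ) (x : ℝ) (hx : 2 * x = j + 1) :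
    Real.Gamma x * Real.Gamma (x + 1/2) * 2 ^ j = Real.sqrt Real.pi * (j.factorial : ℝ) := by
  rw [Real.Gamma_mul_Gamma_add_half, hx, Real.Gamma_nat_eq_factorial,
    show (1 - ((j:ℝ)+1)) = -(j:ℝ) by ring, Real.rpow_neg (by norm_num), Real.rpow_natCast]
  field_simp

lemma fact_step (M : ℕ) (L : ℝ) (hM : 2*L = (M : ℝ)) (k : ℕ) (z w : ℂ) (hM1 : 1 ≤ M) :
    (Real.sqrt Real.pi : ℂ) * (da M L k z * bb M L k w + aa M L k w * db M L (k+1) z)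
     = 2 * ((2*z*w)^(M+2*k) / ((M+2*k).factorial : ℂ) +
        (2*z*w)^(M+(2*k+1)) / ((M+(2*k+1)).factorial : ℂ)) := by
  have hL : 0 < L := by have : (1:ℝ) ≤ M := by exact_mod_cast hM1
                        linarith
  have d1 := dupl (M+2*k) (k+L+1/2) (by push_cast; linarith)
  have d2 := dupl (M+(2*k+1)) (k+L+1) (by push_cast; linarith)
  rw [show (k:ℝ)+L+1/2+1/2 = k+L+1 by ring] at d1
  rw [show (k:ℝ)+L+1+1/2 = k+L+3/2 by ring] at d2
  have d1' : ((Real.Gamma (k+L+1/2) : ℝ):ℂ) * ((Real.Gamma (k+L+1) : ℝ):ℂ) * 2^(M+2*k)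
    = (Real.sqrt Real.pi : ℂ) * ((M+2*k).factorial : ℂ) := by exact_mod_cast d1
  have d2' : ((Real.Gamma (k+L+1) : ℝ):ℂ) * ((Real.Gamma (k+L+3/2) : ℝ):ℂ) * 2^(M+(2*k+1))
    = (Real.sqrt Real.pi : ℂ) * ((M+(2*k+1)).factorial : ℂ) := by exact_mod_cast d2
  have g1 := gne (k+L+1/2) (by positivity)
  have g2 := gne (k+L+1) (by positivity)
  have g3 := gne (k+L+3/2) (by positivity)
  have f1 : ((M+2*k).factorial : ℂ) ≠ 0 := by exact_mod_cast Nat.factorial_ne_zero _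
  have f2 : ((M+(2*k+1)).factorial : ℂ) ≠ 0 := by exact_mod_cast Nat.factorial_ne_zero _
  have t1 : (Real.sqrt Real.pi : ℂ) * (da M L k z * bb M L k w)
      = 2 * ((2*z*w)^(M+2*k) / ((M+2*k).factorial : ℂ)) := by
    unfold da bb
    rw [mul_pow, mul_pow, show 2*k+M = M+2*k by ring]
    generalize ((Real.Gamma (k+L+1/2) : ℝ):ℂ) = G1 at *
    generalize ((Real.Gamma (k+L+1) : ℝ):ℂ) = G2 at *
    field_simp
    linear_combination -z^(M+2*k)*w^(M+2*k)*d1'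
  have t2 : (Real.sqrt Real.pi : ℂ) * (aa M L k w * db M L (k+1) z)
      = 2 * ((2*z*w)^(M+(2*k+1)) / ((M+(2*k+1)).factorial : ℂ)) := by
    rw [db_succ]
    unfold aa bb
    rw [mul_pow, mul_pow, show 2*k+M+1 = M+(2*k+1) by ring]
    have : z * z^(2*k+M) = z^(M+(2*k+1)) := by rw [← pow_succ']; ring_nf
    rw [← this]
    generalize ((Real.Gamma (k+L+3/2) : ℝ):ℂ) = G1 at *
    generalize ((Real.Gamma (k+L+1) : ℝ):ℂ) = G2 at *
    field_simp
    linear_combination -z*z^(2*k+M)*w^(M+(2*k+1))*d2'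
  rw [mul_add, t1, t2]; ring

lemma sum_pair (f : ℕ → ℂ) (N : ℕ) :
    ∑ k ∈ range N, (f (2*k) + f (2*k+1)) = ∑ j ∈ range (2*N), f j := by
  induction N with
  | zero => simp
  | succ N ih =>
    rw [sum_range_succ, ih, show 2*(N+1) = 2*N+1+1 by ring, sum_range_succ _ (2*N+1), sum_range_succ _ (2*N)]
    ring

lemma EE_deriv_Fo (M : ℕ) (L : ℝ) (hM : 2*L = (M : ℝ)) (hM1 : 1 ≤ M) (N : ℕ) (z w : ℂ) :
    deriv (fun z => EE M L N z w) z - Fo M L z w =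
      (-2 * Complex.exp (-(z-w)^2)) * ((2*z*w)^(M+2*N) * QQ (M+(2*N:ℕ)) (2*z*w))
      + ((Real.sqrt Real.pi : ℂ) * db M L 0 z * Complex.exp (-z^2)) *
          (w^(M+1+2*N) * QQ (L+1/2+N) (w^2))
      + (-Complex.exp (-z^2-w^2) * (Real.sqrt Real.pi : ℂ)) * ((∑ l ∈ range N, bb M L l w) * da M L N z) := by
  have hM1' : (1:ℝ) ≤ M := by exact_mod_cast hM1
  rw [(EE_deriv M L hM hM1 N z w).deriv]
  have s1 : (Real.sqrt Real.pi : ℂ) *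
      ∑ k ∈ range N, (da M L k z * bb M L k w + aa M L k w * db M L (k+1) z)
      = 2 * ∑ j ∈ range (2*N), (2*z*w)^(M+j) / ((M+j).factorial : ℂ) := by
    rw [mul_sum, ← sum_pair (fun j => (2*z*w)^(M+j) / ((M+j).factorial : ℂ)), mul_sum]
    exact sum_congr rfl fun k _ => fact_step M L hM k z w hM1
  have s2 : P2L M (2*z*w) = Complex.exp (-(2*z*w)) *
      (∑ j ∈ range (2*N), (2*z*w)^(M+j) / ((M+j).factorial : ℂ)) +
      (2*z*w)^(M+2*N) * QQ (M+(2*N:ℕ)) (2*z*w) := by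
    rw [P2L_eq M hM1, QQ_iter M hM1' _ (2*N), mul_add, mul_left_comm, mul_sum]
    congr 1
    · congr 1
      refine sum_congr rfl fun j _ => ?_
      rw [show (M:ℝ)+j+1 = ((M+j:ℕ):ℝ)+1 by push_cast; ring, Real.Gamma_nat_eq_factorial]
      push_cast
      rw [pow_add]; ring
    · rw [pow_add]; ring
  have s3 : PLhalf M L w = Complex.exp (-w^2) * (∑ k ∈ range N, aa M L k w) +
      w^(M+1+2*N) * QQ (L+1/2+N) (w^2) := by
    rw [PLhalf_eq, QQ_iter (L+1/2) (by linarith) _ N, mul_add, mul_left_comm, mul_sum]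
    congr 1
    · congr 1
      refine sum_congr rfl fun j _ => ?_
      unfold aa
      rw [show L+1/2+(j:ℝ)+1 = j+L+3/2 by ring, ← pow_mul]
      ring
    · rw [pow_add w (M+1), pow_mul]; ring
  have e1 : Complex.exp (-(z-w)^2) * Complex.exp (-(2*z*w)) = Complex.exp (-z^2-w^2) := by
    rw [← Complex.exp_add]; ring_nf
  have e2 : Complex.exp (-z^2) * Complex.exp (-w^2) = Complex.exp (-z^2-w^2) := by
    rw [← Complex.exp_add]; ring_nf
  have e3 : db M L 0 z = 2 * z^(M-1) / ((Real.Gamma L : ℝ):ℂ) := by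
    unfold db; simp
  unfold Fo
  rw [s2, s3, Complex.Gamma_ofReal, e3]
  rw [e3] at *
  linear_combination Complex.exp (-z^2-w^2) * s1
    - 2 * (∑ j ∈ range (2*N), (2*z*w)^(M+j) / ((M+j).factorial : ℂ)) * e1
    + 2 * (Real.sqrt Real.pi : ℂ) * z^(M-1) / ((Real.Gamma L : ℝ):ℂ) * (∑ k ∈ range N, aa M L k w) * e2

lemma summ2 (c : ℝ) (hc : 0 < c) (R : ℝ) (hR : 0 < R) (m : ℕ) :
    Summable fun k : ℕ => R ^ (2*k+m) / Real.Gamma (k + c) := by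
  refine ((summ c hc (R^2) (by positivity)).mul_left (R^m)).congr fun k => ?_
  rw [pow_add, pow_mul, add_comm c]; ring

lemma bbsum_UB (M : ℕ) (L : ℝ) (hL : 0 < L) :
    UB fun N _ w => ∑ l ∈ range N, bb M L l w := by
  intro R hR
  have hs := summ2 (L+1) (by positivity) R (by linarith) M
  have hp : ∀ k : ℕ, 0 < R ^ (2*k+M) / Real.Gamma (k + (L+1)) := fun k => by
    have : 0 < Real.Gamma (k + (L+1)) := Real.Gamma_pos_of_pos (by positivity)
    positivity
  refine ⟨∑' k : ℕ, R ^ (2*k+M) / Real.Gamma (k + (L+1)), hs.tsum_pos (fun k => (hp k).le) 0 (hp 0), ?_⟩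
  filter_upwards with N z w hz hw
  refine le_trans ?_ (hs.sum_le_tsum (range N) fun k _ => (hp k).le)
  refine norm_sum_le_of_le _ fun k _ => ?_
  unfold bb
  rw [norm_div, Complex.norm_real, Real.norm_of_nonneg (Real.Gamma_pos_of_pos (by positivity)).le,
    norm_pow, ← add_assoc (k:ℝ)]
  have : 0 < Real.Gamma (k + L+1) := Real.Gamma_pos_of_pos (by positivity)
  gcongr

lemma da_UZ (M : ℕ) (L : ℝ) (hL : 0 < L) : UZ fun N z _ => da M L N z := by
  apply UZ.of_bound
  intro R hR
  have hs := summ2 (L+1/2) (by positivity) R (by linarith) M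
  refine ⟨fun N => 2 * (R ^ (2*N+M) / Real.Gamma (N + (L+1/2))), ?_, ?_⟩
  · simpa using hs.tendsto_atTop_zero.const_mul 2
  filter_upwards with N z w hz hw
  unfold da
  have : 0 < Real.Gamma (N + L+1/2) := Real.Gamma_pos_of_pos (by positivity)
  rw [norm_div, Complex.norm_real, Real.norm_of_nonneg this.le,
    norm_mul, norm_pow, ← add_assoc (N:ℝ), mul_div_assoc]
  simp only [Complex.norm_ofNat]
  gcongr

lemma q1_UZ (M : ℕ) (hM1 : 1 ≤ M) :
    UZ fun N z w => (2*z*w)^(M+2*N) * QQ (M+(2*N:ℕ)) (2*z*w) := by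
  apply UZ.of_bound
  intro R hR
  have hM1' : (1:ℝ) ≤ M := by exact_mod_cast hM1
  have hs := summ M (by linarith) (2*R*R) (by positivity)
  have ht := (hs.tendsto_atTop_zero.comp (tendsto_id.const_mul_atTop' (show 0 < 2 by norm_num))).const_mul
    ((2*R*R)^M * Real.exp (2*R*R))
  refine ⟨_, by simpa using ht, ?_⟩
  filter_upwards with N z w hz hw
  have hn : ‖2*z*w‖ ≤ 2*R*R := by
    rw [norm_mul, norm_mul]; simp only [Complex.norm_ofNat]; gcongr
  have hG : 0 < Real.Gamma (M + (2*N:ℕ)) := Real.Gamma_pos_of_pos (by positivity)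
  have hq := QQ_bound (M + (2*N:ℕ)) (by push_cast; linarith [N.cast_nonneg (α := ℝ)]) (2*z*w)
  rw [norm_mul, norm_pow]
  calc _ ≤ (2*R*R)^(M+2*N) * (Real.exp (2*R*R) / Real.Gamma (M + (2*N:ℕ))) := by
        gcongr
        refine hq.trans ?_
        gcongr
    _ = _ := by
        rw [pow_add]; push_cast; ring

lemma q2_UZ (M : ℕ) (L : ℝ) (hL : 1/2 ≤ L) :
    UZ fun N _ w => w^(M+1+2*N) * QQ (L+1/2+N) (w^2) := by
  apply UZ.of_bound
  intro R hR
  have hs := summ (L+1/2) (by linarith) (R^2) (by positivity)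
  have ht := hs.tendsto_atTop_zero.const_mul (R^(M+1) * Real.exp (R^2))
  refine ⟨_, by simpa using ht, ?_⟩
  filter_upwards with N z w hz hw
  have hn : ‖w^2‖ ≤ R^2 := by rw [norm_pow]; gcongr
  have hG : 0 < Real.Gamma (L+1/2+N) := Real.Gamma_pos_of_pos (by positivity)
  have hq := QQ_bound (L+1/2+N) (by linarith [N.cast_nonneg (α := ℝ)]) (w^2)
  rw [norm_mul, norm_pow]
  calc _ ≤ R^(M+1+2*N) * (Real.exp (R^2) / Real.Gamma (L+1/2+N)) := by
        gcongr
        refine hq.trans ?_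
        gcongr
    _ = _ := by rw [pow_add, pow_mul]; ring

lemma EE_lim (M : ℕ) (L : ℝ) (hM : 2*L = (M : ℝ)) (hM1 : 1 ≤ M) :
    UZ fun N z w => deriv (fun z => EE M L N z w) z - Fo M L z w := by
  have hM1' : (1:ℝ) ≤ M := by exact_mod_cast hM1
  have hL : 1/2 ≤ L := by linarith
  refine UZ.congr (f := fun N z w =>
    (-2 * Complex.exp (-(z-w)^2)) * ((2*z*w)^(M+2*N) * QQ (M+(2*N:ℕ)) (2*z*w))
      + ((Real.sqrt Real.pi : ℂ) * db M L 0 z * Complex.exp (-z^2)) *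
          (w^(M+1+2*N) * QQ (L+1/2+N) (w^2))
      + (-Complex.exp (-z^2-w^2) * (Real.sqrt Real.pi : ℂ)) * ((∑ l ∈ range N, bb M L l w) * da M L N z))
    ?_ (fun R _ => Eventually.of_forall fun N z w _ _ => (EE_deriv_Fo M L hM hM1 N z w).symm)
  refine ((UB.mul_UZ (f := fun _ z w => -2 * Complex.exp (-(z-w)^2)) ?_ (q1_UZ M hM1)).add
    (UB.mul_UZ (f := fun _ z w => (Real.sqrt Real.pi : ℂ) * db M L 0 z * Complex.exp (-z^2)) ?_
      (q2_UZ M L hL))).add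
    (UB.mul_UZ (f := fun _ z w => -Complex.exp (-z^2-w^2) * (Real.sqrt Real.pi : ℂ)) ?_
      ((bbsum_UB M L (by linarith)).mul_UZ (da_UZ M L (by linarith))))
  · exact UB.of_cont (f := fun z w => -2 * Complex.exp (-(z-w)^2)) (by fun_prop)
  · exact UB.of_cont (f := fun z w => (Real.sqrt Real.pi : ℂ) * db M L 0 z * Complex.exp (-z^2))
      (by unfold db; fun_prop)
  · exact UB.of_cont (f := fun z w => -Complex.exp (-z^2-w^2) * (Real.sqrt Real.pi : ℂ)) (by fun_prop)

/-! ### The finite-`N` kernel -/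

def rr (M : ℕ) (n a : ℝ) : ℝ := ∏ j ∈ range (M+2), (2*n+j)/(2*a)
def AA (n a : ℝ) (k : ℕ) : ℝ := ∏ j ∈ range k, (n-1-j)/a
def BB (n a : ℝ) (l : ℕ) : ℝ := ∏ j ∈ range l, (n-1/2-j)/a

lemma Gamma_up (x : ℝ) (hx : 0 < x) (m : ℕ) :
    Real.Gamma (x+m) = Real.Gamma x * ∏ j ∈ range m, (x+j) := by
  induction m with
  | zero => simp
  | succ m ih =>
    rw [prod_range_succ, ← mul_assoc, ← ih, mul_comm, ← Real.Gamma_add_one (by positivity)]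
    push_cast; ring_nf

lemma Gamma_down (x : ℝ) (m : ℕ) (hx : (m:ℝ) < x) :
    Real.Gamma x = Real.Gamma (x-m) * ∏ j ∈ range m, (x-1-j) := by
  induction m with
  | zero => simp
  | succ m ih =>
    push_cast at hx
    rw [prod_range_succ, ih (by linarith),
      show x - (m:ℝ) = (x - ((m+1:ℕ):ℝ)) + 1 by push_cast; ring,
      Real.Gamma_add_one (by push_cast; linarith)]
    push_cast; ring

lemma coef (M : ℕ) (L : ℝ) (hM : 2*L = (M : ℝ)) (n : ℝ) (k l : ℕ) (hk : (k:ℝ) < n) (hl : l ≤ k) :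
    (Real.pi * Real.Gamma (2*n+2*L+2) / 2 ^ (2*n+2*L+1)) /
      (Real.Gamma (k+L+3/2) * Real.Gamma (n-k) * Real.Gamma (n-l+1/2) * Real.Gamma (l+L+1))
    = Real.sqrt Real.pi * (rr M n (n+L) * AA n (n+L) k * BB n (n+L) l) * (n+L)^(k+l+M+2)
      / (Real.Gamma (k+L+3/2) * Real.Gamma (l+L+1)) := by
  have hL : 0 ≤ L := by have : (0:ℝ) ≤ M := M.cast_nonneg
                        linarith
  have hk0 : (0:ℝ) ≤ k := k.cast_nonneg
  have hlk : (l:ℝ) ≤ k := by exact_mod_cast hl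
  have hn : 0 < n := by linarith
  have ha : 0 < n + L := by linarith
  have h1 : Real.Gamma (2*n+2*L+2) = Real.Gamma (2*n) * ∏ j ∈ range (M+2), (2*n+j) := by
    rw [← Gamma_up _ (by linarith)]; push_cast; rw [hM]; ring_nf
  have h2 := Gamma_down n k hk
  have h3 : Real.Gamma (n+1/2) = Real.Gamma (n-l+1/2) * ∏ j ∈ range l, (n-1/2-j) := by
    rw [Gamma_down (n+1/2) l (by linarith)]
    congr 1
    · ring_nf
    · refine prod_congr rfl fun j _ => ?_
      ring
  have h4 := Real.Gamma_mul_Gamma_add_half n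
  have hp2 : (2:ℝ) ^ (1-2*n) * 2^(2*n+2*L+1) = 2^(M+2) := by
    rw [← Real.rpow_add (by norm_num), ← Real.rpow_natCast]
    congr 1; push_cast; rw [← hM]; ring
  have e1 : rr M n (n+L) * (2*(n+L))^(M+2) = ∏ j ∈ range (M+2), (2*n+j) := by
    unfold rr; rw [prod_div_distrib, prod_const, card_range]; field_simp
  have e2 : AA n (n+L) k * (n+L)^k = ∏ j ∈ range k, (n-1-j) := by
    unfold AA; rw [prod_div_distrib, prod_const, card_range]; field_simp
  have e3 : BB n (n+L) l * (n+L)^l = ∏ j ∈ range l, (n-1/2-j) := by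
    unfold BB; rw [prod_div_distrib, prod_const, card_range]; field_simp
  rw [← e1] at h1
  rw [← e2] at h2
  rw [← e3] at h3
  rw [h2, h3] at h4
  have g1 : 0 < Real.Gamma (n-k) := Real.Gamma_pos_of_pos (by linarith)
  have g2 : 0 < Real.Gamma (n-l+1/2) := Real.Gamma_pos_of_pos (by linarith)
  have g3 : 0 < Real.Gamma (k+L+3/2) := Real.Gamma_pos_of_pos (by positivity)
  have g4 : 0 < Real.Gamma (l+L+1) := Real.Gamma_pos_of_pos (by positivity)
  have hT : 0 < (2:ℝ)^(2*n+2*L+1) := by positivity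
  have hpi : Real.sqrt Real.pi * Real.sqrt Real.pi = Real.pi := Real.mul_self_sqrt Real.pi_pos.le
  have hs : 0 < Real.sqrt Real.pi := Real.sqrt_pos.2 Real.pi_pos
  rw [h1]
  generalize Real.Gamma (n-k) = G1 at *
  generalize Real.Gamma (n-l+1/2) = G2 at *
  generalize Real.Gamma (k+L+3/2) = G3 at *
  generalize Real.Gamma (l+L+1) = G4 at *
  generalize Real.Gamma (2*n) = G5 at *
  generalize (2:ℝ)^(2*n+2*L+1) = T at *
  generalize (2:ℝ)^(1-2*n) = T' at *
  generalize Real.sqrt Real.pi = s at *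
  generalize rr M n (n+L) = r at *
  generalize AA n (n+L) k = A at *
  generalize BB n (n+L) l = B at *
  generalize n + L = a at *
  rw [div_div, div_eq_div_iff (by positivity) (by positivity)]
  have key : s * G5 * r * (2*a)^(M+2) = r * A * B * a^(k+l+M+2) * (T * G1 * G2) := by
    have : G1 * G2 * (A * B * a^k * a^l) * T = G5 * s * 2^(M+2) := by
      rw [← hp2]; linear_combination T * h4
    rw [mul_pow]
    have hpw : a^(k+l+M+2) = a^k*a^l*a^(M+2) := by ring
    rw [hpw]
    linear_combination -r * a^(M+2) * this
  linear_combination s * G3 * G4 * key - G5*(r*(2*a)^(M+2))*G3*G4*hpi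

lemma GK_eq_s5 (M : ℕ) (L : ℝ) (hM : 2*L = (M : ℝ)) (N : ℕ) (n s : ℝ) (hs : 0 < s)
    (hsa : s^2 = n+L) (hN : (N:ℝ) ≤ n) (z w : ℂ) :
    (((n+L) ^ (-(3/2) : ℝ) : ℝ) : ℂ) * GK N n L (z/(s:ℂ)) (w/(s:ℂ))
      = (Real.sqrt Real.pi : ℂ) * ∑ k ∈ range N, ∑ l ∈ range (k+1),
        ((rr M n (n+L) * AA n (n+L) k * BB n (n+L) l : ℝ) : ℂ) * (aa M L k z * bb M L l w) := by
  have hs0 : (s:ℂ) ≠ 0 := by exact_mod_cast hs.ne'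
  have h32 : (((n+L) ^ (-(3/2) : ℝ) : ℝ) : ℂ) = 1 / (s:ℂ)^3 := by
    have : (n+L) ^ (-(3/2) : ℝ) = 1 / s^3 := by
      rw [← hsa, ← Real.rpow_natCast s 2, ← Real.rpow_mul hs.le, one_div, ← Real.rpow_natCast s 3,
        ← Real.rpow_neg hs.le]
      norm_num
    rw [this]; push_cast; rfl
  have hL : 0 ≤ L := by have : (0:ℝ) ≤ M := M.cast_nonneg
                        linarith
  unfold GK
  rw [h32, mul_sum, mul_sum, mul_sum]
  refine sum_congr rfl fun k hk => ?_
  rw [mul_sum, mul_sum, mul_sum]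
  refine sum_congr rfl fun l hl => ?_
  have hkN : (k:ℝ) < n := lt_of_lt_of_le (by exact_mod_cast mem_range.1 hk) hN
  have hc := coef M L hM n k l hkN (Nat.lt_succ_iff.1 (mem_range.1 hl))
  have p1 : (z/(s:ℂ)) ^ ((2*k+2*L+1 : ℝ) : ℂ) = (z/(s:ℂ)) ^ (2*k+M+1) := by
    rw [← Complex.cpow_natCast, hM]; push_cast; rfl
  have p2 : (w/(s:ℂ)) ^ ((2*l+2*L : ℝ) : ℂ) = (w/(s:ℂ)) ^ (2*l+M) := by
    rw [← Complex.cpow_natCast, hM]; push_cast; rfl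
  have p3 : (2:ℂ) ^ ((2*n+2*L+1 : ℝ) : ℂ) = (((2:ℝ) ^ (2*n+2*L+1) : ℝ) : ℂ) := by
    rw [Complex.ofReal_cpow (by norm_num)]; simp
  rw [p1, p2, p3, Complex.Gamma_ofReal, Complex.Gamma_ofReal, Complex.Gamma_ofReal,
    Complex.Gamma_ofReal, Complex.Gamma_ofReal]
  have hc' := congrArg (fun x : ℝ => (x:ℂ)) hc
  simp only [Complex.ofReal_div, Complex.ofReal_mul, Complex.ofReal_pow] at hc'
  rw [← hsa] at hc' ⊢
  unfold aa bb
  have g3 := gne (k+L+3/2) (by positivity)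
  have g4 := gne (l+L+1) (by positivity)
  simp only [Complex.ofReal_mul, Complex.ofReal_pow] at hc' ⊢
  have hpw : (s:ℂ)^3 * ((s:ℂ)^(2*k+M+1) * (s:ℂ)^(2*l+M)) = ((s:ℂ)^2)^(k+l+M+2) := by
    rw [← pow_add, ← pow_add, ← pow_mul]; ring_nf
  rw [div_pow, div_pow]
  calc _ = ((Real.pi:ℂ) * ((Real.Gamma (2*n+2*L+2) : ℝ):ℂ) / (((2:ℝ) ^ (2*n+2*L+1) : ℝ) : ℂ) /
      (((Real.Gamma (k+L+3/2) : ℝ):ℂ) * ((Real.Gamma (n-k) : ℝ):ℂ) * ((Real.Gamma (n-l+1/2) : ℝ):ℂ)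
        * ((Real.Gamma (l+L+1) : ℝ):ℂ))) * (z^(2*k+M+1) * w^(2*l+M)) /
          ((s:ℂ)^3 * ((s:ℂ)^(2*k+M+1) * (s:ℂ)^(2*l+M))) := by
        simp only [div_eq_mul_inv, mul_inv, one_mul]; ring
    _ = _ := by
        rw [hc', hpw]
        generalize ((Real.Gamma (k+L+3/2) : ℝ):ℂ) = G3 at *
        generalize ((Real.Gamma (l+L+1) : ℝ):ℂ) = G4 at *
        have : ((s:ℂ)^2)^(k+l+M+2) ≠ 0 := by positivity
        generalize ((s:ℂ)^2)^(k+l+M+2) = S at *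
        field_simp

def HH (M : ℕ) (L : ℝ) (N : ℕ) (n : ℝ) (z w : ℂ) : ℂ :=
  (Real.sqrt Real.pi : ℂ) * (∑ k ∈ range N, ∑ l ∈ range (k+1),
        ((rr M n (n+L) * AA n (n+L) k * BB n (n+L) l : ℝ) : ℂ) * (aa M L k z * bb M L l w)
    - ∑ k ∈ range N, ∑ l ∈ range (k+1),
        ((rr M n (n+L) * AA n (n+L) k * BB n (n+L) l : ℝ) : ℂ) * (aa M L k w * bb M L l z))

lemma resc_eq (M : ℕ) (L : ℝ) (hM : 2*L = (M : ℝ)) (N : ℕ) (hN1 : 1 ≤ N) (n : ℝ)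
    (hN : (N:ℝ) ≤ n) (z w : ℂ) :
    resc N n L 0 z w = ((1 + z^2/((n+L:ℝ):ℂ)) * (1 + w^2/((n+L:ℝ):ℂ))) ^ ((-((n+L)-1/2) : ℝ) : ℂ)
      * HH M L N n z w := by
  have hL : 0 ≤ L := by have : (0:ℝ) ≤ M := M.cast_nonneg
                        linarith
  have hN0 : (1:ℝ) ≤ N := by exact_mod_cast hN1
  have ha : 0 < n + L := by linarith
  have hd : N * dlt N n L 0 = n + L := by
    unfold dlt; norm_num; field_simp
  unfold resc sc KK
  rw [hd]
  set s := Real.sqrt (n+L) with hs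
  have hs0 : 0 < s := Real.sqrt_pos.2 ha
  have hs2 : s^2 = n+L := Real.sq_sqrt ha.le
  have hs2' : (s:ℂ)^2 = ((n+L:ℝ):ℂ) := by rw [← hs2]; push_cast; rfl
  simp only [Complex.ofReal_zero, zero_add, div_pow, hs2']
  have g1 := GK_eq_s5 M L hM N n s hs0 hs2 hN z w
  have g2 := GK_eq_s5 M L hM N n s hs0 hs2 hN w z
  unfold HH
  rw [mul_sub (Real.sqrt Real.pi : ℂ), ← g1, ← g2]
  norm_num
  ring

lemma AA_mem (n a : ℝ) (k : ℕ) (hk : (k:ℝ) ≤ n) (ha : 0 < a) (hna : n ≤ a) :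
    0 ≤ AA n a k ∧ AA n a k ≤ 1 := by
  have h : ∀ j ∈ range k, 0 ≤ (n-1-j)/a ∧ (n-1-j)/a ≤ 1 := by
    intro j hj
    have : (j:ℝ)+1 ≤ k := by exact_mod_cast mem_range.1 hj
    have : (0:ℝ) ≤ j := j.cast_nonneg
    exact ⟨div_nonneg (by linarith) ha.le, by rw [div_le_one ha]; linarith⟩
  exact ⟨prod_nonneg fun j hj => (h j hj).1, prod_le_one (fun j hj => (h j hj).1) fun j hj => (h j hj).2⟩

lemma BB_mem (n a : ℝ) (k : ℕ) (hk : (k:ℝ) ≤ n) (ha : 0 < a) (hna : n ≤ a) :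
    0 ≤ BB n a k ∧ BB n a k ≤ 1 := by
  have h : ∀ j ∈ range k, 0 ≤ (n-1/2-j)/a ∧ (n-1/2-j)/a ≤ 1 := by
    intro j hj
    have : (j:ℝ)+1 ≤ k := by exact_mod_cast mem_range.1 hj
    have : (0:ℝ) ≤ j := j.cast_nonneg
    exact ⟨div_nonneg (by linarith) ha.le, by rw [div_le_one ha]; linarith⟩
  exact ⟨prod_nonneg fun j hj => (h j hj).1, prod_le_one (fun j hj => (h j hj).1) fun j hj => (h j hj).2⟩

lemma lin_lim (c d : ℝ) : Tendsto (fun x : ℝ => (x + c)/(x+d)) atTop (nhds 1) := by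
  have h : Tendsto (fun x : ℝ => 1 + (c-d)/(x+d)) atTop (nhds (1+0)) :=
    tendsto_const_nhds.add (Tendsto.div_atTop tendsto_const_nhds
      (tendsto_atTop_add_const_right _ _ tendsto_id))
  rw [add_zero] at h
  refine h.congr' ?_
  filter_upwards [eventually_gt_atTop (-d)] with x hx
  have : x + d ≠ 0 := by linarith
  field_simp; ring

lemma rr_lim (M : ℕ) (L : ℝ) : Tendsto (fun n : ℝ => rr M n (n+L)) atTop (nhds 1) := by
  unfold rr
  have := tendsto_finsetProd (range (M+2)) (f := fun (j:ℕ) (n:ℝ) => (2*n+(j:ℝ))/(2*(n+L)))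
    (a := fun _ => (1:ℝ)) (x := atTop) fun j _ => by
      refine (lin_lim ((j:ℝ)/2) L).congr fun x => ?_
      rw [← mul_div_mul_left (x+(j:ℝ)/2) (x+L) (two_ne_zero)]
      ring_nf
  simpa using this

lemma AA_lim (L : ℝ) (k : ℕ) : Tendsto (fun n : ℝ => AA n (n+L) k) atTop (nhds 1) := by
  unfold AA
  have := tendsto_finsetProd (range k) (f := fun (j:ℕ) (n:ℝ) => (n-1-(j:ℝ))/(n+L))
    (a := fun _ => (1:ℝ)) (x := atTop) fun j _ => by
      refine (lin_lim (-1-(j:ℝ)) L).congr fun x => ?_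
      ring_nf
  simpa using this

lemma BB_lim (L : ℝ) (k : ℕ) : Tendsto (fun n : ℝ => BB n (n+L) k) atTop (nhds 1) := by
  unfold BB
  have := tendsto_finsetProd (range k) (f := fun (j:ℕ) (n:ℝ) => (n-1/2-(j:ℝ))/(n+L))
    (a := fun _ => (1:ℝ)) (x := atTop) fun j _ => by
      refine (lin_lim (-1/2-(j:ℝ)) L).congr fun x => ?_
      ring_nf
  simpa using this

/-- dominating double sequence -/
def dom (M : ℕ) (L R : ℝ) (p : ℕ × ℕ) : ℝ :=
  (R ^ (2*p.1+(M+1)) / Real.Gamma (p.1 + (L+3/2))) * (R ^ (2*p.2+M) / Real.Gamma (p.2 + (L+1)))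

lemma dom_pos (M : ℕ) (L R : ℝ) (hL : 0 < L) (hR : 1 ≤ R) (p : ℕ × ℕ) : 0 < dom M L R p := by
  have h1 : 0 < Real.Gamma (p.1 + (L+3/2)) := Real.Gamma_pos_of_pos (by positivity)
  have h2 : 0 < Real.Gamma (p.2 + (L+1)) := Real.Gamma_pos_of_pos (by positivity)
  unfold dom
  positivity

lemma dom_summable (M : ℕ) (L R : ℝ) (hL : 0 < L) (hR : 1 ≤ R) : Summable (dom M L R) := by
  apply Summable.mul_of_nonneg (summ2 (L+3/2) (by positivity) R (by linarith) (M+1))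
    (summ2 (L+1) (by positivity) R (by linarith) M)
  · intro k
    have h1 : 0 < Real.Gamma (k + (L+3/2)) := Real.Gamma_pos_of_pos (by positivity)
    simp only [Pi.zero_apply]; positivity
  · intro k
    have h1 : 0 < Real.Gamma (k + (L+1)) := Real.Gamma_pos_of_pos (by positivity)
    simp only [Pi.zero_apply]; positivity

lemma aabb_le (M : ℕ) (L R : ℝ) (hL : 0 < L) (k l : ℕ) (z w : ℂ)
    (hz : ‖z‖ ≤ R) (hw : ‖w‖ ≤ R) : ‖aa M L k z * bb M L l w‖ ≤ dom M L R (k,l) := by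
  have h1 : 0 < Real.Gamma (k + (L+3/2)) := Real.Gamma_pos_of_pos (by positivity)
  have h2 : 0 < Real.Gamma (l + (L+1)) := Real.Gamma_pos_of_pos (by positivity)
  have hR : 0 ≤ R := (norm_nonneg z).trans hz
  unfold aa bb dom
  rw [add_assoc (k:ℝ), add_assoc (l:ℝ), add_assoc (2*k) M]
  rw [norm_mul, norm_div, norm_div, Complex.norm_real, Complex.norm_real, Real.norm_of_nonneg h1.le,
    Real.norm_of_nonneg h2.le, norm_pow, norm_pow]
  gcongr

/-- generic bound of triangular sums by square sums -/
lemma tri_le (M : ℕ) (L R : ℝ) (hL : 0 < L) (hR : 1 ≤ R) (N : ℕ) (x : ℕ → ℕ → ℂ)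
    (z w : ℂ) (hz : ‖z‖ ≤ R) (hw : ‖w‖ ≤ R) :
    ‖∑ k ∈ range N, ∑ l ∈ range (k+1), x k l * (aa M L k z * bb M L l w)‖
      ≤ ∑ p ∈ range N ×ˢ range N, ‖x p.1 p.2‖ * dom M L R p := by
  rw [sum_product]
  refine norm_sum_le_of_le _ fun k hk => ?_
  refine (norm_sum_le _ _).trans ?_
  have hsub : range (k+1) ⊆ range N := range_subset_range.2 (mem_range.1 hk)
  refine (sum_le_sum_of_subset_of_nonneg hsub fun _ _ _ => norm_nonneg _).trans ?_
  refine sum_le_sum fun l _ => ?_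
  rw [norm_mul]
  gcongr
  exact aabb_le M L R hL k l z w hz hw

lemma HH_EE (M : ℕ) (L : ℝ) (hL : 0 < L) (n : ℕ → ℝ) (hn : ∀ N : ℕ, (N:ℝ) ≤ n N) :
    UZ fun N z w => HH M L N (n N) z w - ((Real.sqrt Real.pi : ℂ) *
      (∑ k ∈ range N, aa M L k z * ∑ l ∈ range (k+1), bb M L l w
      - ∑ k ∈ range N, aa M L k w * ∑ l ∈ range (k+1), bb M L l z)) := by
  apply UZ.of_bound
  intro R hR
  have hnt : Tendsto n atTop atTop := tendsto_atTop_mono hn tendsto_natCast_atTop_atTop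
  let x : ℕ → ℕ × ℕ → ℝ := fun N p => rr M (n N) (n N+L) * AA (n N) (n N+L) p.1 * BB (n N) (n N+L) p.2 - 1
  let f : ℕ → ℕ × ℕ → ℝ := fun N p => if p ∈ range N ×ˢ range N then ‖x N p‖ * dom M L R p else 0
  have hxl : ∀ p, Tendsto (fun N => x N p) atTop (nhds 0) := by
    intro p
    have := ((((rr_lim M L).comp hnt).mul ((AA_lim L p.1).comp hnt)).mul
      ((BB_lim L p.2).comp hnt)).sub_const 1
    simpa [x] using this
  have hf0 : ∀ N p, 0 ≤ f N p := by
    intro N p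
    simp only [f]
    split_ifs
    · exact mul_nonneg (norm_nonneg _) (dom_pos M L R hL hR p).le
    · exact le_rfl
  have hr : ∀ᶠ N in atTop, |rr M (n N) (n N+L)| ≤ 2 := by
    have := ((rr_lim M L).comp hnt).abs
    rw [abs_one] at this
    exact this.eventually (ge_mem_nhds (by norm_num))
  have hT := tendsto_tsum_of_dominated_convergence (f := f) (g := fun _ => (0:ℝ)) (𝓕 := atTop)
    (bound := fun p => 3 * dom M L R p) ((dom_summable M L R hL hR).mul_left 3) ?_ ?_
  · refine ⟨fun N => ‖(Real.sqrt Real.pi : ℂ)‖ * (2 * ∑' p, f N p), ?_, ?_⟩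
    · simp only [tsum_zero] at hT
      simpa using (hT.const_mul 2).const_mul ‖(Real.sqrt Real.pi : ℂ)‖
    · filter_upwards with N z w hz hw
      have key : ∀ z w : ℂ, ‖z‖ ≤ R → ‖w‖ ≤ R →
          ‖∑ k ∈ range N, ∑ l ∈ range (k+1), ((x N (k,l) : ℝ):ℂ) * (aa M L k z * bb M L l w)‖ ≤ ∑' p, f N p := by
        intro z w hz hw
        refine (tri_le M L R hL hR N (fun k l => ((x N (k,l) : ℝ):ℂ)) z w hz hw).trans ?_
        rw [tsum_eq_sum (s := range N ×ˢ range N) (fun p hp => by simp only [f, if_neg hp])]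
        refine (sum_congr rfl fun p hp => ?_).le
        simp only [f, if_pos hp, Complex.norm_real]
      have dec : ∀ z w : ℂ, (∑ k ∈ range N, ∑ l ∈ range (k+1), ((x N (k,l) : ℝ):ℂ) * (aa M L k z * bb M L l w))
          = (∑ k ∈ range N, ∑ l ∈ range (k+1),
        ((rr M (n N) (n N+L) * AA (n N) (n N+L) k * BB (n N) (n N+L) l : ℝ) : ℂ) * (aa M L k z * bb M L l w))
          - ∑ k ∈ range N, aa M L k z * ∑ l ∈ range (k+1), bb M L l w := by
        intro z w
        rw [← sum_sub_distrib]
        refine sum_congr rfl fun k _ => ?_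
        rw [mul_sum, ← sum_sub_distrib]
        refine sum_congr rfl fun l _ => ?_
        simp only [x]; push_cast; ring
      have := norm_sub_le
        (∑ k ∈ range N, ∑ l ∈ range (k+1), ((x N (k,l) : ℝ):ℂ) * (aa M L k z * bb M L l w))
        (∑ k ∈ range N, ∑ l ∈ range (k+1), ((x N (k,l) : ℝ):ℂ) * (aa M L k w * bb M L l z))
      have k1 := key z w hz hw
      have k2 := key w z hw hz
      unfold HH
      rw [← mul_sub, norm_mul]
      gcongr
      rw [show ∀ a b c d : ℂ, a - b - (c - d) = (a - c) - (b - d) by intros; ring, ← dec z w, ← dec w z]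
      linarith
  · intro p
    have h1 := ((hxl p).norm).mul_const (dom M L R p)
    rw [norm_zero, zero_mul] at h1
    refine squeeze_zero (fun N => hf0 N p) (fun N => ?_) h1
    simp only [f]
    split_ifs
    · exact le_rfl
    · exact mul_nonneg (norm_nonneg _) (dom_pos M L R hL hR p).le
  · filter_upwards [hr] with N hN p
    rw [Real.norm_of_nonneg (hf0 N p)]
    have hd := (dom_pos M L R hL hR p)
    simp only [f]
    split_ifs with hp
    · rw [mem_product, mem_range, mem_range] at hp
      have q1 : (p.1:ℝ) + 1 ≤ N := by exact_mod_cast hp.1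
      have q2 : (p.2:ℝ) + 1 ≤ N := by exact_mod_cast hp.2
      have q3 := hn N
      have q4 : (0:ℝ) ≤ p.1 := p.1.cast_nonneg
      have hA := AA_mem (n N) (n N+L) p.1 (by linarith) (by linarith) (by linarith)
      have hB := BB_mem (n N) (n N+L) p.2 (by linarith) (by linarith) (by linarith)
      gcongr
      simp only [x]
      refine (norm_sub_le _ _).trans ?_
      rw [norm_mul, norm_mul, Real.norm_eq_abs, Real.norm_of_nonneg hA.1, Real.norm_of_nonneg hB.1, norm_one]
      have : |rr M (n N) (n N+L)| * AA (n N) (n N+L) p.1 * BB (n N) (n N+L) p.2 ≤ 2 * 1 * 1 := by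
        have := hA.1
        have := hB.1
        gcongr
        · exact hA.2
        · exact hB.2
      linarith
    · positivity

lemma trunc_UB (M : ℕ) (L : ℝ) (hL : 0 < L) :
    UB fun N z w => ((Real.sqrt Real.pi : ℂ) *
      (∑ k ∈ range N, aa M L k z * ∑ l ∈ range (k+1), bb M L l w
      - ∑ k ∈ range N, aa M L k w * ∑ l ∈ range (k+1), bb M L l z)) := by
  intro R hR
  have hs := dom_summable M L R hL hR
  have hp := dom_pos M L R hL hR
  have hT : 0 < ∑' p, dom M L R p := hs.tsum_pos (fun p => (hp p).le) (0,0) (hp _)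
  have hpi : 0 < Real.sqrt Real.pi := Real.sqrt_pos.2 Real.pi_pos
  refine ⟨Real.sqrt Real.pi * (2 * ∑' p, dom M L R p), by positivity, ?_⟩
  filter_upwards with N z w hz hw
  have key : ∀ z w : ℂ, ‖z‖ ≤ R → ‖w‖ ≤ R →
      ‖∑ k ∈ range N, aa M L k z * ∑ l ∈ range (k+1), bb M L l w‖ ≤ ∑' p, dom M L R p := by
    intro z w hz hw
    have h := tri_le M L R hL hR N (fun _ _ => 1) z w hz hw
    simp only [one_mul, norm_one, ← mul_sum] at h
    exact h.trans (hs.sum_le_tsum _ fun p _ => (hp p).le)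
  rw [norm_mul, Complex.norm_real, Real.norm_of_nonneg hpi.le]
  gcongr
  refine (norm_sub_le _ _).trans ?_
  linarith [key z w hz hw, key w z hw hz]

lemma aa_diff (M : ℕ) (L : ℝ) (k : ℕ) : Differentiable ℂ (aa M L k) := by
  unfold aa; fun_prop

lemma bb_diff (M : ℕ) (L : ℝ) (k : ℕ) : Differentiable ℂ (bb M L k) := by
  unfold bb; fun_prop

lemma HH_diff (M : ℕ) (L : ℝ) (N : ℕ) (n : ℝ) (w : ℂ) : Differentiable ℂ fun z => HH M L N n z w := by
  have h1 := aa_diff M L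
  have h2 := bb_diff M L
  unfold HH
  fun_prop

theorem main_UZ (b L : ℝ) (hb : 0 < b) (M : ℕ) (hM : 2*L = (M : ℝ)) (hM1 : 1 ≤ M) :
    UZ fun N z w => deriv (fun z => resc N ((b+1)*N) L 0 z w) z - Fo M L z w := by
  have hM1' : (1:ℝ) ≤ M := by exact_mod_cast hM1
  have hL : 0 < L := by linarith
  have hn : ∀ N : ℕ, (N:ℝ) ≤ (b+1)*N := fun N => by nlinarith [N.cast_nonneg (α := ℝ)]
  set pf : ℕ → ℂ → ℂ → ℂ := fun N z w =>
    ((1 + z^2/(((b+1)*N+L:ℝ):ℂ)) * (1 + w^2/(((b+1)*N+L:ℝ):ℂ))) ^ ((-(((b+1)*N+L)-1/2) : ℝ) : ℂ) with hpf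
  have hat : Tendsto (fun N : ℕ => (b+1)*(N:ℝ)+L) atTop atTop :=
    tendsto_atTop_add_const_right _ _ (tendsto_atTop_mono hn tendsto_natCast_atTop_atTop)
  have hre : ∀ N : ℕ, 1 ≤ N → ∀ z w, resc N ((b+1)*N) L 0 z w = pf N z w * HH M L N ((b+1)*N) z w :=
    fun N h z w => resc_eq M L hM N h _ (hn N) z w
  have hp : UZ fun N z w => pf N z w - Complex.exp (-z^2-w^2) := by
    apply UZ.of_bound
    intro R hR
    refine ⟨fun N => Real.exp (2*R^2) * (100 * R^8 / ((b+1)*(N:ℝ)+L)), ?_, ?_⟩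
    · simpa using (Tendsto.div_atTop tendsto_const_nhds hat).const_mul (Real.exp (2*R^2))
    · filter_upwards [hat.eventually (eventually_ge_atTop (400*R^8))] with N hN z w hz hw
      exact (pref_bound R _ hR hN z w hz hw).1
  have hdr : ∀ R : ℝ, 1 ≤ R → ∀ᶠ N : ℕ in atTop, ∀ z w : ℂ, ‖z‖ ≤ R → ‖w‖ ≤ R →
      DifferentiableAt ℂ (fun z => resc N ((b+1)*N) L 0 z w) z := by
    intro R hR
    filter_upwards [hat.eventually (eventually_ge_atTop (400*R^8)), eventually_ge_atTop 1] with N hN hN1 z w hz hw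
    have hsl := (pref_bound R _ hR hN z w hz hw).2
    simp_rw [hre N hN1]
    refine DifferentiableAt.mul ?_ (HH_diff M L N _ w z)
    simp only [hpf]
    exact DifferentiableAt.cpow (by fun_prop) (by fun_prop) hsl
  have hEd : ∀ N z w, DifferentiableAt ℂ (fun z => EE M L N z w) z :=
    fun N z w => (EE_deriv M L hM hM1 N z w).differentiableAt
  have hexp : UB fun _ z w => Complex.exp (-z^2-w^2) :=
    UB.of_cont (f := fun z w => Complex.exp (-z^2-w^2)) (by fun_prop)
  have hHE := HH_EE M L hL (fun N => (b+1)*N) hn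
  have htr := trunc_UB M L hL
  have hHB : UB fun N z w => HH M L N ((b+1)*N) z w := by
    have := hHE.UB.add htr
    simpa using this
  have hdiff : UZ fun N z w => resc N ((b+1)*N) L 0 z w - EE M L N z w := by
    refine ((hHB.mul_UZ hp).add (hexp.mul_UZ hHE)).congr fun R hR => ?_
    filter_upwards [eventually_ge_atTop 1] with N hN1 z w hz hw
    rw [hre N hN1]
    unfold EE
    ring
  have hder := hdiff.deriv (fun R hR => by
    filter_upwards [hdr R hR] with N h z w hz hw
    exact (h z w hz hw).sub (hEd N z w))
  refine (hder.add (EE_lim M L hM hM1)).congr fun R hR => ?_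
  filter_upwards [hdr R hR] with N h z w hz hw
  rw [deriv_fun_sub (h z w hz hw) (hEd N z w)]
  ring

/-- Proposition 2.2(c): large-`N` expansion of the Christoffel–Darboux
identity at the singular origin (zooming point `p = 0`, `2L = M` a positive integer). -/
theorem CD_asymptotics_origin (b L : ℝ) (hb : 0 < b) (M : ℕ) (hM : 2*L = (M : ℝ))
    (hM1 : 1 ≤ M) (K : Set (ℂ × ℂ)) (hK : IsCompact K) :
    TendstoUniformlyOn
      (fun (N : ℕ) (q : ℂ × ℂ) => deriv (fun z => resc N ((b+1)*N) L 0 z q.2) q.1)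
      (fun q => Fo M L q.1 q.2) (atTop ⊓ 𝓟 (Ssing b)) K := by

  rw [Metric.tendstoUniformlyOn_iff]
  intro ε he
  obtain ⟨R, hR⟩ := hK.isBounded.exists_norm_le
  have h := main_UZ b L hb M hM hM1 (max R 1) (le_max_right _ _) (ε/2) (by positivity)
  refine Filter.Eventually.filter_mono inf_le_left ?_
  filter_upwards [h] with N hN q hq
  have h1 := hR q hq
  have h2 := hN q.1 q.2 (((norm_fst_le q).trans h1).trans (le_max_left _ _))
    (((norm_snd_le q).trans h1).trans (le_max_left _ _))
  rw [dist_comm, dist_eq_norm]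
  linarith

end SI
end
end
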